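/- arXiv:1605.09665 — 4 statements merged into one kernel-verified Lean document; each statement's English description precedes it below -/
import Mathlib

section
/- Let Λ = (λ_n)_{n∈ℕ} and Υ = (υ_n)_{n∈ℕ} be strictly increasing sequences of positive real numbers, each satisfying the gap condition and the Müntz condition, with λ_n ≤ υ_n for each n. If sup_n (υ_n − λ_n) = δ with δ < (8 Σ_{n=1}^∞ λ_n^{−1})^{−1}, then M_{Λ,p}([0,1]) and M_{Υ,p}([0,1]) are linearly topologically isomorphic Banach spaces, where 1 ≤ p < ∞. -/
open MeasureTheory Filter
open scoped ENNReal NNReal Topology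

/-- The Müntz space `M_{S,p}([a,b])`: the closure in `L_p([a,b],ℝ)` of the linear span of
the monomials `t ↦ t ^ λ`, `λ ∈ S`. -/
noncomputable def muntzSpace (S : Set ℝ) (p : ℝ≥0∞) [Fact (1 ≤ p)] (a b : ℝ) :
    Submodule ℝ (Lp ℝ p (volume.restrict (Set.Icc a b))) :=
  (Submodule.span ℝ {g : Lp ℝ p (volume.restrict (Set.Icc a b)) |
    ∃ lam ∈ S, (g : ℝ → ℝ) =ᵐ[volume.restrict (Set.Icc a b)] fun t => t ^ lam}).topologicalClosure

namespace MuntzAux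

section abstractPart

variable {X : Type*} [NormedAddCommGroup X] [NormedSpace ℝ X]

/-- A sequence with relative increments bounded by a summable sequence converges. -/
lemma exists_lim_of_rel {A : Type*} [NormedAddCommGroup A] [CompleteSpace A]
    (P : ℕ → A) (η : ℕ → ℝ) (hη0 : ∀ n, 0 ≤ η n) (hη : Summable η)
    (h : ∀ n, ‖P (n + 1) - P n‖ ≤ η n * ‖P n‖) : ∃ a, Tendsto P atTop (𝓝 a) := by
  have hb : ∀ n, ‖P n‖ ≤ Real.exp (∑ i ∈ Finset.range n, η i) * ‖P 0‖ := by
    intro n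
    induction n with
    | zero => simp
    | succ k ih =>
      rw [Finset.sum_range_succ, Real.exp_add]
      have h1 : ‖P (k + 1)‖ ≤ (1 + η k) * ‖P k‖ := by
        have := norm_le_norm_add_norm_sub' (P (k + 1)) (P k)
        have := h k
        linarith
      have h2 : 1 + η k ≤ Real.exp (η k) := by
        have := Real.add_one_le_exp (η k); linarith
      calc ‖P (k + 1)‖ ≤ (1 + η k) * ‖P k‖ := h1
        _ ≤ Real.exp (η k) * (Real.exp (∑ i ∈ Finset.range k, η i) * ‖P 0‖) := by
            gcongr
        _ = _ := by ring
  have hb2 : ∀ n, ‖P n‖ ≤ Real.exp (∑' i, η i) * ‖P 0‖ := by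
    intro n
    refine (hb n).trans ?_
    gcongr
    exact hη.sum_le_tsum _ (fun i _ => hη0 i)
  have hc : CauchySeq P := by
    refine cauchySeq_of_dist_le_of_summable (fun n => η n * (Real.exp (∑' i, η i) * ‖P 0‖)) ?_
      (hη.mul_right _)
    intro n
    rw [dist_comm, dist_eq_norm]
    refine (h n).trans ?_
    have := hη0 n
    gcongr
    exact hb2 n
  exact cauchySeq_tendsto_of_complete hc

/-- The elementary operator moving the exponent `a` to `b`. -/
noncomputable def R (H : ℝ → X →L[ℝ] X) (a b : ℝ) : X →L[ℝ] X := 1 + (a - b) • H b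

lemma R_apply (H : ℝ → X →L[ℝ] X) (a b : ℝ) (x : X) : R H a b x = x + (a - b) • H b x := by
  simp [R]

lemma norm_R_sub (H : ℝ → X →L[ℝ] X) (hH : ∀ b, 0 < b → ‖H b‖ ≤ 1 / b) (a b : ℝ) (hb : 0 < b) :
    ‖R H a b - 1‖ ≤ |a - b| / b := by
  have : R H a b - 1 = (a - b) • H b := by simp [R]
  rw [this, norm_smul, Real.norm_eq_abs, div_eq_mul_one_div]
  have := hH b hb
  gcongr

variable (e : ℝ → X) (H : ℝ → X →L[ℝ] X)
  (hHe : ∀ b, 0 < b → ∀ m, 0 < m → m ≠ b → H b (e m) = (1 / (m - b)) • (e b - e m))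

include hHe in
lemma R_self (a b : ℝ) (ha : 0 < a) (hb : 0 < b) : R H a b (e a) = e b := by
  rw [R_apply]
  by_cases h : a = b
  · subst h; simp
  · rw [hHe b hb a ha h, smul_smul, mul_one_div_cancel (sub_ne_zero.2 h)]; simp

include hHe in
lemma R_other (a b m : ℝ) (hb : 0 < b) (hm : 0 < m) (h : m ≠ b) :
    R H a b (e m) = ((m - a) / (m - b)) • e m + ((a - b) / (m - b)) • e b := by
  rw [R_apply, hHe b hb m hm h, smul_smul, smul_sub]
  have : m - b ≠ 0 := sub_ne_zero.2 h
  have h2 : (m - a) / (m - b) = 1 - (a - b) * (1 / (m - b)) := by field_simp; ring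
  rw [h2, sub_smul, one_smul, mul_one_div]; abel

include hHe in
lemma R_inv (a b m : ℝ) (ha : 0 < a) (hb : 0 < b) (hm : 0 < m) (h : m ≠ b ∨ a = b) :
    R H b a (R H a b (e m)) = e m := by
  by_cases hab : a = b
  · subst hab; simp [R_apply]
  have h : m ≠ b := by tauto
  by_cases hma : m = a
  · subst hma; rw [R_self e H hHe m b hm hb, R_self e H hHe b m hb hm]
  rw [R_other e H hHe a b m hb hm h, map_add, map_smul, map_smul, R_self e H hHe b a hb ha,
    R_other e H hHe b a m ha hm hma]
  have h1 : m - b ≠ 0 := sub_ne_zero.2 h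
  have h2 : m - a ≠ 0 := sub_ne_zero.2 hma
  rw [smul_add, smul_smul, smul_smul, add_assoc, ← add_smul]
  have e1 : (m - a) / (m - b) * ((m - b) / (m - a)) = 1 := by field_simp
  have e2 : (m - a) / (m - b) * ((b - a) / (m - a)) + (a - b) / (m - b) = 0 := by
    field_simp; ring
  rw [e1, e2]; simp

/-- intermediate exponents -/
def mix (Λ Υ : ℕ → ℝ) (j i : ℕ) : ℝ := if i < j then Λ i else Υ i

/-- span of first `M` intermediate exponentials -/
def W (Λ Υ : ℕ → ℝ) (M j : ℕ) : Submodule ℝ X :=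
  Submodule.span ℝ ((fun i => e (mix Λ Υ j i)) '' {i | i < M})

lemma mem_W (Λ Υ : ℕ → ℝ) (M j i : ℕ) (hi : i < M) : e (mix Λ Υ j i) ∈ W e Λ Υ M j :=
  Submodule.subset_span ⟨i, hi, rfl⟩

/-- products, last factor applied first -/
noncomputable def T (Λ Υ : ℕ → ℝ) : ℕ → X →L[ℝ] X
  | 0 => 1
  | n + 1 => T Λ Υ n * R H (Λ n) (Υ n)

/-- products for the inverse -/
noncomputable def T' (Λ Υ : ℕ → ℝ) : ℕ → X →L[ℝ] X
  | 0 => 1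
  | n + 1 => R H (Υ n) (Λ n) * T' Λ Υ n

variable (Λ Υ : ℕ → ℝ) (hΛ : ∀ n, 0 < Λ n) (hΥ : ∀ n, 0 < Υ n)
    (hΛm : StrictMono Λ) (hΥm : StrictMono Υ) (hle : ∀ n, Λ n ≤ Υ n)

include hΛ hΥ in
lemma mix_pos (j i : ℕ) : 0 < mix Λ Υ j i := by
  unfold mix; split_ifs <;> simp [hΛ, hΥ]

include hΛm hΥm hle in
lemma mix_ne_up (j i : ℕ) : mix Λ Υ (j + 1) i ≠ Υ j ∨ Λ j = Υ j := by
  unfold mix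
  rcases lt_trichotomy i j with h | h | h
  · left
    rw [if_pos (by omega)]
    exact ((hΛm h).trans_le (hle j)).ne
  · subst h
    rw [if_pos (by omega)]
    tauto
  · left
    rw [if_neg (by omega)]
    exact (hΥm h).ne'

include hΛm hΥm hle in
lemma mix_ne_down (j i : ℕ) : mix Λ Υ j i ≠ Λ j ∨ Υ j = Λ j := by
  unfold mix
  rcases lt_trichotomy i j with h | h | h
  · left
    rw [if_pos (by omega)]
    exact (hΛm h).ne
  · subst h
    rw [if_neg (by omega)]
    tauto
  · left
    rw [if_neg (by omega)]
    exact ((hle j).trans_lt (hΥm h)).ne'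

lemma mix_ne (j i : ℕ) (h : i ≠ j) : mix Λ Υ (j + 1) i = mix Λ Υ j i := by
  unfold mix
  by_cases h' : i < j
  · rw [if_pos h', if_pos (by omega)]
  · rw [if_neg h', if_neg (by omega)]

lemma mix_self (j : ℕ) : mix Λ Υ j j = Υ j := by simp [mix]
lemma mix_self' (j : ℕ) : mix Λ Υ (j + 1) j = Λ j := by simp [mix]

include hHe hΛ hΥ hΛm hΥm hle in
lemma R_maps (M j : ℕ) (hj : j < M) (x : X) (hx : x ∈ W e Λ Υ M (j + 1)) :
    R H (Λ j) (Υ j) x ∈ W e Λ Υ M j ∧ R H (Υ j) (Λ j) (R H (Λ j) (Υ j) x) = x := by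
  induction hx using Submodule.span_induction with
  | zero => simp
  | add x y _ _ hx hy => simp only [map_add]; exact ⟨add_mem hx.1 hy.1, by rw [hx.2, hy.2]⟩
  | smul c x _ hx => simp only [map_smul]; exact ⟨Submodule.smul_mem _ _ hx.1, by rw [hx.2]⟩
  | mem x hx =>
    obtain ⟨i, hi, rfl⟩ := hx
    have hp := mix_pos Λ Υ hΛ hΥ (j + 1) i
    have hne := mix_ne_up Λ Υ hΛm hΥm hle j i
    refine ⟨?_, R_inv e H hHe _ _ _ (hΛ j) (hΥ j) hp hne⟩
    have hU := mem_W e Λ Υ M j j hj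
    rw [mix_self] at hU
    by_cases hij : i = j
    · subst hij
      simp only [mix_self', R_self e H hHe _ _ (hΛ i) (hΥ i)]
      exact hU
    · have hi2 := mem_W e Λ Υ M j i hi
      rw [← mix_ne Λ Υ j i hij] at hi2
      rcases hne with hne | hne
      · simp only [R_other e H hHe _ _ _ (hΥ j) hp hne]
        exact add_mem (Submodule.smul_mem _ _ hi2) (Submodule.smul_mem _ _ hU)
      · simp only [R_apply, hne]; simpa using hi2

include hHe hΛ hΥ hΛm hΥm hle in
lemma R_maps' (M j : ℕ) (hj : j < M) (x : X) (hx : x ∈ W e Λ Υ M j) :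
    R H (Υ j) (Λ j) x ∈ W e Λ Υ M (j + 1) ∧ R H (Λ j) (Υ j) (R H (Υ j) (Λ j) x) = x := by
  induction hx using Submodule.span_induction with
  | zero => simp
  | add x y _ _ hx hy => simp only [map_add]; exact ⟨add_mem hx.1 hy.1, by rw [hx.2, hy.2]⟩
  | smul c x _ hx => simp only [map_smul]; exact ⟨Submodule.smul_mem _ _ hx.1, by rw [hx.2]⟩
  | mem x hx =>
    obtain ⟨i, hi, rfl⟩ := hx
    have hp := mix_pos Λ Υ hΛ hΥ j i
    have hne := mix_ne_down Λ Υ hΛm hΥm hle j i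
    refine ⟨?_, R_inv e H hHe _ _ _ (hΥ j) (hΛ j) hp hne⟩
    have hU := mem_W e Λ Υ M (j + 1) j hj
    rw [mix_self'] at hU
    by_cases hij : i = j
    · subst hij
      simp only [mix_self, R_self e H hHe _ _ (hΥ i) (hΛ i)]
      exact hU
    · have hi2 := mem_W e Λ Υ M (j + 1) i hi
      rw [mix_ne Λ Υ j i hij] at hi2
      rcases hne with hne | hne
      · simp only [R_other e H hHe _ _ _ (hΛ j) hp hne]
        exact add_mem (Submodule.smul_mem _ _ hi2) (Submodule.smul_mem _ _ hU)
      · simp only [R_apply, hne]; simpa using hi2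

include hHe hΛ hΥ hΛm hΥm hle in
lemma T_maps (M j : ℕ) (hj : j ≤ M) :
    (∀ x ∈ W e Λ Υ M j, T H Λ Υ j x ∈ W e Λ Υ M 0 ∧ T' H Λ Υ j (T H Λ Υ j x) = x) ∧
    (∀ x ∈ W e Λ Υ M 0, T' H Λ Υ j x ∈ W e Λ Υ M j ∧ T H Λ Υ j (T' H Λ Υ j x) = x) := by
  induction j with
  | zero => simp [T, T']
  | succ j ih =>
    obtain ⟨h1, h2⟩ := ih (by omega)
    constructor
    · intro x hx
      obtain ⟨a1, a2⟩ := R_maps e H hHe Λ Υ hΛ hΥ hΛm hΥm hle M j (by omega) x hx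
      obtain ⟨b1, b2⟩ := h1 _ a1
      refine ⟨b1, ?_⟩
      simp only [T, T', mul_apply_eq_comp]
      rw [b2, a2]
    · intro x hx
      obtain ⟨b1, b2⟩ := h2 _ hx
      obtain ⟨a1, a2⟩ := R_maps' e H hHe Λ Υ hΛ hΥ hΛm hΥm hle M j (by omega) _ b1
      refine ⟨a1, ?_⟩
      simp only [T, T', mul_apply_eq_comp]
      rw [a2, b2]

/-- closed linear span -/
noncomputable def Cl (S : Set ℝ) : Submodule ℝ X := (Submodule.span ℝ (e '' S)).topologicalClosure

lemma mem_Cl {S : Set ℝ} {m : ℝ} (h : m ∈ S) : e m ∈ Cl e S :=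
  Submodule.le_topologicalClosure _ (Submodule.subset_span ⟨m, h, rfl⟩)

lemma isClosed_Cl (S : Set ℝ) : IsClosed (Cl e S : Set X) :=
  Submodule.isClosed_topologicalClosure _

lemma Cl_le {S : Set ℝ} {V : Submodule ℝ X} (hV : IsClosed (V : Set X)) (h : ∀ m ∈ S, e m ∈ V) :
    Cl e S ≤ V := by
  refine Submodule.topologicalClosure_minimal _ ?_ hV
  rw [Submodule.span_le]
  rintro _ ⟨m, hm, rfl⟩
  exact h m hm

lemma W_zero_le (M : ℕ) : W e Λ Υ M 0 ≤ Cl e (Set.range Υ) := by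
  refine Submodule.span_le.2 ?_
  rintro _ ⟨i, hi, rfl⟩
  simpa [mix] using mem_Cl e (Set.mem_range_self (f := Υ) i)

lemma W_top_le (M : ℕ) : W e Λ Υ M M ≤ Cl e (Set.range Λ) := by
  refine Submodule.span_le.2 ?_
  rintro _ ⟨i, hi, rfl⟩
  have hi : i < M := hi
  simpa [mix, hi] using mem_Cl e (Set.mem_range_self (f := Λ) i)

include hHe hΛ hΥ hΛm hΥm hle in
theorem abstract_iso [CompleteSpace X] (hH : ∀ b, 0 < b → ‖H b‖ ≤ 1 / b) (δ : ℝ)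
    (hδ : ∀ n, Υ n - Λ n ≤ δ) (hs : Summable fun n => 1 / Λ n) :
    Nonempty (Cl e (Set.range Λ) ≃L[ℝ] Cl e (Set.range Υ)) := by
  have hδ0 : 0 ≤ δ := le_trans (sub_nonneg.2 (hle 0)) (hδ 0)
  have hη0 : ∀ n, 0 ≤ δ * (1 / Λ n) := fun n => by have := hΛ n; positivity
  have hη := hs.mul_left δ
  obtain ⟨A, hA⟩ : ∃ A, Tendsto (T H Λ Υ) atTop (𝓝 A) := by
    refine exists_lim_of_rel _ _ hη0 hη fun n => ?_
    have : T H Λ Υ (n + 1) - T H Λ Υ n = T H Λ Υ n * (R H (Λ n) (Υ n) - 1) := by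
      simp [T, mul_sub]
    rw [this, mul_comm]
    refine (norm_mul_le _ _).trans ?_
    gcongr
    refine (norm_R_sub H hH _ _ (hΥ n)).trans ?_
    rw [abs_sub_comm, abs_of_nonneg (sub_nonneg.2 (hle n)), mul_one_div]
    have := hΛ n
    exact div_le_div₀ hδ0 (hδ n) this (hle n)
  obtain ⟨B, hB⟩ : ∃ B, Tendsto (T' H Λ Υ) atTop (𝓝 B) := by
    refine exists_lim_of_rel _ _ hη0 hη fun n => ?_
    have : T' H Λ Υ (n + 1) - T' H Λ Υ n = (R H (Υ n) (Λ n) - 1) * T' H Λ Υ n := by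
      simp [T', sub_mul]
    rw [this]
    refine (norm_mul_le _ _).trans ?_
    gcongr
    refine (norm_R_sub H hH _ _ (hΛ n)).trans ?_
    rw [abs_of_nonneg (sub_nonneg.2 (hle n)), mul_one_div]
    have := hΛ n
    exact div_le_div₀ hδ0 (hδ n) this le_rfl
  have key : ∀ M, _ := fun M => T_maps e H hHe Λ Υ hΛ hΥ hΛm hΥm hle M M le_rfl
  have app : ∀ {F : ℕ → X →L[ℝ] X} {G : X →L[ℝ] X}, Tendsto F atTop (𝓝 G) → ∀ x,
      Tendsto (fun n => F n x) atTop (𝓝 (G x)) := fun h x =>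
    ((ContinuousLinearMap.apply ℝ X x).continuous.tendsto _).comp h
  have memΛ : ∀ n M, n < M → e (Λ n) ∈ W e Λ Υ M M := fun n M h => by
    have := mem_W e Λ Υ M M n h
    simpa [mix, h] using this
  have memΥ : ∀ n M, n < M → e (Υ n) ∈ W e Λ Υ M 0 := fun n M h => by
    have := mem_W e Λ Υ M 0 n h
    simpa [mix] using this
  have hAm : ∀ x ∈ Cl e (Set.range Λ), A x ∈ Cl e (Set.range Υ) := by
    have : Cl e (Set.range Λ) ≤ (Cl e (Set.range Υ)).comap (A : X →ₗ[ℝ] X) := by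
      refine Cl_le e ((isClosed_Cl e _).preimage A.continuous) ?_
      rintro _ ⟨n, rfl⟩
      refine (isClosed_Cl e (Set.range Υ)).mem_of_tendsto (app hA _) ?_
      filter_upwards [eventually_gt_atTop n] with M hM
      exact W_zero_le e Λ Υ M ((key M).1 _ (memΛ n M hM)).1
    exact this
  have hBm : ∀ x ∈ Cl e (Set.range Υ), B x ∈ Cl e (Set.range Λ) := by
    have : Cl e (Set.range Υ) ≤ (Cl e (Set.range Λ)).comap (B : X →ₗ[ℝ] X) := by
      refine Cl_le e ((isClosed_Cl e _).preimage B.continuous) ?_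
      rintro _ ⟨n, rfl⟩
      refine (isClosed_Cl e (Set.range Λ)).mem_of_tendsto (app hB _) ?_
      filter_upwards [eventually_gt_atTop n] with M hM
      exact W_top_le e Λ Υ M ((key M).2 _ (memΥ n M hM)).1
    exact this
  have hBA : ∀ x ∈ Cl e (Set.range Λ), B (A x) = x := by
    have : Cl e (Set.range Λ) ≤ LinearMap.eqLocus ((B * A : X →L[ℝ] X) : X →ₗ[ℝ] X) LinearMap.id := by
      refine Cl_le e (isClosed_eq (B * A).continuous continuous_id) ?_
      rintro _ ⟨n, rfl⟩
      refine tendsto_nhds_unique (app (hB.mul hA) _) ?_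
      refine tendsto_const_nhds.congr' ?_
      filter_upwards [eventually_gt_atTop n] with M hM
      exact ((key M).1 _ (memΛ n M hM)).2.symm
    exact this
  have hAB : ∀ x ∈ Cl e (Set.range Υ), A (B x) = x := by
    have : Cl e (Set.range Υ) ≤ LinearMap.eqLocus ((A * B : X →L[ℝ] X) : X →ₗ[ℝ] X) LinearMap.id := by
      refine Cl_le e (isClosed_eq (A * B).continuous continuous_id) ?_
      rintro _ ⟨n, rfl⟩
      refine tendsto_nhds_unique (app (hA.mul hB) _) ?_
      refine tendsto_const_nhds.congr' ?_
      filter_upwards [eventually_gt_atTop n] with M hM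
      exact ((key M).2 _ (memΥ n M hM)).2.symm
    exact this
  refine ⟨ContinuousLinearEquiv.equivOfInverse
    ((A.comp (Cl e (Set.range Λ)).subtypeL).codRestrict _ fun x => hAm x x.2)
    ((B.comp (Cl e (Set.range Υ)).subtypeL).codRestrict _ fun x => hBm x x.2) ?_ ?_⟩
  · intro x; ext; exact hBA x x.2
  · intro x; ext; exact hAB x x.2

end abstractPart

section schur

variable {α : Type*} [MeasurableSpace α] {μ : Measure α}

lemma jensen_aux {k g : α → ℝ≥0∞} (hk : Measurable k) (hg : Measurable g)
    (h1 : ∫⁻ s, k s ∂μ ≤ 1) {r : ℝ} (hr : 1 ≤ r) :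
    (∫⁻ s, k s * g s ∂μ) ^ r ≤ ∫⁻ s, k s * g s ^ r ∂μ := by
  rcases hr.eq_or_lt with rfl | hr
  · simp
  have hpq := Real.HolderConjugate.conjExponent hr
  set q := r.conjExponent
  have hr0 : 0 < r := by linarith
  have hq0 : 0 < q := hpq.symm.pos
  have h := ENNReal.lintegral_mul_le_Lp_mul_Lq μ hpq
    (f := fun s => k s ^ (1 / r) * g s) (g := fun s => k s ^ (1 / q))
    (by fun_prop) (by fun_prop)
  have e1 : ∀ s, ((fun s => k s ^ (1 / r) * g s) * fun s => k s ^ (1 / q)) s = k s * g s := by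
    intro s
    simp only [Pi.mul_apply]
    rw [mul_right_comm, ← ENNReal.rpow_add_of_nonneg _ _ (by positivity) (by positivity)]
    have : 1 / r + 1 / q = 1 := by simpa using hpq.inv_add_inv_eq_one
    rw [this, ENNReal.rpow_one]
  have e2 : ∀ s, (k s ^ (1 / r) * g s) ^ r = k s * g s ^ r := by
    intro s
    rw [ENNReal.mul_rpow_of_nonneg _ _ hr0.le, ← ENNReal.rpow_mul, one_div_mul_cancel hr0.ne',
      ENNReal.rpow_one]
  have e3 : ∀ s, (k s ^ (1 / q)) ^ q = k s := by
    intro s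
    rw [← ENNReal.rpow_mul, one_div_mul_cancel hq0.ne', ENNReal.rpow_one]
  simp only [e1, e2, e3] at h
  have h2 : (∫⁻ s, k s ∂μ) ^ (1 / q) ≤ 1 := ENNReal.rpow_le_one h1 (by positivity)
  have h3 : ∫⁻ s, k s * g s ∂μ ≤ (∫⁻ s, k s * g s ^ r ∂μ) ^ (1 / r) := by
    refine h.trans ?_
    calc _ ≤ (∫⁻ s, k s * g s ^ r ∂μ) ^ (1 / r) * 1 := by gcongr
      _ = _ := mul_one _
  calc _ ≤ ((∫⁻ s, k s * g s ^ r ∂μ) ^ (1 / r)) ^ r := by gcongr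
    _ = _ := by rw [← ENNReal.rpow_mul, one_div_mul_cancel hr0.ne', ENNReal.rpow_one]

variable [SFinite μ] {K : α → α → ℝ} (hK : Measurable (Function.uncurry K))
  (h1 : ∀ᵐ t ∂μ, ∫⁻ s, ‖K t s‖ₑ ∂μ ≤ 1) (h2 : ∀ᵐ s ∂μ, ∫⁻ t, ‖K t s‖ₑ ∂μ ≤ 1)

include hK h2 in
lemma schur_double {g : α → ℝ≥0∞} (hg : Measurable g) :
    ∫⁻ t, ∫⁻ s, ‖K t s‖ₑ * g s ∂μ ∂μ ≤ ∫⁻ s, g s ∂μ := by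
  have hm : Measurable (Function.uncurry fun t s => ‖K t s‖ₑ * g s) :=
    hK.enorm.mul (hg.comp measurable_snd)
  rw [lintegral_lintegral_swap hm.aemeasurable]
  refine lintegral_mono_ae ?_
  filter_upwards [h2] with s hs
  have : Measurable fun t => ‖K t s‖ₑ := (hK.comp measurable_prodMk_right).enorm
  rw [lintegral_mul_const _ this]
  calc _ ≤ 1 * g s := by gcongr
    _ = g s := one_mul _

include hK h1 h2 in
lemma schur_lint {f : α → ℝ} (hf : Measurable f) {r : ℝ} (hr : 1 ≤ r) :
    ∫⁻ t, (∫⁻ s, ‖K t s * f s‖ₑ ∂μ) ^ r ∂μ ≤ ∫⁻ s, ‖f s‖ₑ ^ r ∂μ := by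
  refine le_trans (lintegral_mono_ae ?_) (schur_double hK h2 (hf.enorm.pow_const r))
  filter_upwards [h1] with t ht
  simp only [enorm_mul]
  exact jensen_aux (hK.comp measurable_prodMk_left).enorm hf.enorm ht hr

variable {p : ℝ≥0∞}

include hK h1 h2 in
lemma schur_integrable (hp1 : 1 ≤ p) (hp : p ≠ ∞) {f : α → ℝ} (hf : Measurable f) (hfp : MemLp f p μ) :
    ∀ᵐ t ∂μ, Integrable (fun s => K t s * f s) μ := by
  have hp0 : p ≠ 0 := (zero_lt_one.trans_le hp1).ne'
  have hr : 1 ≤ p.toReal := by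
    simpa using (ENNReal.toReal_le_toReal ENNReal.one_ne_top hp).2 hp1
  have hfin : ∫⁻ s, ‖f s‖ₑ ^ p.toReal ∂μ < ∞ := by
    exact lintegral_rpow_enorm_lt_top_of_eLpNorm_lt_top hp0 hp hfp.2
  have hm : Measurable fun t => ∫⁻ s, ‖K t s * f s‖ₑ ∂μ := by
    have : Measurable (Function.uncurry fun t s => ‖K t s * f s‖ₑ) :=
      (hK.mul (hf.comp measurable_snd)).enorm
    exact this.lintegral_prod_right
  have h := ae_lt_top (hm.pow_const p.toReal)
    ((schur_lint hK h1 h2 hf hr).trans_lt hfin).ne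
  filter_upwards [h] with t ht
  refine ⟨((hK.comp measurable_prodMk_left).mul hf).aestronglyMeasurable, ?_⟩
  rw [ENNReal.rpow_lt_top_iff_of_pos (by linarith)] at ht
  exact ht

include hK h1 h2 in
lemma schur_eLpNorm (hp1 : 1 ≤ p) (hp : p ≠ ∞) {f : α → ℝ} (hf : Measurable f) :
    eLpNorm (fun t => ∫ s, K t s * f s ∂μ) p μ ≤ eLpNorm f p μ := by
  have hp0 : p ≠ 0 := (zero_lt_one.trans_le hp1).ne'
  have hr : 1 ≤ p.toReal := by
    simpa using (ENNReal.toReal_le_toReal ENNReal.one_ne_top hp).2 hp1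
  rw [eLpNorm_eq_lintegral_rpow_enorm_toReal hp0 hp, eLpNorm_eq_lintegral_rpow_enorm_toReal hp0 hp]
  refine ENNReal.rpow_le_rpow ?_ (by positivity)
  refine le_trans (lintegral_mono fun t => ?_) (schur_lint hK h1 h2 hf hr)
  gcongr
  exact enorm_integral_le_lintegral_enorm _

include hK h1 h2 in
lemma schur_memLp (hp1 : 1 ≤ p) (hp : p ≠ ∞) {f : α → ℝ} (hf : Measurable f) (hfp : MemLp f p μ) :
    MemLp (fun t => ∫ s, K t s * f s ∂μ) p μ := by
  refine ⟨?_, (schur_eLpNorm hK h1 h2 hp1 hp hf).trans_lt hfp.2⟩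
  have : StronglyMeasurable (Function.uncurry fun t s => K t s * f s) :=
    (hK.mul (hf.comp measurable_snd)).stronglyMeasurable
  exact this.integral_prod_right.aestronglyMeasurable

include hK h1 h2 in
theorem schur_exists [Fact (1 ≤ p)] (hp : p ≠ ∞) : ∃ H : Lp ℝ p μ →L[ℝ] Lp ℝ p μ, ‖H‖ ≤ 1 ∧
    ∀ f : Lp ℝ p μ, H f =ᵐ[μ] fun t => ∫ s, K t s * f s ∂μ := by
  have hp1 : 1 ≤ p := Fact.out
  have hmeas : ∀ f : Lp ℝ p μ, Measurable f := fun f => (Lp.stronglyMeasurable f).measurable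
  have hm : ∀ f : Lp ℝ p μ, MemLp (fun t => ∫ s, K t s * f s ∂μ) p μ := fun f =>
    schur_memLp hK h1 h2 hp1 hp (hmeas f) (Lp.memLp f)
  have hi : ∀ f : Lp ℝ p μ, _ := fun f => schur_integrable hK h1 h2 hp1 hp (hmeas f) (Lp.memLp f)
  let L : Lp ℝ p μ →ₗ[ℝ] Lp ℝ p μ :=
    { toFun := fun f => (hm f).toLp _
      map_add' := by
        intro f g
        rw [← MemLp.toLp_add, MemLp.toLp_eq_toLp_iff]
        filter_upwards [hi f, hi g] with t hf hg
        simp only [Pi.add_apply]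
        rw [← integral_add hf hg]
        refine integral_congr_ae ?_
        filter_upwards [Lp.coeFn_add f g] with s hs
        rw [hs, Pi.add_apply, mul_add]
      map_smul' := by
        intro c f
        simp only [RingHom.id_apply]
        rw [← MemLp.toLp_const_smul, MemLp.toLp_eq_toLp_iff]
        refine Eventually.of_forall fun t => ?_
        simp only [Pi.smul_apply, smul_eq_mul]
        rw [← integral_const_mul]
        refine integral_congr_ae ?_
        filter_upwards [Lp.coeFn_smul c f] with s hs
        rw [hs, Pi.smul_apply, smul_eq_mul]; ring }
  refine ⟨L.mkContinuous 1 ?_, LinearMap.mkContinuous_norm_le _ zero_le_one _, ?_⟩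
  · intro f
    rw [one_mul]
    change ‖(hm f).toLp _‖ ≤ _
    rw [Lp.norm_toLp, Lp.norm_def]
    exact ENNReal.toReal_mono (Lp.memLp f).2.ne (schur_eLpNorm hK h1 h2 hp1 hp (hmeas f))
  · intro f
    exact (hm f).coeFn_toLp

end schur

section concrete

/-- the Hardy kernel -/
noncomputable def ker (b t s : ℝ) : ℝ :=
  if t < s then b * t ^ b * s ^ (-b - 1) else 0

lemma ker_meas (b : ℝ) : Measurable (Function.uncurry (ker b)) := by
  unfold ker Function.uncurry
  refine Measurable.ite (measurableSet_lt measurable_fst measurable_snd) ?_ measurable_const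
  fun_prop

/-- moments of the kernel in `s` -/
lemma ker_int (b m t : ℝ) (hmb : m ≠ b) (ht0 : 0 < t) (ht1 : t ≤ 1) :
    ∫ s in Set.Icc 0 1, ker b t s * s ^ m = b * ((1 / (m - b)) * (t ^ b - t ^ m)) := by
  have e1 : ∫ s in Set.Icc 0 1, ker b t s * s ^ m
      = ∫ s in Set.Ioc t 1, b * t ^ b * s ^ (m - b - 1) := by
    have hset : Set.Icc 0 1 ∩ Set.Ioi t = Set.Ioc t 1 := by
      ext s; simp only [Set.mem_inter_iff, Set.mem_Icc, Set.mem_Ioi, Set.mem_Ioc]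
      constructor
      · rintro ⟨⟨_, h⟩, h'⟩; exact ⟨h', h⟩
      · rintro ⟨h, h'⟩; exact ⟨⟨by linarith, h'⟩, h⟩
    rw [← hset, ← setIntegral_indicator measurableSet_Ioi]
    refine integral_congr_ae (Eventually.of_forall fun s => ?_)
    simp only [Set.indicator, ker, Set.mem_Ioi]
    split_ifs with h
    · rw [mul_assoc, ← Real.rpow_add (ht0.trans h)]; congr 2; ring
    · simp
  rw [e1, integral_const_mul, ← intervalIntegral.integral_of_le ht1, integral_rpow]
  · have : m - b ≠ 0 := sub_ne_zero.2 hmb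
    rw [sub_add_cancel, Real.one_rpow]
    have : t ^ m = t ^ b * t ^ (m - b) := by rw [← Real.rpow_add ht0]; congr 1; ring
    rw [this]; field_simp
  · right
    refine ⟨fun h => hmb (by linarith), ?_⟩
    rw [Set.uIcc_of_le ht1]
    exact fun h => absurd h.1 (not_le.2 ht0)

lemma ker_h1 (b t : ℝ) (hb : 0 < b) (ht0 : 0 < t) (ht1 : t ≤ 1) :
    ∫⁻ s in Set.Icc 0 1, ‖ker b t s‖ₑ ≤ 1 := by
  have hset : Set.Ioi t ∩ Set.Icc 0 1 = Set.Ioc t 1 := by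
    ext s; simp only [Set.mem_inter_iff, Set.mem_Icc, Set.mem_Ioi, Set.mem_Ioc]
    constructor
    · rintro ⟨h', ⟨_, h⟩⟩; exact ⟨h', h⟩
    · rintro ⟨h, h'⟩; exact ⟨h, ⟨by linarith, h'⟩⟩
  have e1 : ∀ s, ‖ker b t s‖ₑ
      = (Set.Ioi t).indicator (fun s => ENNReal.ofReal (b * t ^ b * s ^ (-b - 1))) s := by
    intro s
    simp only [Set.indicator, ker, Set.mem_Ioi]
    split_ifs with h
    · have := ht0.trans h
      rw [Real.enorm_of_nonneg (by positivity)]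
    · simp
  simp only [e1]
  have h0 : (0 : ℝ) ∉ Set.uIcc t 1 := by
    rw [Set.uIcc_of_le ht1]; exact fun h => absurd h.1 (not_le.2 ht0)
  have hii : IntegrableOn (fun s : ℝ => b * t ^ b * s ^ (-b - 1)) (Set.Ioc t 1) := by
    have := (intervalIntegral.intervalIntegrable_rpow (μ := volume) (a := t) (b := 1)
      (r := -b - 1) (Or.inr h0)).const_mul (b * t ^ b)
    exact (intervalIntegrable_iff_integrableOn_Ioc_of_le ht1).1 this
  rw [setLIntegral_indicator measurableSet_Ioi, hset, ← ofReal_integral_eq_lintegral_ofReal hii]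
  · rw [integral_const_mul, ← intervalIntegral.integral_of_le ht1, integral_rpow]
    · rw [sub_add_cancel, Real.one_rpow]
      have h3 : t ^ b * t ^ (-b) = 1 := by rw [← Real.rpow_add ht0]; simp
      have h4 : 0 < t ^ b := by positivity
      have : b * t ^ b * ((1 - t ^ (-b)) / (-b)) = 1 - t ^ b := by
        field_simp
        linear_combination h3
      rw [this]
      exact ENNReal.ofReal_le_one.2 (by linarith)
    · exact Or.inr ⟨fun h => hb.ne' (by linarith), h0⟩
  · filter_upwards [ae_restrict_mem measurableSet_Ioc] with s hs
    have := ht0.trans hs.1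
    simp only [Pi.zero_apply]; positivity

lemma ker_h2 (b s : ℝ) (hb : 0 < b) (hs0 : 0 < s) (hs1 : s ≤ 1) :
    ∫⁻ t in Set.Icc 0 1, ‖ker b t s‖ₑ ≤ 1 := by
  have hle : ∫⁻ t in Set.Icc 0 1, ‖ker b t s‖ₑ
      ≤ ∫⁻ t in Set.Icc 0 s, ENNReal.ofReal (b * s ^ (-b - 1) * t ^ b) := by
    rw [← lintegral_indicator measurableSet_Icc, ← lintegral_indicator measurableSet_Icc]
    refine lintegral_mono fun t => ?_
    simp only [Set.indicator, ker, Set.mem_Icc]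
    by_cases h : (0 ≤ t ∧ t ≤ 1) ∧ t < s
    · have h0 := h.1.1
      rw [if_pos h.1, if_pos h.2, if_pos ⟨h.1.1, h.2.le⟩, Real.enorm_of_nonneg (by positivity)]
      apply le_of_eq; congr 1; ring
    · have : (if 0 ≤ t ∧ t ≤ 1 then ‖if t < s then b * t ^ b * s ^ (-b - 1) else 0‖ₑ else 0) = 0 := by
        split_ifs <;> simp_all
      rw [this]; exact bot_le
  refine hle.trans ?_
  rw [setLIntegral_congr Ioc_ae_eq_Icc.symm]
  have hii : IntegrableOn (fun t : ℝ => b * s ^ (-b - 1) * t ^ b) (Set.Ioc 0 s) := by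
    have := (intervalIntegral.intervalIntegrable_rpow (μ := volume) (a := 0) (b := s)
      (r := b) (Or.inl hb.le)).const_mul (b * s ^ (-b - 1))
    exact (intervalIntegrable_iff_integrableOn_Ioc_of_le hs0.le).1 this
  rw [← ofReal_integral_eq_lintegral_ofReal hii]
  · rw [integral_const_mul, ← intervalIntegral.integral_of_le hs0.le,
      integral_rpow (Or.inl (by linarith)), Real.zero_rpow (by linarith), sub_zero]
    have h3 : s ^ (-b - 1) * s ^ (b + 1) = 1 := by
      rw [← Real.rpow_add hs0]; ring_nf; simp
    refine ENNReal.ofReal_le_one.2 ?_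
    have : b * s ^ (-b - 1) * (s ^ (b + 1) / (b + 1)) = b / (b + 1) := by
      rw [mul_assoc, ← mul_div_assoc, h3]; ring
    rw [this, div_le_one (by linarith)]; linarith
  · filter_upwards [ae_restrict_mem measurableSet_Ioc] with t ht
    have := ht.1
    simp only [Pi.zero_apply]; positivity

lemma ae_Ioc : ∀ᵐ t ∂(volume.restrict (Set.Icc (0 : ℝ) 1)), 0 < t ∧ t ≤ 1 := by
  rw [← restrict_Ioc_eq_restrict_Icc]
  exact ae_restrict_mem measurableSet_Ioc

lemma memLp_rpow (p : ℝ≥0∞) (m : ℝ) (hm : 0 < m) :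
    MemLp (fun t : ℝ => t ^ m) p (volume.restrict (Set.Icc (0 : ℝ) 1)) := by
  refine MemLp.of_bound (by fun_prop) 1 ?_
  filter_upwards [ae_Ioc] with t ht
  rw [Real.norm_of_nonneg (Real.rpow_nonneg ht.1.le _)]
  exact Real.rpow_le_one ht.1.le ht.2 hm.le

lemma exists_hardy (p : ℝ≥0∞) [Fact (1 ≤ p)] (hp : p ≠ ∞)
    (e : ℝ → Lp ℝ p (volume.restrict (Set.Icc (0 : ℝ) 1)))
    (he : ∀ m, 0 < m → e m =ᵐ[volume.restrict (Set.Icc (0 : ℝ) 1)] fun t => t ^ m)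
    (b : ℝ) : ∃ H : Lp ℝ p (volume.restrict (Set.Icc (0 : ℝ) 1)) →L[ℝ]
      Lp ℝ p (volume.restrict (Set.Icc (0 : ℝ) 1)), 0 < b → ‖H‖ ≤ 1 / b ∧
      ∀ m, 0 < m → m ≠ b → H (e m) = (1 / (m - b)) • (e b - e m) := by
  by_cases hb : 0 < b
  swap
  · exact ⟨0, fun h => absurd h hb⟩
  obtain ⟨G, hG, hGf⟩ := schur_exists (μ := volume.restrict (Set.Icc (0 : ℝ) 1)) (p := p)
    (ker_meas b) (ae_Ioc.mono fun t ht => ker_h1 b t hb ht.1 ht.2)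
    (ae_Ioc.mono fun t ht => ker_h2 b t hb ht.1 ht.2) hp
  refine ⟨(1 / b) • G, fun _ => ⟨?_, ?_⟩⟩
  · rw [norm_smul, Real.norm_of_nonneg (by positivity)]
    exact mul_le_of_le_one_right (by positivity) hG
  · intro m hm hmb
    have key : G (e m) = b • ((1 / (m - b)) • (e b - e m)) := by
      refine Lp.ext ?_
      filter_upwards [hGf (e m), ae_Ioc, he m hm, he b hb,
        Lp.coeFn_smul b ((1 / (m - b)) • (e b - e m)),
        Lp.coeFn_smul (1 / (m - b)) (e b - e m), Lp.coeFn_sub (e b) (e m)] with t a1 a2 a3 a4 a5 a6 a7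
      rw [a1, a5, Pi.smul_apply, a6, Pi.smul_apply, a7, Pi.sub_apply, a3, a4, smul_eq_mul,
        smul_eq_mul, ← ker_int b m t hmb a2.1 a2.2]
      refine integral_congr_ae ?_
      filter_upwards [he m hm] with s hs
      rw [hs]
    rw [ContinuousLinearMap.smul_apply, key, smul_smul, one_div_mul_cancel hb.ne', one_smul]

end concrete

lemma muntz_eq_Cl (p : ℝ≥0∞) [Fact (1 ≤ p)]
    (e : ℝ → Lp ℝ p (volume.restrict (Set.Icc (0 : ℝ) 1)))
    (he : ∀ m, 0 < m → e m =ᵐ[volume.restrict (Set.Icc (0 : ℝ) 1)] fun t => t ^ m)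
    (S : Set ℝ) (hS : ∀ m ∈ S, 0 < m) : muntzSpace S p 0 1 = Cl e S := by
  unfold muntzSpace Cl
  congr 2
  ext g
  constructor
  · rintro ⟨m, hm, hg⟩
    exact ⟨m, hm, Lp.ext ((he m (hS m hm)).trans hg.symm)⟩
  · rintro ⟨m, hm, rfl⟩
    exact ⟨m, hm, he m (hS m hm)⟩

end MuntzAux

/-- If `Λ`, `Υ` are strictly increasing positive sequences satisfying the gap and Müntz
conditions, `λ_n ≤ υ_n` for all `n`, and `sup_n (υ_n - λ_n) = δ < (8 ∑ 1/λ_n)⁻¹`, then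
`M_{Λ,p}([0,1])` and `M_{Υ,p}([0,1])` are linearly topologically isomorphic, `1 ≤ p < ∞`. -/
theorem muntzSpace_isomorphic_of_sup_diff_small
    (Λ Υ : ℕ → ℝ) (hΛpos : ∀ n, 0 < Λ n) (hΥpos : ∀ n, 0 < Υ n)
    (hΛmono : StrictMono Λ) (hΥmono : StrictMono Υ)
    (hΛgap : ∃ c > 0, ∀ k, c ≤ Λ (k + 1) - Λ k)
    (hΥgap : ∃ c > 0, ∀ k, c ≤ Υ (k + 1) - Υ k)
    (hΛMuntz : Summable fun n => 1 / Λ n) (hΥMuntz : Summable fun n => 1 / Υ n)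
    (hle : ∀ n, Λ n ≤ Υ n) (δ : ℝ)
    (hδsup : IsLUB (Set.range fun n => Υ n - Λ n) δ)
    (hδ : δ < (8 * ∑' n, 1 / Λ n)⁻¹)
    (p : ℝ≥0∞) [Fact (1 ≤ p)] (hp' : p ≠ ∞) :
    Nonempty (↥(muntzSpace (Set.range Λ) p 0 1) ≃L[ℝ] ↥(muntzSpace (Set.range Υ) p 0 1)) := by
  classical
  let e : ℝ → Lp ℝ p (volume.restrict (Set.Icc (0 : ℝ) 1)) := fun m =>
    if h : 0 < m then (MuntzAux.memLp_rpow p m h).toLp _ else 0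
  have he : ∀ m, 0 < m → e m =ᵐ[volume.restrict (Set.Icc (0 : ℝ) 1)] fun t => t ^ m := by
    intro m hm
    simp only [e, dif_pos hm]
    exact MemLp.coeFn_toLp _
  choose H hH using MuntzAux.exists_hardy p hp' e he
  rw [MuntzAux.muntz_eq_Cl p e he (Set.range Λ) (by rintro _ ⟨n, rfl⟩; exact hΛpos n),
    MuntzAux.muntz_eq_Cl p e he (Set.range Υ) (by rintro _ ⟨n, rfl⟩; exact hΥpos n)]
  exact MuntzAux.abstract_iso e H (fun b hb => (hH b hb).2) Λ Υ hΛpos hΥpos hΛmono hΥmono hle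
    (fun b hb => (hH b hb).1) δ (fun n => hδsup.1 ⟨n, rfl⟩) hΛMuntz
end

section
/- Let Λ = (λ_k)_{k∈ℕ} be a strictly increasing sequence of positive real numbers satisfying the gap condition and the Müntz condition, and let 1 ≤ p < ∞. Then for each 0 < δ < 1 the Müntz spaces M_{Λ,p}([0,1]) and M_{Λ,p}([δ,1]) are linearly topologically isomorphic; the isomorphism is induced by restriction of Müntz polynomials from [0,1] to [δ,1]. -/
open MeasureTheory Filter
open scoped ENNReal NNReal Topology

lemma mz_contract (S : Finset ℕ) (μ b : ℕ → ℝ) (hμ : ∀ i, 0 < μ i) (m : ℝ) (hm : 0 < m) :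
    ∑ i ∈ S, ∑ l ∈ S, (b i * ((μ i - m) / (μ i + m))) * (b l * ((μ l - m) / (μ l + m))) / (μ i + μ l)
      ≤ ∑ i ∈ S, ∑ l ∈ S, b i * b l / (μ i + μ l) := by
  have key : ∑ i ∈ S, ∑ l ∈ S, b i * b l / (μ i + μ l)
      - ∑ i ∈ S, ∑ l ∈ S, (b i * ((μ i - m) / (μ i + m))) * (b l * ((μ l - m) / (μ l + m))) / (μ i + μ l)
      = 2 * m * ((∑ i ∈ S, b i / (μ i + m)) * (∑ l ∈ S, b l / (μ l + m))) := by
    rw [Finset.sum_mul_sum, Finset.mul_sum, ← Finset.sum_sub_distrib]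
    refine Finset.sum_congr rfl fun i _ => ?_
    rw [Finset.mul_sum, ← Finset.sum_sub_distrib]
    refine Finset.sum_congr rfl fun l _ => ?_
    have h1 := hμ i
    have h2 := hμ l
    have h3 : μ i + μ l ≠ 0 := by positivity
    have h4 : μ i + m ≠ 0 := by positivity
    have h5 : μ l + m ≠ 0 := by positivity
    field_simp
    ring
  have : 0 ≤ 2 * m * ((∑ i ∈ S, b i / (μ i + m)) * (∑ l ∈ S, b l / (μ l + m))) :=
    mul_nonneg (by positivity) (mul_self_nonneg _)
  linarith

lemma mz_contract_iter (S T : Finset ℕ) (μ b : ℕ → ℝ) (hμ : ∀ i, 0 < μ i) :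
    ∑ i ∈ S, ∑ l ∈ S, (b i * ∏ j ∈ T, ((μ i - μ j) / (μ i + μ j))) *
        (b l * ∏ j ∈ T, ((μ l - μ j) / (μ l + μ j))) / (μ i + μ l)
      ≤ ∑ i ∈ S, ∑ l ∈ S, b i * b l / (μ i + μ l) := by
  classical
  induction T using Finset.induction_on with
  | empty => simp
  | insert a T ha ih =>
    refine le_trans ?_ ih
    refine le_trans (le_of_eq ?_)
      (mz_contract S μ (fun i => b i * ∏ j ∈ T, ((μ i - μ j) / (μ i + μ j))) hμ (μ a) (hμ a))
    refine Finset.sum_congr rfl fun i _ => Finset.sum_congr rfl fun l _ => ?_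
    rw [Finset.prod_insert ha, Finset.prod_insert ha]
    ring

lemma mz_coeff_sq (S : Finset ℕ) (μ b : ℕ → ℝ) (hμ : ∀ i, 0 < μ i) (k : ℕ) (hk : k ∈ S) :
    (b k * ∏ j ∈ S.erase k, ((μ k - μ j) / (μ k + μ j))) ^ 2 / (2 * μ k)
      ≤ ∑ i ∈ S, ∑ l ∈ S, b i * b l / (μ i + μ l) := by
  classical
  refine le_trans (le_of_eq ?_) (mz_contract_iter S (S.erase k) μ b hμ)
  have hz : ∀ i ∈ S, i ≠ k → ∏ j ∈ S.erase k, ((μ i - μ j) / (μ i + μ j)) = 0 := by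
    intro i hi hik
    exact Finset.prod_eq_zero (Finset.mem_erase.2 ⟨hik, hi⟩) (by simp)
  rw [Finset.sum_eq_single_of_mem k hk, Finset.sum_eq_single_of_mem k hk]
  · ring
  · intro l hl hlk
    rw [hz l hl hlk]; simp
  · intro i hi hik
    rw [hz i hi hik]; simp

/-- the coefficient bound by the `L¹` norm -/
lemma mz_coeff (S : Finset ℕ) (Λ a : ℕ → ℝ) (hpos : ∀ i, 0 < Λ i) (k : ℕ) (hk : k ∈ S) :
    |a k| * ∏ j ∈ S.erase k, |(Λ k - Λ j) / (Λ k + Λ j + 3)|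
      ≤ (2 * Λ k + 3) * (Λ k + 1) * ∫ t in (0:ℝ)..1, |∑ i ∈ S, a i * t ^ Λ i| := by
  set I := ∫ t in (0:ℝ)..1, |∑ i ∈ S, a i * t ^ Λ i| with hI
  have hcont : Continuous fun t : ℝ => ∑ i ∈ S, a i * t ^ Λ i := by
    refine continuous_finsetSum _ fun i _ => ?_
    exact continuous_const.mul (Real.continuous_rpow_const (hpos i).le)
  have hQ : ∀ t ∈ Set.Icc (0:ℝ) 1, |∑ i ∈ S, a i / (Λ i + 1) * t ^ (Λ i + 1)| ≤ I := by
    intro t ht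
    have e : ∑ i ∈ S, a i / (Λ i + 1) * t ^ (Λ i + 1) = ∫ u in (0:ℝ)..t, ∑ i ∈ S, a i * u ^ Λ i := by
      rw [intervalIntegral.integral_finsetSum]
      · refine Finset.sum_congr rfl fun i _ => ?_
        rw [intervalIntegral.integral_const_mul, integral_rpow (Or.inl (by linarith [hpos i]))]
        rw [Real.zero_rpow (by linarith [hpos i])]
        ring
      · intro i _
        exact (continuous_const.mul (Real.continuous_rpow_const (hpos i).le)).intervalIntegrable _ _
    rw [e]
    refine (intervalIntegral.abs_integral_le_integral_abs ht.1).trans ?_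
    exact intervalIntegral.integral_mono_interval le_rfl ht.1 ht.2
      (Eventually.of_forall fun x => abs_nonneg _) (hcont.abs.intervalIntegrable _ _)
  have hI0 : 0 ≤ I := (abs_nonneg _).trans (hQ 0 (by simp))
  have hq : ∑ i ∈ S, ∑ l ∈ S, (a i / (Λ i + 1)) * (a l / (Λ l + 1)) / ((Λ i + 3/2) + (Λ l + 3/2))
      ≤ I ^ 2 := by
    have e : ∑ i ∈ S, ∑ l ∈ S, (a i / (Λ i + 1)) * (a l / (Λ l + 1)) / ((Λ i + 3/2) + (Λ l + 3/2))
        = ∫ t in (0:ℝ)..1, ∑ i ∈ S, ∑ l ∈ S,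
          (a i / (Λ i + 1)) * (a l / (Λ l + 1)) * t ^ (Λ i + 1 + (Λ l + 1)) := by
      have hc : ∀ i l, Continuous fun t : ℝ =>
          (a i / (Λ i + 1)) * (a l / (Λ l + 1)) * t ^ (Λ i + 1 + (Λ l + 1)) := fun i l =>
        continuous_const.mul (Real.continuous_rpow_const (by linarith [hpos i, hpos l]))
      rw [intervalIntegral.integral_finsetSum]
      · refine Finset.sum_congr rfl fun i _ => ?_
        rw [intervalIntegral.integral_finsetSum]
        · refine Finset.sum_congr rfl fun l _ => ?_
          have := hpos i
          have := hpos l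
          rw [intervalIntegral.integral_const_mul, integral_rpow (Or.inl (by linarith)),
            Real.zero_rpow (by linarith), Real.one_rpow]
          rw [show Λ i + 1 + (Λ l + 1) + 1 = (Λ i + 3/2) + (Λ l + 3/2) by ring]
          ring
        · intro l _
          exact (hc i l).intervalIntegrable _ _
      · intro i _
        exact (continuous_finsetSum _ fun l _ => hc i l).intervalIntegrable _ _
    rw [e]
    have h2 : ∀ t ∈ Set.Icc (0:ℝ) 1, ∑ i ∈ S, ∑ l ∈ S,
          (a i / (Λ i + 1)) * (a l / (Λ l + 1)) * t ^ (Λ i + 1 + (Λ l + 1))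
          = (∑ i ∈ S, a i / (Λ i + 1) * t ^ (Λ i + 1)) ^ 2 := by
      intro t ht
      rw [sq, Finset.sum_mul_sum]
      refine Finset.sum_congr rfl fun i _ => Finset.sum_congr rfl fun l _ => ?_
      rw [Real.rpow_add_of_nonneg ht.1 (by linarith [hpos i]) (by linarith [hpos l])]
      ring
    have h3 : ∫ t in (0:ℝ)..1, ∑ i ∈ S, ∑ l ∈ S,
          (a i / (Λ i + 1)) * (a l / (Λ l + 1)) * t ^ (Λ i + 1 + (Λ l + 1))
        ≤ ∫ t in (0:ℝ)..1, I ^ 2 := by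
      refine intervalIntegral.integral_mono_on zero_le_one ?_ (by simp) ?_
      · refine Continuous.intervalIntegrable ?_ _ _
        refine continuous_finsetSum _ fun i _ => continuous_finsetSum _ fun l _ => ?_
        exact continuous_const.mul (Real.continuous_rpow_const (by linarith [hpos i, hpos l]))
      · intro t ht
        rw [h2 t ht]
        exact sq_le_sq' (neg_le_of_abs_le (hQ t ht)) (le_of_abs_le (hQ t ht))
    simpa using h3
  have h := (mz_coeff_sq S (fun i => Λ i + 3/2) (fun i => a i / (Λ i + 1))
    (fun i => by linarith [hpos i]) k hk).trans hq
  have hk0 := hpos k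
  have e2 : ∏ j ∈ S.erase k, (((Λ k + 3/2) - (Λ j + 3/2)) / ((Λ k + 3/2) + (Λ j + 3/2)))
      = ∏ j ∈ S.erase k, ((Λ k - Λ j) / (Λ k + Λ j + 3)) := by
    refine Finset.prod_congr rfl fun j _ => ?_
    congr 1 <;> ring
  simp only [e2] at h
  rw [← Finset.abs_prod]
  set R := ∏ j ∈ S.erase k, ((Λ k - Λ j) / (Λ k + Λ j + 3)) with hR
  rw [div_le_iff₀ (by linarith)] at h
  have h5 : (a k / (Λ k + 1) * R) ^ 2 ≤ ((2 * Λ k + 3) * I) ^ 2 := by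
    refine h.trans ?_
    have : 0 ≤ I ^ 2 := sq_nonneg _
    nlinarith
  have h6 := abs_le_of_sq_le_sq h5 (by positivity)
  have h7 : |a k / (Λ k + 1) * R| ≤ (2 * Λ k + 3) * I := h6
  rw [abs_mul, abs_div, abs_of_pos (show 0 < Λ k + 1 by linarith), div_mul_eq_mul_div,
    div_le_iff₀ (by linarith)] at h7
  linarith

lemma mz_split (μ : ℕ → ℝ) (hmono : StrictMono μ) (y : ℝ) (n : ℕ) :
    ∃ N ≤ n, ∀ j < n, (μ j < y ↔ j < N) := by
  induction n with
  | zero => exact ⟨0, le_rfl, by simp⟩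
  | succ n ih =>
    by_cases h : μ n < y
    · refine ⟨n + 1, le_rfl, fun j hj => ⟨fun _ => hj, fun _ => ?_⟩⟩
      exact lt_of_le_of_lt (hmono.monotone (Nat.lt_succ_iff.1 hj)) h
    · obtain ⟨N, hN, h2⟩ := ih
      refine ⟨N, hN.trans (Nat.le_succ _), fun j hj => ?_⟩
      rcases Nat.lt_succ_iff_lt_or_eq.1 hj with hj | rfl
      · exact h2 j hj
      · exact ⟨fun h' => absurd h' h, fun h' => by omega⟩

lemma mz_fact (D e : ℝ) (hD : 0 ≤ D) (he : 0 ≤ e) (m : ℕ) :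
    ∏ i ∈ Finset.range m, (D * e / ((i:ℝ) + 1)) ≤ D ^ m * Real.exp e := by
  have : ∏ i ∈ Finset.range m, (D * e / ((i:ℝ) + 1)) = D ^ m * (e ^ m / (m.factorial : ℝ)) := by
    rw [Finset.prod_div_distrib, Finset.prod_const, Finset.card_range, mul_pow,
      ← Finset.prod_range_add_one_eq_factorial]
    push_cast
    ring
  rw [this]
  exact mul_le_mul_of_nonneg_left (Real.pow_div_factorial_le_exp e he m) (by positivity)

lemma mz_prod (μ : ℕ → ℝ) (hpos : ∀ k, 0 < μ k) (hmono : StrictMono μ)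
    (c : ℝ) (hc : 0 < c) (hgap : ∀ k, c ≤ μ (k + 1) - μ k)
    (hs : Summable fun k => 1 / μ k) (ε : ℝ) (hε : 0 < ε) :
    ∃ C > 0, ∀ n k, k < n →
      ∏ j ∈ (Finset.range n).erase k, ((μ k + μ j) / |μ k - μ j|) ≤ C * Real.exp (ε * μ k) := by
  classical
  have hgap2 : ∀ k d : ℕ, c * d ≤ μ (k + d) - μ k := by
    intro k d
    induction d with
    | zero => simp
    | succ d ih =>
      have := hgap (k + d)
      rw [← add_assoc]; push_cast; linarith
  set D := 4 / (c * (ε / 4)) with hDdef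
  have hD : 0 < D := by positivity
  set τ := ε / (6 * (D + 1)) with hτ
  have hτ0 : 0 < τ := by positivity
  obtain ⟨J, hJ⟩ : ∃ J : ℕ, ∀ t : Finset ℕ, (∀ j ∈ t, J ≤ j) → ∑ j ∈ t, 1 / μ j ≤ τ := by
    obtain ⟨s, hs'⟩ := hs.vanishing (Iio_mem_nhds hτ0)
    refine ⟨s.sup id + 1, fun t ht => le_of_lt (hs' t ?_)⟩
    rw [Finset.disjoint_left]
    intro j hj hjs
    have := ht j hj
    have h2 : j ≤ s.sup id := Finset.le_sup (f := id) hjs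
    omega
  refine ⟨Real.exp (J * (D + 1)), Real.exp_pos _, fun n k hkn => ?_⟩
  set x := μ k with hx
  have hx0 : 0 < x := hpos k
  obtain ⟨N, hNn, hN⟩ := mz_split μ hmono (3 * x) n
  have hkN : k < N := (hN k hkn).1 (by linarith)
  set f : ℕ → ℝ := fun j => if j = k then 1 else (x + μ j) / |x - μ j| with hf
  have hf0 : ∀ j, 0 ≤ f j := by
    intro j
    simp only [hf]
    split_ifs
    · exact zero_le_one
    · have := hpos j
      positivity
  have e1 : ∏ j ∈ (Finset.range n).erase k, ((x + μ j) / |x - μ j|) = ∏ j ∈ Finset.range n, f j := by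
    rw [← Finset.prod_erase (Finset.range n) (a := k) (f := f) (by simp [hf])]
    refine Finset.prod_congr rfl fun j hj => ?_
    simp [hf, (Finset.mem_erase.1 hj).1]
  rw [e1, ← Finset.prod_range_mul_prod_Ico f hNn, ← Finset.prod_range_mul_prod_Ico f hkN.le]
  obtain ⟨m, hm⟩ : ∃ m, N - k = m + 1 := ⟨N - k - 1, by omega⟩
  rw [Finset.prod_Ico_eq_prod_range f k N, hm, Finset.prod_range_succ']
  have hfk : f (k + 0) = 1 := by simp [hf]
  rw [hfk, mul_one]
  have hDx : D * (ε / 4 * x) = 4 * x / c := by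
    rw [hDdef]; field_simp
  have near : ∀ j d : ℕ, j < N → (j + (d + 1) = k ∨ k + (d + 1) = j) →
      f j ≤ D * (ε / 4 * x) / ((d:ℝ) + 1) := by
    intro j d hjN hd
    have hjk : j ≠ k := by omega
    have h1 : μ j < 3 * x := (hN j (by omega)).2 hjN
    have h2 : c * ((d:ℝ) + 1) ≤ |x - μ j| := by
      rcases hd with h | h
      · have := hgap2 j (d + 1)
        rw [h] at this
        push_cast at this
        exact this.trans (le_abs_self _)
      · have := hgap2 k (d + 1)
        rw [h] at this
        push_cast at this
        rw [abs_sub_comm]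
        exact this.trans (le_abs_self _)
    simp only [hf, if_neg hjk]
    rw [hDx, div_div]
    exact div_le_div₀ (by positivity) (by linarith) (by positivity) h2
  have p1 : ∏ j ∈ Finset.range k, f j ≤ D ^ k * Real.exp (ε / 4 * x) := by
    rw [← Finset.prod_range_reflect]
    refine le_trans (Finset.prod_le_prod (fun _ _ => hf0 _) fun i hi => ?_)
      (mz_fact D (ε / 4 * x) hD.le (by positivity) k)
    have := Finset.mem_range.1 hi
    exact near _ _ (by omega) (Or.inl (by omega))
  have p2 : ∏ i ∈ Finset.range m, f (k + (i + 1)) ≤ D ^ m * Real.exp (ε / 4 * x) := by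
    refine le_trans (Finset.prod_le_prod (fun _ _ => hf0 _) fun i hi => ?_)
      (mz_fact D (ε / 4 * x) hD.le (by positivity) m)
    have := Finset.mem_range.1 hi
    exact near _ _ (by omega) (Or.inr (by omega))
  have p3 : ∏ j ∈ Finset.Ico N n, f j ≤ Real.exp (J + 3 * x * τ) := by
    have h1 : ∀ j ∈ Finset.Ico N n, f j ≤ Real.exp (3 * x * (1 / μ j)) ∧ 3 * x * (1 / μ j) ≤ 1 := by
      intro j hj
      obtain ⟨hj1, hj2⟩ := Finset.mem_Ico.1 hj
      have h3 : 3 * x ≤ μ j := by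
        by_contra hcon
        have := (hN j hj2).1 (not_le.1 hcon)
        omega
      have hj0 := hpos j
      refine ⟨?_, ?_⟩
      · have : j ≠ k := by omega
        simp only [hf, if_neg this]
        rw [abs_sub_comm, abs_of_pos (by linarith)]
        refine le_trans ?_ (Real.add_one_le_exp _)
        rw [div_le_iff₀ (by linarith)]
        have : (3 * x * (1 / μ j) + 1) * (μ j - x) = μ j + 2 * x - 3 * x * (x / μ j) := by
          field_simp; ring
        rw [this]
        have h4 : x / μ j ≤ 1 / 3 := by
          rw [div_le_iff₀ hj0]; linarith
        nlinarith
      · rw [mul_one_div, div_le_one hj0]; exact h3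
    refine (Finset.prod_le_prod (fun _ _ => hf0 _) fun j hj => (h1 j hj).1).trans ?_
    rw [← Real.exp_sum, Real.exp_le_exp,
      ← Finset.sum_filter_add_sum_filter_not (Finset.Ico N n) (fun j => j < J)]
    refine add_le_add ?_ ?_
    · refine (Finset.sum_le_card_nsmul _ _ 1 fun j hj => (h1 j (Finset.mem_filter.1 hj).1).2).trans ?_
      rw [nsmul_eq_mul, mul_one]
      have : (Finset.filter (fun j => j < J) (Finset.Ico N n)) ⊆ Finset.range J := by
        intro j hj
        exact Finset.mem_range.2 (Finset.mem_filter.1 hj).2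
      have := Finset.card_le_card this
      rw [Finset.card_range] at this
      exact_mod_cast this
    · rw [← Finset.mul_sum]
      refine mul_le_mul_of_nonneg_left (hJ _ fun j hj => ?_) (by positivity)
      exact not_lt.1 (Finset.mem_filter.1 hj).2
  have hcount : (N:ℝ) ≤ J + 3 * x * τ := by
    rcases le_or_gt N J with h | h
    · have : (N:ℝ) ≤ J := by exact_mod_cast h
      have : 0 ≤ 3 * x * τ := by positivity
      linarith
    · have h1 := hJ (Finset.Ico J N) fun j hj => (Finset.mem_Ico.1 hj).1
      have h2 : ∑ j ∈ Finset.Ico J N, 1 / (3 * x) ≤ ∑ j ∈ Finset.Ico J N, 1 / μ j := by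
        refine Finset.sum_le_sum fun j hj => ?_
        have hj2 := (Finset.mem_Ico.1 hj).2
        exact one_div_le_one_div_of_le (hpos j) ((hN j (by omega)).2 hj2).le
      rw [Finset.sum_const, Nat.card_Ico, nsmul_eq_mul, Nat.cast_sub h.le] at h2
      have h3 := h2.trans h1
      rw [mul_one_div, div_le_iff₀ (by positivity)] at h3
      linarith
  have hkm : ((k + m : ℕ):ℝ) ≤ J + 3 * x * τ := by
    have : ((k + m : ℕ):ℝ) ≤ N := by exact_mod_cast (by omega)
    linarith
  have hDp : D ^ (k + m) ≤ Real.exp ((J + 3 * x * τ) * D) := by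
    have h1 : D ≤ Real.exp D := by linarith [Real.add_one_le_exp D]
    calc D ^ (k + m) ≤ (Real.exp D) ^ (k + m) := pow_le_pow_left₀ hD.le h1 _
      _ = Real.exp ((k + m : ℕ) * D) := by rw [← Real.exp_nat_mul]
      _ ≤ _ := by
        rw [Real.exp_le_exp]
        exact mul_le_mul_of_nonneg_right hkm hD.le
  have n1 : 0 ≤ ∏ i ∈ Finset.range m, f (k + (i + 1)) := Finset.prod_nonneg fun _ _ => hf0 _
  have n3 : 0 ≤ ∏ j ∈ Finset.Ico N n, f j := Finset.prod_nonneg fun _ _ => hf0 _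
  have hfin : 3 * x * τ * (D + 1) = ε / 2 * x := by
    rw [hτ]; field_simp; ring
  calc _ ≤ (D ^ k * Real.exp (ε / 4 * x)) * (D ^ m * Real.exp (ε / 4 * x)) * Real.exp (J + 3 * x * τ) := by
        gcongr
    _ = D ^ (k + m) * (Real.exp (ε / 4 * x) * Real.exp (ε / 4 * x) * Real.exp (J + 3 * x * τ)) := by
        rw [pow_add]; ring
    _ ≤ Real.exp ((J + 3 * x * τ) * D) * (Real.exp (ε / 4 * x) * Real.exp (ε / 4 * x) * Real.exp (J + 3 * x * τ)) := by
        gcongr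
    _ = Real.exp (J * (D + 1)) * Real.exp (ε * x) := by
        simp only [← Real.exp_add]
        congr 1
        linear_combination hfin

lemma mz_coeff_bound (Λ : ℕ → ℝ) (hpos : ∀ k, 0 < Λ k) (hmono : StrictMono Λ)
    (c : ℝ) (hc : 0 < c) (hgap : ∀ k, c ≤ Λ (k + 1) - Λ k)
    (hs : Summable fun k => 1 / Λ k) (ε : ℝ) (hε : 0 < ε) :
    ∃ C > 0, ∀ (n : ℕ) (a : ℕ → ℝ) (k : ℕ), k < n →
      |a k| ≤ C * Real.exp (ε * Λ k) * ∫ t in (0:ℝ)..1, |∑ i ∈ Finset.range n, a i * t ^ Λ i| := by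
  obtain ⟨C, hC, h⟩ := mz_prod (fun k => Λ k + 3/2) (fun k => by linarith [hpos k])
    (fun i j hij => by simpa using hmono hij) c hc (fun k => by linarith [hgap k])
    (Summable.of_nonneg_of_le (fun k => by have := hpos k; positivity)
      (fun k => one_div_le_one_div_of_le (hpos k) (by linarith)) hs) (ε / 2) (by positivity)
  set K := max 1 (4 / ε) with hK
  have hK1 : 1 ≤ K := le_max_left _ _
  have hK2 : 4 / ε ≤ K := le_max_right _ _
  refine ⟨3 * K ^ 2 * (C * Real.exp (ε / 2 * (3/2))), by positivity, fun n a k hkn => ?_⟩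
  have hk0 := hpos k
  have h1 := mz_coeff (Finset.range n) Λ a hpos k (Finset.mem_range.2 hkn)
  have h2 := h n k hkn
  set I := ∫ t in (0:ℝ)..1, |∑ i ∈ Finset.range n, a i * t ^ Λ i|
  have hI : 0 ≤ I := intervalIntegral.integral_nonneg zero_le_one fun _ _ => abs_nonneg _
  set R := ∏ j ∈ (Finset.range n).erase k, |(Λ k - Λ j) / (Λ k + Λ j + 3)|
  set Q := ∏ j ∈ (Finset.range n).erase k, ((Λ k + 3/2 + (Λ j + 3/2)) / |Λ k + 3/2 - (Λ j + 3/2)|)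
  have hRQ : R * Q = 1 := by
    rw [← Finset.prod_mul_distrib]
    refine Finset.prod_eq_one fun j hj => ?_
    have hjk : Λ k - Λ j ≠ 0 := by
      rw [sub_ne_zero]
      exact fun e => (Finset.mem_erase.1 hj).1 (hmono.injective e).symm
    have hj0 := hpos j
    rw [abs_div, abs_of_pos (show 0 < Λ k + Λ j + 3 by linarith)]
    rw [show Λ k + 3/2 - (Λ j + 3/2) = Λ k - Λ j by ring,
      show Λ k + 3/2 + (Λ j + 3/2) = Λ k + Λ j + 3 by ring]
    have := abs_pos.2 hjk
    have : Λ k + Λ j + 3 ≠ 0 := by positivity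
    field_simp
  have hQ : 0 ≤ Q := Finset.prod_nonneg fun j _ => by
    have := hpos j
    positivity
  have h3 : (2 * Λ k + 3) * (Λ k + 1) ≤ 3 * K ^ 2 * Real.exp (ε / 2 * Λ k) := by
    have h4 : Λ k + 1 ≤ K * Real.exp (ε / 4 * Λ k) := by
      have h5 := Real.add_one_le_exp (ε / 4 * Λ k)
      have h6 : 1 ≤ K * (ε / 4) := by
        have : 4 / ε * (ε / 4) = 1 := by field_simp
        have := mul_le_mul_of_nonneg_right hK2 (show 0 ≤ ε / 4 by positivity)
        linarith
      have h7 := mul_le_mul_of_nonneg_left h5 (show 0 ≤ K by linarith)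
      nlinarith
    have h8 : Real.exp (ε / 2 * Λ k) = Real.exp (ε / 4 * Λ k) ^ 2 := by
      rw [← Real.exp_nat_mul]; congr 1; push_cast; ring
    rw [h8]
    have h9 : (Λ k + 1) ^ 2 ≤ (K * Real.exp (ε / 4 * Λ k)) ^ 2 :=
      pow_le_pow_left₀ (by linarith) h4 2
    nlinarith
  calc |a k| = |a k| * R * Q := by rw [mul_assoc, hRQ, mul_one]
    _ ≤ ((2 * Λ k + 3) * (Λ k + 1) * I) * Q := mul_le_mul_of_nonneg_right h1 hQ
    _ ≤ (3 * K ^ 2 * Real.exp (ε / 2 * Λ k) * I) * (C * Real.exp (ε / 2 * (Λ k + 3/2))) := by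
      gcongr
    _ = _ := by
      rw [mul_add, Real.exp_add, show ε * Λ k = ε / 2 * Λ k + ε / 2 * Λ k by ring, Real.exp_add]
      ring

lemma mz_growth (Λ : ℕ → ℝ) (hpos : ∀ k, 0 < Λ k)
    (c : ℝ) (hgap : ∀ k, c ≤ Λ (k + 1) - Λ k) (k : ℕ) : c * k ≤ Λ k := by
  induction k with
  | zero => simpa using (hpos 0).le
  | succ d ih =>
    have := hgap d
    push_cast; linarith

lemma mz_summ (Λ : ℕ → ℝ) (hpos : ∀ k, 0 < Λ k)
    (c : ℝ) (hc : 0 < c) (hgap : ∀ k, c ≤ Λ (k + 1) - Λ k) (s : ℝ) (hs : 0 < s) :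
    Summable fun k => Real.exp (-s * Λ k) := by
  have h : Summable fun k : ℕ => Real.exp (-(s * c)) ^ k :=
    summable_geometric_of_lt_one (Real.exp_pos _).le (by rw [Real.exp_lt_one_iff]; nlinarith)
  refine Summable.of_nonneg_of_le (fun _ => (Real.exp_pos _).le) (fun k => ?_) h
  rw [← Real.exp_nat_mul, Real.exp_le_exp]
  have := mz_growth Λ hpos c hgap k
  nlinarith

lemma mz_unique (Λ : ℕ → ℝ) (hpos : ∀ k, 0 < Λ k)
    (c : ℝ) (hc : 0 < c) (hgap : ∀ k, c ≤ Λ (k + 1) - Λ k) (a : ℕ → ℝ)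
    (ha : ∀ ε > 0, ∃ C, ∀ k, |a k| ≤ C * Real.exp (ε * Λ k))
    (δ r : ℝ) (hδ : 0 < δ) (hr : δ < r) (hr1 : r < 1)
    (h0 : ∀ t ∈ Set.Ioo δ r, ∑' k, a k * t ^ Λ k = 0) :
    ∀ t ∈ Set.Ico (0:ℝ) 1, ∑' k, a k * t ^ Λ k = 0 := by
  set F : ℂ → ℂ := fun z => ∑' k, (a k : ℂ) * Complex.exp (-(Λ k) * z) with hF
  have hFP : ∀ t : ℝ, 0 < t → F ((-Real.log t : ℝ) : ℂ) = ((∑' k, a k * t ^ Λ k : ℝ) : ℂ) := by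
    intro t ht
    rw [Complex.ofReal_tsum]
    refine tsum_congr fun k => ?_
    rw [Real.rpow_def_of_pos ht]
    push_cast
    congr 2
    ring
  set U : Set ℂ := {z | 0 < z.re} with hU
  have hUo : IsOpen U := isOpen_lt continuous_const Complex.continuous_re
  have hd : DifferentiableOn ℂ F U := by
    intro z hz
    have hz' : 0 < z.re := hz
    obtain ⟨C, hC⟩ := ha (z.re / 4) (by positivity)
    set V : Set ℂ := {w | z.re / 2 < w.re} with hV
    have hVo : IsOpen V := isOpen_lt continuous_const Complex.continuous_re
    have hzV : z ∈ V := by simp only [hV, Set.mem_ofPred_eq]; linarith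
    have := Complex.differentiableOn_tsum_of_summable_norm (U := V)
      (F := fun k z => (a k : ℂ) * Complex.exp (-(Λ k) * z))
      (u := fun k => C * Real.exp (-(z.re / 4) * Λ k))
      ((mz_summ Λ hpos c hc hgap (z.re / 4) (by positivity)).mul_left C)
      (fun k => by fun_prop) hVo ?_
    · exact (this.differentiableAt (hVo.mem_nhds hzV)).differentiableWithinAt
    · intro k w hw
      have hw' : z.re / 2 < w.re := hw
      rw [norm_mul, Complex.norm_exp, Complex.norm_real, Real.norm_eq_abs]
      have e : (-(Λ k : ℂ) * w).re = -(Λ k) * w.re := by simp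
      rw [e]
      calc |a k| * Real.exp (-(Λ k) * w.re)
          ≤ C * Real.exp (z.re / 4 * Λ k) * Real.exp (-(Λ k) * w.re) := by
            gcongr
            exact hC k
        _ ≤ C * Real.exp (z.re / 4 * Λ k) * Real.exp (-(z.re / 2) * Λ k) := by
            have : 0 ≤ C * Real.exp (z.re / 4 * Λ k) := (abs_nonneg _).trans (hC k)
            refine mul_le_mul_of_nonneg_left ?_ this
            rw [Real.exp_le_exp]
            have := hpos k
            nlinarith
        _ = C * Real.exp (-(z.re / 4) * Λ k) := by
            rw [mul_assoc, ← Real.exp_add]; congr 2; ring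
  have han : AnalyticOnNhd ℂ F U := hd.analyticOnNhd hUo
  have hUc : IsPreconnected U := (convex_halfSpace_re_gt 0).isPreconnected
  set t0 := (δ + r) / 2 with ht0
  have ht0' : t0 ∈ Set.Ioo δ r := ⟨by rw [ht0]; linarith, by rw [ht0]; linarith⟩
  have ht0p : 0 < t0 := hδ.trans ht0'.1
  have hz0 : ((-Real.log t0 : ℝ) : ℂ) ∈ U := by
    simp only [hU, Set.mem_ofPred_eq, Complex.ofReal_re]
    have := Real.log_neg ht0p (ht0'.2.trans hr1)
    linarith
  have hfreq : ∃ᶠ z in 𝓝[≠] ((-Real.log t0 : ℝ) : ℂ), F z = 0 := by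
    have hev : ∀ᶠ x in 𝓝[≠] (-Real.log t0), F (x : ℝ) = 0 := by
      have hcont : ContinuousAt (fun x : ℝ => Real.exp (-x)) (-Real.log t0) := by fun_prop
      have : Set.Ioo δ r ∈ 𝓝 (Real.exp (-(-Real.log t0))) := by
        rw [neg_neg, Real.exp_log ht0p]
        exact Ioo_mem_nhds ht0'.1 ht0'.2
      refine Filter.Eventually.filter_mono nhdsWithin_le_nhds ?_
      filter_upwards [hcont.preimage_mem_nhds this] with x hx
      have h1 := hFP (Real.exp (-x)) (Real.exp_pos _)
      rw [h0 _ hx, Real.log_exp, neg_neg] at h1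
      simpa using h1
    have ht : Tendsto (fun x : ℝ => (x : ℂ)) (𝓝[≠] (-Real.log t0)) (𝓝[≠] ((-Real.log t0 : ℝ) : ℂ)) := by
      refine tendsto_nhdsWithin_iff.2 ⟨?_, ?_⟩
      · exact (Complex.continuous_ofReal.tendsto _).mono_left nhdsWithin_le_nhds
      · filter_upwards [self_mem_nhdsWithin] with x hx
        exact fun h => hx (Complex.ofReal_injective h)
    exact ht.frequently hev.frequently
  have hz := han.eqOn_zero_of_preconnected_of_frequently_eq_zero hUc hz0 hfreq
  intro t ht
  rcases ht.1.eq_or_lt with h | h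
  · rw [← h]
    have : ∀ k, a k * (0:ℝ) ^ Λ k = 0 := fun k => by
      rw [Real.zero_rpow (hpos k).ne', mul_zero]
    simp [this]
  · have hm : ((-Real.log t : ℝ) : ℂ) ∈ U := by
      simp only [hU, Set.mem_ofPred_eq, Complex.ofReal_re]
      have := Real.log_neg h ht.2
      linarith
    have h1 := hFP t h
    rw [hz hm] at h1
    simpa using h1.symm

lemma mz_poly_cont (Λ : ℕ → ℝ) (hpos : ∀ k, 0 < Λ k) (n : ℕ) (a : ℕ → ℝ) :
    Continuous fun t : ℝ => ∑ i ∈ Finset.range n, a i * t ^ Λ i :=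
  continuous_finsetSum _ fun i _ => continuous_const.mul (Real.continuous_rpow_const (hpos i).le)

lemma mz_memLp (f : ℝ → ℝ) (hf : Continuous f) (p : ℝ≥0∞) (a b : ℝ) :
    MemLp f p (volume.restrict (Set.Icc a b)) := by
  obtain ⟨C, hC⟩ := (isCompact_Icc (a := a) (b := b)).exists_bound_of_continuousOn hf.continuousOn
  refine MemLp.of_bound hf.aestronglyMeasurable C ?_
  exact (ae_restrict_iff' measurableSet_Icc).2 (Eventually.of_forall hC)

lemma mz_L1 (f : ℝ → ℝ) (hf : Continuous f) (p : ℝ≥0∞) (hp : 1 ≤ p) :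
    ∫ t in (0:ℝ)..1, |f t| ≤ (eLpNorm f p (volume.restrict (Set.Icc (0:ℝ) 1))).toReal := by
  have : IsProbabilityMeasure (volume.restrict (Set.Icc (0:ℝ) 1)) := ⟨by simp⟩
  have h := eLpNorm_le_eLpNorm_of_exponent_le (μ := volume.restrict (Set.Icc (0:ℝ) 1)) hp
    hf.aestronglyMeasurable
  have h1 := ENNReal.toReal_mono (mz_memLp f hf p 0 1).2.ne h
  refine le_trans (le_of_eq ?_) h1
  rw [intervalIntegral.integral_of_le zero_le_one, ← integral_Icc_eq_integral_Ioc,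
    eLpNorm_one_eq_lintegral_enorm, ← integral_norm_eq_lintegral_enorm hf.aestronglyMeasurable]
  rfl

lemma mz_split_norm (f : ℝ → ℝ) (hf : Continuous f) (p : ℝ≥0∞) (hp : 1 ≤ p) (δ r : ℝ)
    (hr : δ < r) :
    eLpNorm f p (volume.restrict (Set.Icc (0:ℝ) 1)) ≤
      eLpNorm f p (volume.restrict (Set.Icc (0:ℝ) r)) + eLpNorm f p (volume.restrict (Set.Icc δ 1)) := by
  have e : f = (Set.Iic r).indicator f + ((Set.Iic r)ᶜ).indicator f :=
    (Set.indicator_self_add_compl _ _).symm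
  have hm := hf.aestronglyMeasurable (μ := volume.restrict (Set.Icc (0:ℝ) 1))
  calc eLpNorm f p (volume.restrict (Set.Icc (0:ℝ) 1))
      = eLpNorm ((Set.Iic r).indicator f + ((Set.Iic r)ᶜ).indicator f) p
          (volume.restrict (Set.Icc (0:ℝ) 1)) := by rw [← e]
    _ ≤ _ := eLpNorm_add_le (hm.indicator measurableSet_Iic) (hm.indicator measurableSet_Iic.compl) hp
    _ ≤ _ := by
      rw [eLpNorm_indicator_eq_eLpNorm_restrict measurableSet_Iic,
        eLpNorm_indicator_eq_eLpNorm_restrict measurableSet_Iic.compl,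
        Measure.restrict_restrict measurableSet_Iic, Measure.restrict_restrict measurableSet_Iic.compl]
      refine add_le_add (eLpNorm_mono_measure _ (Measure.restrict_mono ?_ le_rfl))
        (eLpNorm_mono_measure _ (Measure.restrict_mono ?_ le_rfl))
      · rintro x ⟨h1, h2⟩
        exact ⟨h2.1, h1⟩
      · rintro x ⟨h1, h2⟩
        exact ⟨(hr.trans (not_le.1 h1)).le, h2.2⟩

lemma mz_bound_norm (f : ℝ → ℝ) (p : ℝ≥0∞) (u v C : ℝ) (hu : 0 ≤ u) (hv : v ≤ 1)
    (h : ∀ t ∈ Set.Icc u v, |f t| ≤ C) :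
    eLpNorm f p (volume.restrict (Set.Icc u v)) ≤ ENNReal.ofReal C := by
  refine (eLpNorm_le_of_ae_bound (C := C)
    ((ae_restrict_iff' measurableSet_Icc).2 (Eventually.of_forall h))).trans ?_
  refine mul_le_of_le_one_left zero_le ?_
  refine ENNReal.rpow_le_one ?_ (by positivity)
  simp only [Measure.restrict_apply MeasurableSet.univ, Set.univ_inter, Real.volume_Icc]
  exact ENNReal.ofReal_le_one.2 (by linarith)

/-- The key inequality for Müntz polynomials. -/
lemma mz_key (Λ : ℕ → ℝ) (hpos : ∀ k, 0 < Λ k) (hmono : StrictMono Λ)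
    (c : ℝ) (hc : 0 < c) (hgap : ∀ k, c ≤ Λ (k + 1) - Λ k)
    (hs : Summable fun k => 1 / Λ k) (p : ℝ≥0∞) (hp : 1 ≤ p)
    (δ : ℝ) (hδ0 : 0 < δ) (hδ1 : δ < 1) :
    ∃ K : ℕ, ∀ (n : ℕ) (a : ℕ → ℝ),
      eLpNorm (fun t => ∑ i ∈ Finset.range n, a i * t ^ Λ i) p (volume.restrict (Set.Icc (0:ℝ) 1))
      ≤ K * eLpNorm (fun t => ∑ i ∈ Finset.range n, a i * t ^ Λ i) p
          (volume.restrict (Set.Icc δ 1)) := by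
  by_contra hcon
  push Not at hcon
  -- normalised counterexamples
  have hcon2 : ∀ m : ℕ, ∃ (n : ℕ) (b : ℕ → ℝ), (∀ i, n ≤ i → b i = 0) ∧
      eLpNorm (fun t => ∑ i ∈ Finset.range n, b i * t ^ Λ i) p
        (volume.restrict (Set.Icc (0:ℝ) 1)) = 1 ∧
      eLpNorm (fun t => ∑ i ∈ Finset.range n, b i * t ^ Λ i) p
        (volume.restrict (Set.Icc δ 1)) ≤ (m:ℝ≥0∞)⁻¹ := by
    intro m
    obtain ⟨n, a, h⟩ := hcon m
    set g : ℝ → ℝ := fun t => ∑ i ∈ Finset.range n, a i * t ^ Λ i with hg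
    have hgc : Continuous g := mz_poly_cont Λ hpos n a
    set E := eLpNorm g p (volume.restrict (Set.Icc (0:ℝ) 1)) with hE
    have hEtop : E ≠ ∞ := (mz_memLp g hgc p 0 1).2.ne
    have hE0 : E ≠ 0 := (lt_of_le_of_lt zero_le h).ne'
    set s := E.toReal with hsdef
    have hs0 : 0 < s := ENNReal.toReal_pos hE0 hEtop
    have hse : ‖s⁻¹‖ₑ = E⁻¹ := by
      rw [Real.enorm_eq_ofReal (by positivity), ENNReal.ofReal_inv_of_pos hs0, hsdef,
        ENNReal.ofReal_toReal hEtop]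
    have e : (fun t => ∑ i ∈ Finset.range n, (if i < n then s⁻¹ * a i else 0) * t ^ Λ i)
        = s⁻¹ • g := by
      funext t
      simp only [hg, Pi.smul_apply, smul_eq_mul, Finset.mul_sum]
      refine Finset.sum_congr rfl fun i hi => ?_
      rw [if_pos (Finset.mem_range.1 hi)]
      ring
    refine ⟨n, fun i => if i < n then s⁻¹ * a i else 0, ?_, ?_, ?_⟩
    · intro i hi
      exact if_neg (not_lt.2 hi)
    · rw [e, eLpNorm_const_smul, hse]
      exact ENNReal.inv_mul_cancel hE0 hEtop
    · rw [e, eLpNorm_const_smul, hse, ENNReal.le_inv_iff_mul_le]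
      calc E⁻¹ * eLpNorm g p (volume.restrict (Set.Icc δ 1)) * m
          = E⁻¹ * (m * eLpNorm g p (volume.restrict (Set.Icc δ 1))) := by ring
        _ ≤ E⁻¹ * E := by gcongr
        _ = 1 := ENNReal.inv_mul_cancel hE0 hEtop
  choose n b hb0 hb1 hb2 using hcon2
  -- coefficient bounds
  have hcoef : ∀ ε > 0, ∃ C > 0, ∀ m k, |b m k| ≤ C * Real.exp (ε * Λ k) := by
    intro ε hε
    obtain ⟨C, hC, h⟩ := mz_coeff_bound Λ hpos hmono c hc hgap hs ε hε
    refine ⟨C, hC, fun m k => ?_⟩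
    rcases lt_or_ge k (n m) with hk | hk
    · refine (h (n m) (b m) k hk).trans ?_
      have h1 := mz_L1 _ (mz_poly_cont Λ hpos (n m) (b m)) p hp
      rw [hb1 m] at h1
      exact mul_le_of_le_one_right (by positivity) (by simpa using h1)
    · rw [hb0 m k hk, abs_zero]; positivity
  obtain ⟨B, hB, hBb⟩ := hcoef 1 one_pos
  have hcomp : IsCompact (Set.pi Set.univ fun k : ℕ =>
      Set.Icc (-(B * Real.exp (1 * Λ k))) (B * Real.exp (1 * Λ k))) :=
    isCompact_univ_pi fun k => isCompact_Icc
  obtain ⟨a, -, φ, hφ, hlim⟩ := hcomp.tendsto_subseq (x := b)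
    (fun m k _ => abs_le.1 (hBb m k))
  have hlimk : ∀ k, Tendsto (fun m => b (φ m) k) atTop (𝓝 (a k)) := fun k =>
    (tendsto_pi_nhds.1 hlim) k
  have hacoef : ∀ ε > 0, ∃ C > 0, (∀ m k, |b m k| ≤ C * Real.exp (ε * Λ k)) ∧
      ∀ k, |a k| ≤ C * Real.exp (ε * Λ k) := by
    intro ε hε
    obtain ⟨C, hC, h⟩ := hcoef ε hε
    refine ⟨C, hC, h, fun k => ?_⟩
    exact le_of_tendsto (hlimk k).abs (Eventually.of_forall fun m => h _ k)
  -- the radius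
  set r := (1 + δ) / 2 with hr
  have hr0 : 0 < r := by positivity
  have hδr : δ < r := by rw [hr]; linarith
  have hr1 : r < 1 := by rw [hr]; linarith
  set s := -Real.log r / 2 with hsdef
  have hs0 : 0 < s := by
    have := Real.log_neg hr0 hr1
    rw [hsdef]; linarith
  have hrs : ∀ k, Real.exp (s * Λ k) * r ^ Λ k = Real.exp (-s * Λ k) := by
    intro k
    rw [Real.rpow_def_of_pos hr0, ← Real.exp_add]
    congr 1
    rw [hsdef]; ring
  obtain ⟨C, hC, hCb, hCa⟩ := hacoef s hs0
  have hsum := mz_summ Λ hpos c hc hgap s hs0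
  have hterm : ∀ x : ℝ, ∀ D : ℝ, ∀ k, |x| ≤ D * Real.exp (s * Λ k) →
      ∀ t ∈ Set.Icc (0:ℝ) r, |x * t ^ Λ k| ≤ D * Real.exp (-s * Λ k) := by
    intro x D k hx t ht
    rw [abs_mul, abs_of_nonneg (Real.rpow_nonneg ht.1 _), ← hrs, ← mul_assoc]
    exact mul_le_mul hx (Real.rpow_le_rpow ht.1 ht.2 (hpos k).le) (Real.rpow_nonneg ht.1 _)
      ((abs_nonneg _).trans hx)
  have hrmem : r ∈ Set.Icc (0:ℝ) r := ⟨hr0.le, le_rfl⟩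
  have hdiff : ∀ m k, |b m k - a k| ≤ (2 * C) * Real.exp (s * Λ k) := fun m k => by
    have := hCb m k
    have := hCa k
    have := abs_sub (b m k) (a k)
    linarith
  set P : ℝ → ℝ := fun t => ∑' k, a k * t ^ Λ k with hP
  set g : ℕ → ℝ → ℝ := fun m t => ∑ i ∈ Finset.range (n m), b m i * t ^ Λ i with hgdef
  have hgc : ∀ m, Continuous (g m) := fun m => mz_poly_cont Λ hpos (n m) (b m)
  set e : ℕ → ℝ := fun m => ∑' k, |b (φ m) k - a k| * r ^ Λ k with hedef
  have he : Tendsto e atTop (𝓝 0) := by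
    have : Tendsto e atTop (𝓝 (∑' k : ℕ, (0:ℝ))) := by
      refine tendsto_tsum_of_dominated_convergence (hsum.mul_left (2 * C)) (fun k => ?_)
        (Eventually.of_forall fun m k => ?_)
      · have h1 : Tendsto (fun m => |b (φ m) k - a k| * r ^ Λ k) atTop
            (𝓝 (|a k - a k| * r ^ Λ k)) := (((hlimk k).sub_const _).abs).mul_const _
        simpa using h1
      · rw [Real.norm_eq_abs]
        exact hterm _ _ k (by rw [abs_abs]; exact hdiff _ k) r hrmem
    simpa using this
  have hgP : ∀ m, ∀ t ∈ Set.Icc (0:ℝ) r, |g (φ m) t - P t| ≤ e m := by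
    intro m t ht
    have h1 : g (φ m) t = ∑' k, b (φ m) k * t ^ Λ k := by
      rw [tsum_eq_sum (s := Finset.range (n (φ m)))]
      intro k hk
      rw [hb0 _ k (by simpa using hk), zero_mul]
    have s1 : Summable fun k => b (φ m) k * t ^ Λ k :=
      Summable.of_norm_bounded (hsum.mul_left C) fun k => hterm _ _ k (hCb _ k) t ht
    have s2 : Summable fun k => a k * t ^ Λ k :=
      Summable.of_norm_bounded (hsum.mul_left C) fun k => hterm _ _ k (hCa k) t ht
    have s3 : Summable fun k => |b (φ m) k - a k| * r ^ Λ k :=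
      Summable.of_norm_bounded (hsum.mul_left (2 * C)) fun k =>
        hterm _ _ k (by rw [abs_abs]; exact hdiff _ k) r hrmem
    rw [h1, hP]
    simp only
    rw [← s1.tsum_sub s2, ← Real.norm_eq_abs]
    refine tsum_of_norm_bounded s3.hasSum fun k => ?_
    rw [← sub_mul, Real.norm_eq_abs, abs_mul, abs_of_nonneg (Real.rpow_nonneg ht.1 _)]
    exact mul_le_mul_of_nonneg_left (Real.rpow_le_rpow ht.1 ht.2 (hpos k).le) (abs_nonneg _)
  have hPc : ContinuousOn P (Set.Icc 0 r) :=
    continuousOn_tsum (fun k => (continuous_const.mul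
      (Real.continuous_rpow_const (hpos k).le)).continuousOn) (hsum.mul_left C)
      fun k t ht => hterm _ _ k (hCa k) t ht
  have hsub : Set.Icc δ r ⊆ Set.Icc 0 r := Set.Icc_subset_Icc_left hδ0.le
  have hPm : AEStronglyMeasurable P (volume.restrict (Set.Icc δ r)) :=
    (hPc.mono hsub).aestronglyMeasurable measurableSet_Icc
  have hinv : Tendsto (fun m => ((φ m : ℕ) : ℝ≥0∞)⁻¹) atTop (𝓝 0) :=
    ENNReal.tendsto_inv_nat_nhds_zero.comp hφ.tendsto_atTop
  have heE : Tendsto (fun m => ENNReal.ofReal (e m)) atTop (𝓝 0) := by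
    simpa using ENNReal.tendsto_ofReal he
  have htot : Tendsto (fun m => ENNReal.ofReal (e m) + ((φ m : ℕ) : ℝ≥0∞)⁻¹) atTop (𝓝 0) := by
    simpa using heE.add hinv
  -- the limit vanishes on `[δ, r]`
  have hPz : eLpNorm P p (volume.restrict (Set.Icc δ r)) = 0 := by
    refine le_antisymm (ge_of_tendsto' htot fun m => ?_) zero_le
    have e1 : P = (fun t => P t - g (φ m) t) + g (φ m) := by
      funext t; simp
    have hgm := (hgc (φ m)).aestronglyMeasurable (μ := volume.restrict (Set.Icc δ r))
    calc eLpNorm P p (volume.restrict (Set.Icc δ r))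
        = eLpNorm ((fun t => P t - g (φ m) t) + g (φ m)) p (volume.restrict (Set.Icc δ r)) := by
          rw [← e1]
      _ ≤ _ := eLpNorm_add_le (hPm.sub hgm) hgm hp
      _ ≤ _ := by
        refine add_le_add (mz_bound_norm _ p δ r _ hδ0.le hr1.le fun t ht => ?_) ?_
        · rw [abs_sub_comm]
          exact hgP m t (hsub ht)
        · refine le_trans (eLpNorm_mono_measure _ (Measure.restrict_mono ?_ le_rfl)) (hb2 (φ m))
          exact Set.Icc_subset_Icc_right hr1.le
  have hPae : P =ᵐ[volume.restrict (Set.Icc δ r)] 0 :=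
    (eLpNorm_eq_zero_iff hPm (by positivity)).1 hPz
  have hPeq : Set.EqOn P (0 : ℝ → ℝ) (Set.Ioo δ r) :=
    Measure.eqOn_Ioo_of_ae_eq (μ := volume)
      (ae_restrict_of_ae_restrict_of_subset Set.Ioo_subset_Icc_self hPae)
      (hPc.mono (Set.Ioo_subset_Icc_self.trans hsub)) continuousOn_const
  have hP0 := mz_unique Λ hpos c hc hgap a
    (fun ε hε => by obtain ⟨C, _, _, h⟩ := hacoef ε hε; exact ⟨C, h⟩) δ r hδ0 hδr hr1
    (fun t ht => hPeq ht)
  have hone : (1:ℝ≥0∞) ≤ 0 := by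
    refine ge_of_tendsto' htot fun m => ?_
    rw [← hb1 (φ m)]
    refine (mz_split_norm (g (φ m)) (hgc _) p hp δ r hδr).trans ?_
    refine add_le_add (mz_bound_norm _ p 0 r _ le_rfl hr1.le fun t ht => ?_) (hb2 (φ m))
    have h1 := hgP m t ht
    have h2 : P t = 0 := hP0 t ⟨ht.1, ht.2.trans_lt hr1⟩
    rwa [h2, sub_zero] at h1
  simp at hone

/-- every element of the span is a Müntz polynomial -/
lemma mz_span_repr (Λ : ℕ → ℝ) (p : ℝ≥0∞) [Fact (1 ≤ p)] (u v : ℝ)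
    (g : Lp ℝ p (volume.restrict (Set.Icc u v)))
    (hg : g ∈ Submodule.span ℝ {g : Lp ℝ p (volume.restrict (Set.Icc u v)) |
      ∃ lam ∈ Set.range Λ, (g : ℝ → ℝ) =ᵐ[volume.restrict (Set.Icc u v)] fun t => t ^ lam}) :
    ∃ (n : ℕ) (a : ℕ → ℝ), (g : ℝ → ℝ) =ᵐ[volume.restrict (Set.Icc u v)]
      fun t => ∑ i ∈ Finset.range n, a i * t ^ Λ i := by
  have key : ∃ a : ℕ →₀ ℝ, (g : ℝ → ℝ) =ᵐ[volume.restrict (Set.Icc u v)]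
      fun t => a.sum fun i x => x * t ^ Λ i := by
    induction hg using Submodule.span_induction with
    | mem g hg =>
      obtain ⟨_, ⟨k, rfl⟩, h⟩ := hg
      refine ⟨Finsupp.single k 1, ?_⟩
      filter_upwards [h] with t ht
      rw [ht, Finsupp.sum_single_index (by simp), one_mul]
    | zero =>
      refine ⟨0, ?_⟩
      filter_upwards [Lp.coeFn_zero ℝ p (volume.restrict (Set.Icc u v))] with t ht
      rw [ht]; simp
    | add x y _ _ hx hy =>
      obtain ⟨a, ha⟩ := hx
      obtain ⟨b, hb⟩ := hy
      refine ⟨a + b, ?_⟩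
      filter_upwards [Lp.coeFn_add x y, ha, hb] with t h1 h2 h3
      rw [h1, Pi.add_apply, h2, h3, Finsupp.sum_add_index' (by simp) (by intros; ring)]
    | smul s x _ hx =>
      obtain ⟨a, ha⟩ := hx
      refine ⟨s • a, ?_⟩
      filter_upwards [Lp.coeFn_smul s x, ha] with t h1 h2
      rw [h1, Pi.smul_apply, h2, Finsupp.sum_smul_index' (by simp), smul_eq_mul, Finsupp.mul_sum]
      refine Finsupp.sum_congr fun i _ => ?_
      rw [smul_eq_mul]; ring
  obtain ⟨a, ha⟩ := key
  refine ⟨a.support.sup id + 1, a, ?_⟩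
  filter_upwards [ha] with t ht
  rw [ht]
  refine Finsupp.sum_of_support_subset _ ?_ _ (by simp)
  intro i hi
  have : i ≤ a.support.sup id := Finset.le_sup (f := id) hi
  exact Finset.mem_range.2 (by omega)

/-- restriction of `L^p` functions -/
noncomputable def mzRestr (p : ℝ≥0∞) [Fact (1 ≤ p)] {ν μ : Measure ℝ} (h : ν ≤ μ) :
    Lp ℝ p μ →L[ℝ] Lp ℝ p ν :=
  LinearMap.mkContinuous
    { toFun := fun f => MemLp.toLp f ((Lp.memLp f).mono_measure h)
      map_add' := fun f g => by
        rw [← MemLp.toLp_add]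
        exact MemLp.toLp_congr _ _ ((Measure.absolutelyContinuous_of_le h).ae_le (Lp.coeFn_add f g))
      map_smul' := fun c f => by
        rw [RingHom.id_apply, ← MemLp.toLp_const_smul]
        exact MemLp.toLp_congr _ _ ((Measure.absolutelyContinuous_of_le h).ae_le (Lp.coeFn_smul c f)) }
    1 (fun f => by
      rw [one_mul]
      change ‖MemLp.toLp f ((Lp.memLp f).mono_measure h)‖ ≤ ‖f‖
      rw [Lp.norm_toLp, Lp.norm_def]
      exact ENNReal.toReal_mono (Lp.eLpNorm_ne_top f) (eLpNorm_mono_measure _ h))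

lemma mzRestr_coe (p : ℝ≥0∞) [Fact (1 ≤ p)] {ν μ : Measure ℝ} (h : ν ≤ μ) (f : Lp ℝ p μ) :
    (mzRestr p h f : ℝ → ℝ) =ᵐ[ν] (f : ℝ → ℝ) :=
  MemLp.coeFn_toLp ((Lp.memLp f).mono_measure h)

/-- For `Λ` strictly increasing positive with gap and Müntz conditions and `1 ≤ p < ∞`,
`M_{Λ,p}([0,1])` and `M_{Λ,p}([δ,1])` are linearly topologically isomorphic for each
`0 < δ < 1`, the isomorphism being induced by restriction to `[δ,1]`. -/
theorem muntzSpace_isomorphic_restrict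
    (Λ : ℕ → ℝ) (hpos : ∀ k, 0 < Λ k) (hmono : StrictMono Λ)
    (hgap : ∃ c > 0, ∀ k, c ≤ Λ (k + 1) - Λ k)
    (hMuntz : Summable fun k => 1 / Λ k)
    (p : ℝ≥0∞) [Fact (1 ≤ p)] (hp' : p ≠ ∞)
    (δ : ℝ) (hδ0 : 0 < δ) (hδ1 : δ < 1) :
    ∃ T : ↥(muntzSpace (Set.range Λ) p 0 1) ≃L[ℝ] ↥(muntzSpace (Set.range Λ) p δ 1),
      ∀ f : ↥(muntzSpace (Set.range Λ) p 0 1),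
        ((T f : Lp ℝ p (volume.restrict (Set.Icc δ 1))) : ℝ → ℝ)
          =ᵐ[volume.restrict (Set.Icc δ 1)]
        ((f : Lp ℝ p (volume.restrict (Set.Icc (0:ℝ) 1))) : ℝ → ℝ) := by
  obtain ⟨c, hc, hgap⟩ := hgap
  have hp : 1 ≤ p := Fact.out
  obtain ⟨K, hK⟩ := mz_key Λ hpos hmono c hc hgap hMuntz p hp δ hδ0 hδ1
  have hle : volume.restrict (Set.Icc δ 1) ≤ volume.restrict (Set.Icc (0:ℝ) 1) :=
    Measure.restrict_mono (Set.Icc_subset_Icc_left hδ0.le) le_rfl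
  obtain ⟨R, hRc⟩ : ∃ R : Lp ℝ p (volume.restrict (Set.Icc (0:ℝ) 1)) →L[ℝ]
      Lp ℝ p (volume.restrict (Set.Icc δ 1)),
      ∀ f, (R f : ℝ → ℝ) =ᵐ[volume.restrict (Set.Icc δ 1)] (f : ℝ → ℝ) :=
    ⟨mzRestr p hle, fun f => mzRestr_coe p hle f⟩
  -- lower bound
  have hlow : ∀ f ∈ muntzSpace (Set.range Λ) p 0 1, ‖f‖ ≤ K * ‖R f‖ := by
    intro f hf
    have hclosed : IsClosed {f : Lp ℝ p (volume.restrict (Set.Icc (0:ℝ) 1)) | ‖f‖ ≤ K * ‖R f‖} :=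
      isClosed_le continuous_norm (continuous_const.mul R.continuous.norm)
    refine closure_minimal ?_ hclosed hf
    intro g hg
    obtain ⟨n, a, hga⟩ := mz_span_repr Λ p 0 1 g hg
    have hRg := (hRc g).trans ((Measure.absolutelyContinuous_of_le hle).ae_le hga)
    change ‖g‖ ≤ K * ‖R g‖
    rw [Lp.norm_def, Lp.norm_def, eLpNorm_congr_ae hga, eLpNorm_congr_ae hRg]
    have h1 := hK n a
    have h2 : (K : ℝ≥0∞) * eLpNorm (fun t => ∑ i ∈ Finset.range n, a i * t ^ Λ i) p
        (volume.restrict (Set.Icc δ 1)) ≠ ∞ :=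
      ENNReal.mul_ne_top (by simp) (mz_memLp _ (mz_poly_cont Λ hpos n a) p δ 1).2.ne
    have h3 := ENNReal.toReal_mono h2 h1
    rwa [ENNReal.toReal_mul, ENNReal.toReal_natCast] at h3
  -- `R` maps the first space to the second one
  have hmaps : ∀ f ∈ muntzSpace (Set.range Λ) p 0 1, R f ∈ muntzSpace (Set.range Λ) p δ 1 := by
    have : muntzSpace (Set.range Λ) p 0 1 ≤
        (muntzSpace (Set.range Λ) p δ 1).comap (R : _ →ₗ[ℝ] _) := by
      refine Submodule.topologicalClosure_minimal _ (Submodule.span_le.2 ?_) ?_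
      · rintro g ⟨lam, hlam, hg⟩
        refine Submodule.le_topologicalClosure _ (Submodule.subset_span ⟨lam, hlam, ?_⟩)
        exact (hRc g).trans ((Measure.absolutelyContinuous_of_le hle).ae_le hg)
      · exact (Submodule.isClosed_topologicalClosure _).preimage R.continuous
    exact this
  have hcl1 : IsClosed (muntzSpace (Set.range Λ) p 0 1 : Set (Lp ℝ p (volume.restrict (Set.Icc (0:ℝ) 1)))) :=
    Submodule.isClosed_topologicalClosure _
  have hcl2 : IsClosed (muntzSpace (Set.range Λ) p δ 1 : Set (Lp ℝ p (volume.restrict (Set.Icc δ 1)))) :=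
    Submodule.isClosed_topologicalClosure _
  have : CompleteSpace (muntzSpace (Set.range Λ) p 0 1) := hcl1.completeSpace_coe
  have : CompleteSpace (muntzSpace (Set.range Λ) p δ 1) := hcl2.completeSpace_coe
  set S : ↥(muntzSpace (Set.range Λ) p 0 1) →L[ℝ] Lp ℝ p (volume.restrict (Set.Icc δ 1)) :=
    R.comp (muntzSpace (Set.range Λ) p 0 1).subtypeL with hS
  have hanti : AntilipschitzWith (K : ℝ≥0) S := by
    refine ContinuousLinearMap.antilipschitz_of_bound S fun f => ?_
    have := hlow f f.2
    simpa [hS] using this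
  have hSclosed : IsClosed (Set.range S) := hanti.isClosed_range S.uniformContinuous
  have hsurj : ∀ g ∈ muntzSpace (Set.range Λ) p δ 1, ∃ f, S f = g := by
    have : muntzSpace (Set.range Λ) p δ 1 ≤ LinearMap.range S.toLinearMap := by
      refine Submodule.topologicalClosure_minimal _ (Submodule.span_le.2 ?_) ?_
      · rintro g ⟨lam, hlam, hg⟩
        obtain ⟨k, rfl⟩ := hlam
        have hm := mz_memLp (fun t : ℝ => t ^ Λ k) (Real.continuous_rpow_const (hpos k).le) p 0 1
        have hmem : hm.toLp _ ∈ muntzSpace (Set.range Λ) p 0 1 :=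
          Submodule.le_topologicalClosure _ (Submodule.subset_span ⟨Λ k, ⟨k, rfl⟩, hm.coeFn_toLp⟩)
        refine ⟨⟨hm.toLp _, hmem⟩, ?_⟩
        refine Lp.ext ?_
        exact ((hRc _).trans ((Measure.absolutelyContinuous_of_le hle).ae_le hm.coeFn_toLp)).trans
          hg.symm
      · exact hSclosed
    exact this
  set T : ↥(muntzSpace (Set.range Λ) p 0 1) →L[ℝ] ↥(muntzSpace (Set.range Λ) p δ 1) :=
    S.codRestrict _ (fun f => hmaps f f.2) with hT
  have hinj : LinearMap.ker T.toLinearMap = ⊥ := by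
    refine LinearMap.ker_eq_bot.2 fun f g hfg => hanti.injective ?_
    exact congrArg Subtype.val hfg
  have hran : LinearMap.range T.toLinearMap = ⊤ := by
    refine LinearMap.range_eq_top.2 fun g => ?_
    obtain ⟨f, hf⟩ := hsurj g g.2
    exact ⟨f, Subtype.ext hf⟩
  exact ⟨ContinuousLinearEquiv.ofBijective T hinj hran, fun f => hRc f⟩
end

section
/- Let Λ = (λ_k)_{k∈ℕ} be a strictly increasing sequence of positive real numbers satisfying the gap condition and the Müntz condition, and let 1 ≤ p < ∞. Then for every β ≥ 0, α > 0 and every finite subset Ξ of (0,∞), the Müntz spaces M_{Λ,p}([0,1]) and M_{Ξ ∪ (αΛ+β),p}([0,1]) are linearly topologically isomorphic, where αΛ+β = { αλ + β : λ ∈ Λ }. -/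
open MeasureTheory Filter
open scoped ENNReal NNReal Topology

/-! ### Part A: the quadratic form and its contraction -/

namespace Muntz

/-- The Gram (Cauchy) quadratic form of the monomials in `L_2`. -/
noncomputable def quadForm (s : Finset ℕ) (ν : ℕ → ℝ) (a : ℕ → ℝ) : ℝ :=
  ∑ i ∈ s, ∑ j ∈ s, a i * a j / (ν i + ν j + 1)

lemma quadForm_step (s : Finset ℕ) (ν : ℕ → ℝ) (hν : ∀ i, 0 < ν i) (a : ℕ → ℝ) (μ : ℝ)
    (hμ : 0 < μ) :
    quadForm s ν (fun i => a i * ((ν i - μ) / (ν i + μ + 1))) ≤ quadForm s ν a := by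
  have key : quadForm s ν a = quadForm s ν (fun i => a i * ((ν i - μ) / (ν i + μ + 1)))
      + (2 * μ + 1) * (∑ i ∈ s, a i / (ν i + μ + 1)) ^ 2 := by
    unfold quadForm
    rw [sq, Finset.sum_mul_sum, Finset.mul_sum, ← Finset.sum_add_distrib]
    refine Finset.sum_congr rfl fun i _ => ?_
    rw [Finset.mul_sum, ← Finset.sum_add_distrib]
    refine Finset.sum_congr rfl fun j _ => ?_
    have h1 : ν i + ν j + 1 ≠ 0 := by have := hν i; have := hν j; positivity
    have h2 : ν i + μ + 1 ≠ 0 := by have := hν i; positivity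
    have h3 : ν j + μ + 1 ≠ 0 := by have := hν j; positivity
    field_simp
    ring
  rw [key]
  have : 0 ≤ (2 * μ + 1) * (∑ i ∈ s, a i / (ν i + μ + 1)) ^ 2 := by positivity
  linarith

lemma quadForm_iter (s T : Finset ℕ) (ν : ℕ → ℝ) (hν : ∀ i, 0 < ν i) (a : ℕ → ℝ) :
    quadForm s ν (fun i => a i * ∏ m ∈ T, ((ν i - ν m) / (ν i + ν m + 1))) ≤ quadForm s ν a := by
  induction T using Finset.induction_on with
  | empty => simp
  | insert m T hm ih =>
    refine le_trans (le_of_eq ?_) ((quadForm_step s ν hν _ (ν m) (hν m)).trans ih)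
    congr 1
    ext i
    rw [Finset.prod_insert hm]
    ring

lemma coeff_le_quadForm (s : Finset ℕ) (ν : ℕ → ℝ) (hν : ∀ i, 0 < ν i) (a : ℕ → ℝ) (k : ℕ)
    (hk : k ∈ s) :
    (a k * ∏ m ∈ s.erase k, ((ν k - ν m) / (ν k + ν m + 1))) ^ 2 / (2 * ν k + 1)
      ≤ quadForm s ν a := by
  refine le_trans (le_of_eq ?_) (quadForm_iter s (s.erase k) ν hν a)
  have hz : ∀ i ∈ s, i ≠ k → ∏ m ∈ s.erase k, ((ν i - ν m) / (ν i + ν m + 1)) = 0 := by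
    intro i hi hik
    refine Finset.prod_eq_zero (i := i) (by simp [hi, hik]) (by simp)
  unfold quadForm
  rw [Finset.sum_eq_single k, Finset.sum_eq_single k]
  · rw [sq]; congr 1; ring
  · intro j hj hjk; simp only [hz j hj hjk]; simp
  · intro h; exact absurd hk h
  · intro i hi hik
    simp only [hz i hi hik]; simp
  · intro h; exact absurd hk h

/-! ### Part B: the product estimate -/

lemma sum_range_log_le (D : ℝ) (hD : 0 < D) (n : ℕ) :
    ∑ i ∈ Finset.range n, max 0 (Real.log (D / ((i : ℝ) + 1))) ≤ D := by
  induction n with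
  | zero => simpa using hD.le
  | succ n ih =>
    by_cases h : ((n : ℝ) + 1) ≤ D
    · have : ∑ i ∈ Finset.range (n + 1), max 0 (Real.log (D / ((i : ℝ) + 1)))
          = Real.log (D ^ (n + 1) / (n + 1).factorial) := by
        have h1 : ∀ i ∈ Finset.range (n + 1), max 0 (Real.log (D / ((i : ℝ) + 1)))
            = Real.log (D / ((i : ℝ) + 1)) := by
          intro i hi
          apply max_eq_right
          apply Real.log_nonneg
          rw [le_div_iff₀ (by positivity)]
          have : (i : ℝ) ≤ n := by
            have := Finset.mem_range.1 hi
            exact_mod_cast Nat.lt_succ_iff.1 this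
          linarith
        rw [Finset.sum_congr rfl h1, ← Real.log_prod]
        · congr 1
          rw [Finset.prod_div_distrib, Finset.prod_const, Finset.card_range,
            ← Finset.prod_range_add_one_eq_factorial]
          push_cast
          rfl
        · intro i _; positivity
      rw [this, Real.log_le_iff_le_exp (by positivity)]
      exact Real.pow_div_factorial_le_exp D hD.le (n + 1)
    · rw [Finset.sum_range_succ, max_eq_left, add_zero]
      · exact ih
      · apply Real.log_nonpos (by positivity)
        rw [div_le_one (by positivity)]
        linarith

lemma sum_log_le (D : ℝ) (hD : 0 < D) (F : Finset ℕ) :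
    ∑ i ∈ F, max 0 (Real.log (D / ((i : ℝ) + 1))) ≤ D := by
  obtain ⟨n, hn⟩ := F.exists_nat_subset_range
  exact (Finset.sum_le_sum_of_subset_of_nonneg hn (fun _ _ _ => le_max_left _ _)).trans
    (sum_range_log_le D hD n)

lemma sum_log_abs_le (D : ℝ) (hD : 0 < D) (k : ℕ) (F : Finset ℕ) (hk : k ∉ F) :
    ∑ j ∈ F, max 0 (Real.log (D / |(j : ℝ) - k|)) ≤ 2 * D := by
  rw [← Finset.sum_filter_add_sum_filter_not F (fun j => j < k), two_mul]
  refine add_le_add ?_ ?_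
  · have : ∑ j ∈ F with j < k, max 0 (Real.log (D / |(j : ℝ) - k|))
        = ∑ i ∈ (F.filter (fun j => j < k)).image (fun j => k - 1 - j),
          max 0 (Real.log (D / ((i : ℝ) + 1))) := by
      rw [Finset.sum_image]
      · refine Finset.sum_congr rfl fun j hj => ?_
        have hjk : j < k := (Finset.mem_filter.1 hj).2
        have : ((k - 1 - j : ℕ) : ℝ) + 1 = |(j : ℝ) - k| := by
          have h2 : (k - 1 - j) + 1 + j = k := by omega
          have h3 : ((k - 1 - j : ℕ) : ℝ) + 1 + j = k := by exact_mod_cast h2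
          rw [abs_of_nonpos]
          · linarith
          · have : (j : ℝ) < k := by exact_mod_cast hjk
            linarith
        rw [this]
      · intro a ha b hb hab
        simp at ha hb hab
        omega
    rw [this]
    exact sum_log_le D hD _
  · have : ∑ j ∈ F with ¬ j < k, max 0 (Real.log (D / |(j : ℝ) - k|))
        = ∑ i ∈ (F.filter (fun j => ¬ j < k)).image (fun j => j - k - 1),
          max 0 (Real.log (D / ((i : ℝ) + 1))) := by
      have hne : ∀ j ∈ F, j ≠ k := fun j hj h => hk (h ▸ hj)
      rw [Finset.sum_image]
      · refine Finset.sum_congr rfl fun j hj => ?_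
        have hjk := (Finset.mem_filter.1 hj).2
        have hjk2 := hne j (Finset.mem_filter.1 hj).1
        have : ((j - k - 1 : ℕ) : ℝ) + 1 = |(j : ℝ) - k| := by
          have h2 : (j - k - 1) + 1 + k = j := by omega
          have h3 : ((j - k - 1 : ℕ) : ℝ) + 1 + k = j := by exact_mod_cast h2
          rw [abs_of_nonneg]
          · linarith
          · have : (k : ℝ) ≤ j := by exact_mod_cast (not_lt.1 hjk)
            linarith
        rw [this]
      · intro a ha b hb hab
        simp at ha hb hab
        have := hne a ha.1
        have := hne b hb.1
        omega
    rw [this]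
    exact sum_log_le D hD _

lemma gap_abs (ν : ℕ → ℝ) (c : ℝ) (hgap : ∀ k, c ≤ ν (k + 1) - ν k) (hc : 0 < c) (j k : ℕ) :
    c * |(j : ℝ) - k| ≤ |ν j - ν k| := by
  have h : ∀ k n : ℕ, c * n ≤ ν (k + n) - ν k := by
    intro k n
    induction n with
    | zero => simp
    | succ n ih =>
      have := hgap (k + n)
      push_cast
      rw [← add_assoc]
      linarith
  rcases le_total j k with hjk | hjk
  · obtain ⟨n, rfl⟩ := Nat.exists_eq_add_of_le hjk
    have := h j n
    rw [abs_sub_comm, abs_sub_comm (ν j)]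
    push_cast
    rw [add_sub_cancel_left, abs_of_nonneg (by positivity)]
    exact this.trans (le_abs_self _)
  · obtain ⟨n, rfl⟩ := Nat.exists_eq_add_of_le hjk
    have := h k n
    push_cast
    rw [add_sub_cancel_left, abs_of_nonneg (by positivity)]
    exact this.trans (le_abs_self _)

lemma factor_le (ν : ℕ → ℝ) (hν : ∀ i, 0 < ν i) (c : ℝ) (hc : 0 < c)
    (hgap : ∀ k, c ≤ ν (k + 1) - ν k) (j k : ℕ) (hjk : j ≠ k) :
    (ν j + ν k + 1) / |ν j - ν k| ≤
      Real.exp (max 0 (Real.log (((3 * ν k + 1) / c) / |(j : ℝ) - k|)) +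
        (4 * ν k + 2) * (1 / ν j)) := by
  have hg := gap_abs ν c hgap hc j k
  have hj := hν j
  have hk := hν k
  have hd : 0 < |(j : ℝ) - k| := by
    rw [abs_pos, sub_ne_zero]; exact_mod_cast hjk
  have hpos : 0 < |ν j - ν k| := lt_of_lt_of_le (by positivity) hg
  rw [Real.exp_add]
  by_cases h : ν j < 2 * ν k
  · have h1 : (ν j + ν k + 1) / |ν j - ν k| ≤ ((3 * ν k + 1) / c) / |(j : ℝ) - k| := by
      rw [div_div]
      exact div_le_div₀ (by positivity) (by linarith) (by positivity) hg
    have h2 : ((3 * ν k + 1) / c) / |(j : ℝ) - k| ≤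
        Real.exp (max 0 (Real.log (((3 * ν k + 1) / c) / |(j : ℝ) - k|))) := by
      rw [← Real.log_le_iff_le_exp (by positivity)]
      exact le_max_right _ _
    have h3 : 1 ≤ Real.exp ((4 * ν k + 2) * (1 / ν j)) := Real.one_le_exp (by positivity)
    exact (h1.trans h2).trans (le_mul_of_one_le_right (Real.exp_pos _).le h3)
  · push Not at h
    have h1 : 1 ≤ Real.exp (max 0 (Real.log (((3 * ν k + 1) / c) / |(j : ℝ) - k|))) :=
      Real.one_le_exp (le_max_left _ _)
    refine le_trans ?_ (le_mul_of_one_le_left (Real.exp_pos _).le h1)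
    have hs : 0 < ν j - ν k := by linarith
    rw [abs_of_pos hs]
    have h4 : (ν j + ν k + 1) / (ν j - ν k) = (2 * ν k + 1) / (ν j - ν k) + 1 := by
      field_simp; ring
    rw [h4]
    refine le_trans ?_ (Real.add_one_le_exp _)
    have : (2 * ν k + 1) / (ν j - ν k) ≤ (4 * ν k + 2) * (1 / ν j) := by
      rw [mul_one_div, div_le_div_iff₀ hs hj]
      nlinarith
    linarith

lemma prod_bound (ν : ℕ → ℝ) (hν : ∀ i, 0 < ν i) (c : ℝ) (hc : 0 < c)
    (hgap : ∀ k, c ≤ ν (k + 1) - ν k) (hsum : Summable fun k => 1 / ν k) :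
    ∃ K : ℝ, 0 ≤ K ∧ ∀ (k : ℕ) (s : Finset ℕ), k ∉ s →
      ∏ j ∈ s, ((ν j + ν k + 1) / |ν j - ν k|) ≤ Real.exp (K * (ν k + 1)) := by
  refine ⟨6 / c + 2 / c + 4 * ∑' k, 1 / ν k, ?_, ?_⟩
  · have : 0 ≤ ∑' k, 1 / ν k := tsum_nonneg fun k => by have := hν k; positivity
    positivity
  · intro k s hk
    have hkp := hν k
    have h0 : 0 ≤ ∑' k, 1 / ν k := tsum_nonneg fun k => by have := hν k; positivity
    calc ∏ j ∈ s, ((ν j + ν k + 1) / |ν j - ν k|)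
        ≤ ∏ j ∈ s, Real.exp (max 0 (Real.log (((3 * ν k + 1) / c) / |(j : ℝ) - k|)) +
          (4 * ν k + 2) * (1 / ν j)) := by
          refine Finset.prod_le_prod (fun j _ => ?_) (fun j hj => ?_)
          · have := hν j; positivity
          · exact factor_le ν hν c hc hgap j k (fun h => hk (h ▸ hj))
      _ = Real.exp (∑ j ∈ s, max 0 (Real.log (((3 * ν k + 1) / c) / |(j : ℝ) - k|)) +
          (4 * ν k + 2) * ∑ j ∈ s, (1 / ν j)) := by
          rw [← Real.exp_sum, Finset.sum_add_distrib, Finset.mul_sum]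
      _ ≤ _ := by
          apply Real.exp_le_exp.2
          have h1 := sum_log_abs_le ((3 * ν k + 1) / c) (by positivity) k s hk
          have h2 : ∑ j ∈ s, (1 / ν j) ≤ ∑' k, 1 / ν k :=
            hsum.sum_le_tsum s (fun j _ => by have := hν j; positivity)
          have h3 : (4 * ν k + 2) * ∑ j ∈ s, (1 / ν j) ≤ (4 * ν k + 2) * ∑' k, 1 / ν k := by
            gcongr
          have h4 : 2 * ((3 * ν k + 1) / c) = 6 / c * ν k + 2 / c := by ring
          have h5 : 0 ≤ 6 / c := by positivity
          have h6 : 0 ≤ 2 / c * ν k := by positivity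
          nlinarith

/-- The abstract coefficient estimate. -/
lemma coeff_bound_quad (ν : ℕ → ℝ) (hν : ∀ i, 0 < ν i) (c : ℝ) (hc : 0 < c)
    (hgap : ∀ k, c ≤ ν (k + 1) - ν k) (hsum : Summable fun k => 1 / ν k) :
    ∃ K : ℝ, 0 ≤ K ∧ ∀ (s : Finset ℕ) (a : ℕ → ℝ) (k : ℕ), k ∈ s →
      |a k| ≤ Real.exp (K * (ν k + 1)) * Real.sqrt (quadForm s ν a) := by
  obtain ⟨K, hK, hb⟩ := prod_bound ν hν c hc hgap hsum
  refine ⟨K + 1, by positivity, fun s a k hk => ?_⟩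
  have hkp := hν k
  set P := ∏ m ∈ s.erase k, ((ν k - ν m) / (ν k + ν m + 1)) with hP
  set R := ∏ j ∈ s.erase k, ((ν j + ν k + 1) / |ν j - ν k|) with hR
  have hPR : |P| * R = 1 := by
    rw [hP, hR, Finset.abs_prod, ← Finset.prod_mul_distrib]
    refine Finset.prod_eq_one fun j hj => ?_
    have hjk : j ≠ k := (Finset.mem_erase.1 hj).1
    have hj' := hν j
    have hg := gap_abs ν c hgap hc j k
    have hd : 0 < |(j : ℝ) - k| := by
      rw [abs_pos, sub_ne_zero]; exact_mod_cast hjk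
    have hpos : 0 < |ν j - ν k| := lt_of_lt_of_le (by positivity) hg
    rw [abs_div, abs_sub_comm (ν k), abs_of_pos (show 0 < ν k + ν j + 1 by positivity)]
    field_simp
    ring
  have hR1 : R ≤ Real.exp (K * (ν k + 1)) := hb k _ (Finset.notMem_erase k s)
  have hR0 : 0 ≤ R := Finset.prod_nonneg fun j _ => by have := hν j; positivity
  have h1 := coeff_le_quadForm s ν hν a k hk
  rw [← hP, div_le_iff₀ (by positivity)] at h1
  have hQ : 0 ≤ quadForm s ν a := by
    by_contra hcon
    push Not at hcon
    nlinarith [sq_nonneg (a k * P)]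
  have h2 : |a k| * |P| ≤ Real.sqrt (quadForm s ν a) * Real.sqrt (2 * ν k + 1) := by
    rw [← abs_mul, ← Real.sqrt_mul hQ]
    exact Real.abs_le_sqrt h1
  have h3 : Real.sqrt (2 * ν k + 1) ≤ Real.exp (ν k + 1) := by
    rw [Real.sqrt_le_left (Real.exp_pos _).le, ← Real.exp_nat_mul]
    have := Real.add_one_le_exp ((2 : ℕ) * (ν k + 1))
    push_cast at this ⊢
    linarith
  calc |a k| = |a k| * |P| * R := by rw [mul_assoc, hPR, mul_one]
    _ ≤ (Real.sqrt (quadForm s ν a) * Real.exp (ν k + 1)) * Real.exp (K * (ν k + 1)) := by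
        refine mul_le_mul (h2.trans ?_) hR1 hR0 (by positivity)
        gcongr
    _ = _ := by
        rw [mul_assoc, ← Real.exp_add, mul_comm]
        ring_nf

end Muntz

/-! ### Part C: coefficient estimate in `L_1`, comparison of norms -/

namespace Muntz

lemma coeff_bound_L1 (lam : ℕ → ℝ) (hpos : ∀ i, 0 < lam i) (c : ℝ) (hc : 0 < c)
    (hgap : ∀ k, c ≤ lam (k + 1) - lam k) (hsum : Summable fun k => 1 / lam k) :
    ∃ K : ℝ, 0 ≤ K ∧ ∀ (s : Finset ℕ) (a : ℕ → ℝ) (k : ℕ), k ∈ s →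
      |a k| ≤ Real.exp (K * (lam k + 1)) * ∫ t in (0:ℝ)..1, |∑ i ∈ s, a i * t ^ lam i| := by
  have hsum' : Summable fun k => 1 / (lam k + 1) := by
    refine hsum.of_nonneg_of_le (fun k => ?_) (fun k => ?_)
    · have := hpos k; positivity
    · have := hpos k
      exact one_div_le_one_div_of_le this (by linarith)
  obtain ⟨K, hK, hb⟩ := coeff_bound_quad (fun k => lam k + 1) (fun k => by have := hpos k; positivity)
    c hc (fun k => by have := hgap k; simpa using this) hsum'
  refine ⟨2 * K + 1, by positivity, fun s a k hk => ?_⟩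
  have hkp := hpos k
  set I := ∫ t in (0:ℝ)..1, |∑ i ∈ s, a i * t ^ lam i| with hI
  set b : ℕ → ℝ := fun i => a i / (lam i + 1) with hbdef
  have hcont : Continuous fun t : ℝ => ∑ i ∈ s, a i * t ^ lam i := by
    refine continuous_finsetSum _ fun i _ => continuous_const.mul ?_
    exact Real.continuous_rpow_const (hpos i).le
  have hI0 : 0 ≤ I := intervalIntegral.integral_nonneg (by norm_num) fun t _ => abs_nonneg _
  have hF : ∀ x : ℝ, ∑ i ∈ s, b i * x ^ (lam i + 1) = ∫ t in (0:ℝ)..x, ∑ i ∈ s, a i * t ^ lam i := by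
    intro x
    rw [intervalIntegral.integral_finsetSum]
    · refine Finset.sum_congr rfl fun i _ => ?_
      have := hpos i
      rw [intervalIntegral.integral_const_mul, integral_rpow (Or.inl (by linarith)),
        Real.zero_rpow (by positivity), hbdef]
      simp only
      ring
    · intro i _
      exact (continuous_const.mul (Real.continuous_rpow_const (hpos i).le)).intervalIntegrable _ _
  have hFle : ∀ x ∈ Set.Icc (0:ℝ) 1, |∑ i ∈ s, b i * x ^ (lam i + 1)| ≤ I := by
    intro x hx
    rw [hF x]
    refine (intervalIntegral.abs_integral_le_integral_abs hx.1).trans ?_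
    refine intervalIntegral.integral_mono_interval le_rfl hx.1 hx.2 ?_ ?_
    · exact Filter.Eventually.of_forall fun t => abs_nonneg _
    · exact hcont.abs.intervalIntegrable _ _
  have hQ : quadForm s (fun k => lam k + 1) b
      = ∫ x in (0:ℝ)..1, (∑ i ∈ s, b i * x ^ (lam i + 1)) ^ 2 := by
    have h1 : ∫ x in (0:ℝ)..1, (∑ i ∈ s, b i * x ^ (lam i + 1)) ^ 2
        = ∫ x in (0:ℝ)..1, ∑ i ∈ s, ∑ j ∈ s, b i * b j * x ^ ((lam i + 1) + (lam j + 1)) := by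
      refine intervalIntegral.integral_congr fun x hx => ?_
      rw [Set.uIcc_of_le (by norm_num)] at hx
      beta_reduce
      rw [sq, Finset.sum_mul_sum]
      refine Finset.sum_congr rfl fun i _ => Finset.sum_congr rfl fun j _ => ?_
      have := hpos i; have := hpos j
      rw [Real.rpow_add_of_nonneg (y := lam i + 1) (z := lam j + 1) hx.1 (by positivity)
        (by positivity)]
      ring
    have hii : ∀ i j, IntervalIntegrable
        (fun x : ℝ => b i * b j * x ^ ((lam i + 1) + (lam j + 1))) volume 0 1 := by
      intro i j
      have := hpos i; have := hpos j
      exact (continuous_const.mul (Real.continuous_rpow_const (by positivity))).intervalIntegrable _ _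
    rw [h1, intervalIntegral.integral_finsetSum]
    · unfold quadForm
      refine Finset.sum_congr rfl fun i _ => ?_
      rw [intervalIntegral.integral_finsetSum]
      · refine Finset.sum_congr rfl fun j _ => ?_
        have := hpos i; have := hpos j
        rw [intervalIntegral.integral_const_mul, integral_rpow (Or.inl (by linarith)),
          Real.zero_rpow (by positivity), Real.one_rpow]
        ring
      · intro j _; exact hii i j
    · intro i _
      refine Continuous.intervalIntegrable (continuous_finsetSum _ fun j _ => ?_) _ _
      have := hpos i; have := hpos j
      exact continuous_const.mul (Real.continuous_rpow_const (by positivity))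
  have hQle : quadForm s (fun k => lam k + 1) b ≤ I ^ 2 := by
    rw [hQ]
    have hc2 : Continuous fun x : ℝ => (∑ i ∈ s, b i * x ^ (lam i + 1)) ^ 2 := by
      refine Continuous.pow (continuous_finsetSum _ fun i _ => continuous_const.mul ?_) 2
      have := hpos i
      exact Real.continuous_rpow_const (by positivity)
    calc ∫ x in (0:ℝ)..1, (∑ i ∈ s, b i * x ^ (lam i + 1)) ^ 2
        ≤ ∫ x in (0:ℝ)..1, I ^ 2 := by
          refine intervalIntegral.integral_mono_on (by norm_num) (hc2.intervalIntegrable _ _)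
            (by simp) fun x hx => ?_
          exact sq_le_sq' (by linarith [neg_le_of_abs_le (hFle x hx)]) (le_of_abs_le (hFle x hx))
      _ = I ^ 2 := by simp
  have h1 := hb s b k hk
  have h2 : Real.sqrt (quadForm s (fun k => lam k + 1) b) ≤ I := by
    rw [Real.sqrt_le_left hI0]; exact hQle
  have h3 : |a k| = (lam k + 1) * |b k| := by
    rw [hbdef]
    simp only
    rw [abs_div, abs_of_pos (show 0 < lam k + 1 by positivity)]
    field_simp
  have h4 : lam k + 1 ≤ Real.exp (lam k + 1) := by
    have := Real.add_one_le_exp (lam k + 1); linarith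
  calc |a k| = (lam k + 1) * |b k| := h3
    _ ≤ Real.exp (lam k + 1) * (Real.exp (K * (lam k + 1 + 1)) * I) := by
        refine mul_le_mul h4 (h1.trans ?_) (abs_nonneg _) (Real.exp_pos _).le
        gcongr
    _ = Real.exp (lam k + 1 + K * (lam k + 1 + 1)) * I := by rw [← mul_assoc, ← Real.exp_add]
    _ ≤ _ := by
        gcongr
        nlinarith

/-- The measure on the unit interval. -/
noncomputable abbrev unitMeas : Measure ℝ := volume.restrict (Set.Icc (0:ℝ) 1)

instance : IsProbabilityMeasure unitMeas := ⟨by simp [unitMeas]⟩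

lemma memLp_rpow (p : ℝ≥0∞) (l : ℝ) (hl : 0 ≤ l) : MemLp (fun t : ℝ => t ^ l) p unitMeas := by
  refine MemLp.of_bound (Real.continuous_rpow_const hl).aestronglyMeasurable 1 ?_
  refine (ae_restrict_iff' measurableSet_Icc).2 (Filter.Eventually.of_forall fun t ht => ?_)
  rw [Real.norm_of_nonneg (Real.rpow_nonneg ht.1 _)]
  exact Real.rpow_le_one ht.1 ht.2 hl

lemma memLp_sum (p : ℝ≥0∞) (lam : ℕ → ℝ) (hpos : ∀ i, 0 < lam i) (s : Finset ℕ) (a : ℕ → ℝ) :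
    MemLp (fun t : ℝ => ∑ i ∈ s, a i * t ^ lam i) p unitMeas :=
  memLp_finsetSum s fun i _ => (memLp_rpow p (lam i) (hpos i).le).const_mul (a i)

lemma coeff_bound_Lp (lam : ℕ → ℝ) (hpos : ∀ i, 0 < lam i) (c : ℝ) (hc : 0 < c)
    (hgap : ∀ k, c ≤ lam (k + 1) - lam k) (hsum : Summable fun k => 1 / lam k)
    (p : ℝ≥0∞) (hp : 1 ≤ p) :
    ∃ K : ℝ, 0 ≤ K ∧ ∀ (s : Finset ℕ) (a : ℕ → ℝ) (k : ℕ), k ∈ s →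
      |a k| ≤ Real.exp (K * (lam k + 1)) *
        (eLpNorm (fun t : ℝ => ∑ i ∈ s, a i * t ^ lam i) p unitMeas).toReal := by
  obtain ⟨K, hK, hb⟩ := coeff_bound_L1 lam hpos c hc hgap hsum
  refine ⟨K, hK, fun s a k hk => (hb s a k hk).trans ?_⟩
  gcongr
  have hm := memLp_sum p lam hpos s a
  have h1 : ∫ t in (0:ℝ)..1, |∑ i ∈ s, a i * t ^ lam i|
      = (eLpNorm (fun t : ℝ => ∑ i ∈ s, a i * t ^ lam i) 1 unitMeas).toReal := by
    rw [intervalIntegral.integral_of_le (by norm_num), ← integral_Icc_eq_integral_Ioc,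
      eLpNorm_one_eq_lintegral_enorm, ← integral_norm_eq_lintegral_enorm hm.1]
    simp [Real.norm_eq_abs]
  rw [h1]
  exact ENNReal.toReal_mono hm.2.ne (eLpNorm_le_eLpNorm_of_exponent_le hp hm.1)

lemma upper_part (lam : ℕ → ℝ) (α β : ℝ) (hα : 0 < α) (p : ℝ≥0∞) (hp : 1 ≤ p) (hp' : p ≠ ∞)
    (r : ℝ) (hr : 0 < r) (hr1 : r < 1) :
    ∃ C : ℝ≥0, ∀ (s : Finset ℕ) (a : ℕ → ℝ),
      eLpNorm (fun t : ℝ => ∑ i ∈ s, a i * t ^ lam i) p (volume.restrict (Set.Icc r 1)) ≤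
        C * eLpNorm (fun t : ℝ => ∑ i ∈ s, a i * t ^ (α * lam i + β)) p unitMeas := by
  set q := p.toReal with hq
  have hp0 : p ≠ 0 := (zero_lt_one.trans_le hp).ne'
  have hq0 : 0 < q := ENNReal.toReal_pos hp0 hp'
  set r' := r ^ (1 / α) with hr'
  have hr'0 : 0 < r' := Real.rpow_pos_of_pos hr _
  have hr'1 : r' < 1 := Real.rpow_lt_one hr.le hr1 (by positivity)
  have hne : ∀ x ∈ Set.Icc r' 1, x ≠ 0 := fun x hx => (hr'0.trans_le hx.1).ne'
  obtain ⟨B, hB⟩ := isCompact_Icc.exists_bound_of_continuousOn (s := Set.Icc r' 1)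
    (f := fun x : ℝ => x ^ (-β)) (fun x hx =>
      (Real.continuousAt_rpow_const x (-β) (Or.inl (hne x hx))).continuousWithinAt)
  obtain ⟨M, hM⟩ := isCompact_Icc.exists_bound_of_continuousOn (s := Set.Icc r' 1)
    (f := fun x : ℝ => α * x ^ (α - 1)) (fun x hx =>
      ((Real.continuousAt_rpow_const x (α - 1) (Or.inl (hne x hx))).const_mul α).continuousWithinAt)
  have hB0 : 0 ≤ B := (norm_nonneg _).trans (hB r' ⟨le_rfl, hr'1.le⟩)
  have hM0 : 0 ≤ M := (norm_nonneg _).trans (hM r' ⟨le_rfl, hr'1.le⟩)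
  refine ⟨(M.toNNReal * B.toNNReal ^ q) ^ (1 / q), fun s a => ?_⟩
  set f := fun t : ℝ => ∑ i ∈ s, a i * t ^ lam i with hf
  set g := fun t : ℝ => ∑ i ∈ s, a i * t ^ (α * lam i + β) with hg
  have hfg : ∀ x ∈ Set.Icc r' 1, f (x ^ α) = x ^ (-β) * g x := by
    intro x hx
    have hx0 : 0 < x := hr'0.trans_le hx.1
    rw [hf, hg]
    simp only
    rw [Finset.mul_sum]
    refine Finset.sum_congr rfl fun i _ => ?_
    rw [← Real.rpow_mul hx0.le, mul_left_comm, ← Real.rpow_add hx0]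
    congr 2
    ring
  have hsub : Set.Icc r 1 ⊆ (fun x : ℝ => x ^ α) '' Set.Icc r' 1 := by
    intro t ht
    have ht0 : 0 < t := hr.trans_le ht.1
    refine ⟨t ^ (1 / α), ⟨Real.rpow_le_rpow hr.le ht.1 (by positivity),
      Real.rpow_le_one ht0.le ht.2 (by positivity)⟩, ?_⟩
    simp only
    rw [← Real.rpow_mul ht0.le, one_div_mul_cancel hα.ne', Real.rpow_one]
  have hinj : Set.InjOn (fun x : ℝ => x ^ α) (Set.Icc r' 1) := by
    intro x hx y hy hxy
    exact (Real.rpow_left_inj (hr'0.trans_le hx.1).le (hr'0.trans_le hy.1).le hα.ne').1 hxy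
  have hcv : ∫⁻ t in Set.Icc r 1, ‖f t‖ₑ ^ q ≤
      ((M.toNNReal * B.toNNReal ^ q : ℝ≥0) : ℝ≥0∞) * ∫⁻ t in Set.Icc 0 1, ‖g t‖ₑ ^ q := by
    calc ∫⁻ t in Set.Icc r 1, ‖f t‖ₑ ^ q
        ≤ ∫⁻ t in (fun x : ℝ => x ^ α) '' Set.Icc r' 1, ‖f t‖ₑ ^ q := lintegral_mono_set hsub
      _ = ∫⁻ x in Set.Icc r' 1, ENNReal.ofReal |α * x ^ (α - 1)| * ‖f (x ^ α)‖ₑ ^ q := by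
          refine lintegral_image_eq_lintegral_abs_deriv_mul measurableSet_Icc (fun x hx => ?_) hinj _
          exact (Real.hasDerivAt_rpow_const (Or.inl (hne x hx))).hasDerivWithinAt
      _ ≤ ∫⁻ x in Set.Icc r' 1, ((M.toNNReal * B.toNNReal ^ q : ℝ≥0) : ℝ≥0∞) * ‖g x‖ₑ ^ q := by
          refine setLIntegral_mono' measurableSet_Icc fun x hx => ?_
          have h1 : ENNReal.ofReal |α * x ^ (α - 1)| ≤ (M.toNNReal : ℝ≥0∞) :=
            ENNReal.ofReal_le_ofReal (hM x hx)
          have h2 : ‖x ^ (-β)‖ₑ ≤ (B.toNNReal : ℝ≥0∞) := by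
            rw [← ofReal_norm]; exact ENNReal.ofReal_le_ofReal (hB x hx)
          rw [hfg x hx, enorm_mul, ENNReal.mul_rpow_of_nonneg _ _ hq0.le, ENNReal.coe_mul,
            ENNReal.coe_rpow_of_nonneg _ hq0.le, mul_assoc]
          gcongr
      _ = ((M.toNNReal * B.toNNReal ^ q : ℝ≥0) : ℝ≥0∞) * ∫⁻ x in Set.Icc r' 1, ‖g x‖ₑ ^ q := by
          rw [lintegral_const_mul' _ _ ENNReal.coe_ne_top]
      _ ≤ _ := by
          gcongr
  rw [eLpNorm_eq_lintegral_rpow_enorm_toReal hp0 hp', eLpNorm_eq_lintegral_rpow_enorm_toReal hp0 hp', ← hq]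
  rw [ENNReal.coe_rpow_of_nonneg _ (by positivity), ← ENNReal.mul_rpow_of_nonneg _ _ (by positivity)]
  gcongr

lemma norm_compare (lam : ℕ → ℝ) (hpos : ∀ i, 0 < lam i) (α β : ℝ) (hα : 0 < α)
    (hpos' : ∀ i, 0 < α * lam i + β) (c : ℝ) (hc : 0 < c)
    (hgap : ∀ k, c ≤ lam (k + 1) - lam k) (hsum : Summable fun k => 1 / lam k)
    (hsum' : Summable fun k => 1 / (α * lam k + β))
    (p : ℝ≥0∞) (hp : 1 ≤ p) (hp' : p ≠ ∞) :
    ∃ C : ℝ≥0, ∀ (s : Finset ℕ) (a : ℕ → ℝ),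
      eLpNorm (fun t : ℝ => ∑ i ∈ s, a i * t ^ lam i) p unitMeas ≤
        C * eLpNorm (fun t : ℝ => ∑ i ∈ s, a i * t ^ (α * lam i + β)) p unitMeas := by
  obtain ⟨K, hK, hb⟩ := coeff_bound_Lp (fun k => α * lam k + β) hpos' (α * c) (by positivity)
    (fun k => by have := mul_le_mul_of_nonneg_left (hgap k) hα.le; linarith) hsum' p hp
  set r := Real.exp (-(K * α + 1)) with hr
  have hr0 : 0 < r := Real.exp_pos _
  have hr1 : r < 1 := Real.exp_lt_one_iff.2 (by have := mul_nonneg hK hα.le; linarith)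
  obtain ⟨C, hC⟩ := upper_part lam α β hα p hp hp' r hr0 hr1
  set D := Real.exp (K * (β + 1)) * ∑' k, 1 / lam k with hD
  have hts : 0 ≤ ∑' k, 1 / lam k := tsum_nonneg fun k => by have := hpos k; positivity
  refine ⟨D.toNNReal + C, fun s a => ?_⟩
  set f := fun t : ℝ => ∑ i ∈ s, a i * t ^ lam i with hf
  set g := fun t : ℝ => ∑ i ∈ s, a i * t ^ (α * lam i + β) with hg
  have hfm : MemLp f p unitMeas := memLp_sum p lam hpos s a
  have hgm : MemLp g p unitMeas := memLp_sum p _ hpos' s a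
  set N := (eLpNorm g p unitMeas).toReal with hN
  have hN0 : 0 ≤ N := ENNReal.toReal_nonneg
  have hlow : ∀ t ∈ Set.Icc 0 r, ‖f t‖ ≤ D * N := by
    intro t ht
    calc ‖f t‖ ≤ ∑ i ∈ s, ‖a i * t ^ lam i‖ := norm_sum_le _ _
      _ ≤ ∑ i ∈ s, (Real.exp (K * (β + 1)) * N) * (1 / lam i) := by
          refine Finset.sum_le_sum fun i hi => ?_
          have hi0 := hpos i
          rw [norm_mul, Real.norm_eq_abs, Real.norm_of_nonneg (Real.rpow_nonneg ht.1 _)]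
          have h1 := hb s a i hi
          have h2 : t ^ lam i ≤ Real.exp (-(K * α + 1) * lam i) := by
            rw [Real.exp_mul]
            exact Real.rpow_le_rpow ht.1 ht.2 hi0.le
          have h3 : Real.exp (-lam i) ≤ 1 / lam i := by
            rw [Real.exp_neg, one_div]
            apply inv_anti₀ hi0
            have := Real.add_one_le_exp (lam i); linarith
          calc |a i| * t ^ lam i
              ≤ (Real.exp (K * (α * lam i + β + 1)) * N) * Real.exp (-(K * α + 1) * lam i) := by
                exact mul_le_mul h1 h2 (Real.rpow_nonneg ht.1 _) (by positivity)
            _ = (Real.exp (K * (β + 1)) * N) * Real.exp (-lam i) := by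
                rw [mul_right_comm, ← Real.exp_add, mul_right_comm, ← Real.exp_add]
                ring_nf
            _ ≤ _ := by gcongr
      _ = (Real.exp (K * (β + 1)) * N) * ∑ i ∈ s, (1 / lam i) := by rw [Finset.mul_sum]
      _ ≤ (Real.exp (K * (β + 1)) * N) * ∑' i, (1 / lam i) := by
          gcongr
          exact hsum.sum_le_tsum s (fun j _ => by have := hpos j; positivity)
      _ = D * N := by rw [hD]; ring
  have hsplit : f = (Set.Iio r).indicator f + (Set.Ici r).indicator f := by
    rw [← Set.compl_Iio, Set.indicator_self_add_compl]
  have h1 : eLpNorm ((Set.Iio r).indicator f) p unitMeas ≤ ENNReal.ofReal (D * N) := by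
    have := eLpNorm_le_of_ae_bound (μ := unitMeas) (p := p) (f := (Set.Iio r).indicator f)
      (C := D * N) ?_
    · simpa using this
    · refine (ae_restrict_iff' measurableSet_Icc).2 (Filter.Eventually.of_forall fun t ht => ?_)
      by_cases htr : t ∈ Set.Iio r
      · rw [Set.indicator_of_mem htr]; exact hlow t ⟨ht.1, le_of_lt htr⟩
      · rw [Set.indicator_of_notMem htr]; simp; positivity
  have h2 : eLpNorm ((Set.Ici r).indicator f) p unitMeas ≤ C * eLpNorm g p unitMeas := by
    rw [eLpNorm_indicator_eq_eLpNorm_restrict measurableSet_Ici, unitMeas,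
      Measure.restrict_restrict measurableSet_Ici]
    refine le_trans (eLpNorm_mono_measure _ (Measure.restrict_mono ?_ le_rfl)) (hC s a)
    intro t ht
    exact ⟨ht.1, ht.2.2⟩
  have h3 : ENNReal.ofReal (D * N) = D.toNNReal * eLpNorm g p unitMeas := by
    rw [ENNReal.ofReal_mul (by positivity), hN, ENNReal.ofReal_toReal hgm.2.ne]
    rfl
  calc eLpNorm f p unitMeas
      = eLpNorm ((Set.Iio r).indicator f + (Set.Ici r).indicator f) p unitMeas := by rw [← hsplit]
    _ ≤ _ := eLpNorm_add_le (hfm.1.indicator measurableSet_Iio) (hfm.1.indicator measurableSet_Ici) hp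
    _ ≤ D.toNNReal * eLpNorm g p unitMeas + C * eLpNorm g p unitMeas := by
        rw [← h3]; exact add_le_add h1 h2
    _ = _ := by push_cast; ring

end Muntz

/-! ### Part D: abstract Banach space lemmas -/

namespace Muntz

/-- Two sequences with equivalent norms on finite combinations span isomorphic closed subspaces. -/
lemma closedSpan_equiv {E : Type*} [NormedAddCommGroup E] [NormedSpace ℝ E] [CompleteSpace E]
    (e₁ e₂ : ℕ → E)
    (h₁ : ∃ C : ℝ, ∀ a : ℕ →₀ ℝ, ‖Finsupp.linearCombination ℝ e₁ a‖ ≤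
      C * ‖Finsupp.linearCombination ℝ e₂ a‖)
    (h₂ : ∃ C : ℝ, ∀ a : ℕ →₀ ℝ, ‖Finsupp.linearCombination ℝ e₂ a‖ ≤
      C * ‖Finsupp.linearCombination ℝ e₁ a‖) :
    Nonempty (↥(Submodule.span ℝ (Set.range e₁)).topologicalClosure ≃L[ℝ]
      ↥(Submodule.span ℝ (Set.range e₂)).topologicalClosure) := by
  have hmem : ∀ (e : ℕ → E) (a : ℕ →₀ ℝ), Finsupp.linearCombination ℝ e a ∈
      (Submodule.span ℝ (Set.range e)).topologicalClosure := fun e a =>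
    Submodule.le_topologicalClosure _ (by
      rw [← Finsupp.range_linearCombination]; exact LinearMap.mem_range_self _ _)
  have hdense : ∀ e : ℕ → E, DenseRange
      ((Finsupp.linearCombination ℝ e).codRestrict
        (Submodule.span ℝ (Set.range e)).topologicalClosure (hmem e)) := by
    intro e x
    rw [Metric.mem_closure_iff]
    intro ε hε
    have hx : (x : E) ∈ closure (Submodule.span ℝ (Set.range e) : Set E) := x.2
    obtain ⟨y, hy, hxy⟩ := Metric.mem_closure_iff.1 hx ε hε
    have hy' : y ∈ LinearMap.range (Finsupp.linearCombination ℝ e) := by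
      rw [Finsupp.range_linearCombination]; exact hy
    obtain ⟨a, rfl⟩ := hy'
    exact ⟨_, ⟨a, rfl⟩, hxy⟩
  haveI : ∀ e : ℕ → E, CompleteSpace ↥(Submodule.span ℝ (Set.range e)).topologicalClosure :=
    fun e => (Submodule.isClosed_topologicalClosure _).completeSpace_coe
  exact ⟨LinearEquiv.extend (LinearEquiv.refl ℝ (ℕ →₀ ℝ)) _ _ (hdense e₁) h₂ (hdense e₂) h₁⟩

variable {p : ℝ≥0∞} [Fact (1 ≤ p)]

local notation "lseq" => lp (fun _ : ℕ => ℝ) p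

lemma toReal_pos_of (hp' : p ≠ ∞) : 0 < p.toReal :=
  ENNReal.toReal_pos (zero_lt_one.trans_le Fact.out).ne' hp'

/-- Right and left shifts on `ℓ_p`. -/
lemma exists_shifts (hp' : p ≠ ∞) : ∃ R L : lseq →L[ℝ] lseq, (∀ c, L (R c) = c) ∧
    ∃ (e : lseq) (π : lseq →L[ℝ] ℝ), (∀ c, R (L c) = c - π c • e) ∧ π e = 1 ∧ ∀ c, π (R c) = 0
      ∧ L e = 0 := by
  have hq := toReal_pos_of hp'
  let rf : (ℕ → ℝ) → ℕ → ℝ := fun c n => match n with | 0 => 0 | n + 1 => c n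
  let lf : (ℕ → ℝ) → ℕ → ℝ := fun c n => c (n + 1)
  have hrs : ∀ c : lseq, HasSum (fun n => ‖rf c n‖ ^ p.toReal) (‖c‖ ^ p.toReal) := by
    intro c
    rw [← hasSum_nat_add_iff' 1]
    simp [rf, Real.zero_rpow hq.ne']
    exact lp.hasSum_norm hq c
  have hrm : ∀ c : lseq, Memℓp (rf c) p := fun c => memℓp_gen (hrs c).summable
  have hls : ∀ c : lseq, Summable (fun n => ‖lf c n‖ ^ p.toReal) := fun c =>
    (summable_nat_add_iff 1).2 (lp.hasSum_norm hq c).summable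
  have hlm : ∀ c : lseq, Memℓp (lf c) p := fun c => memℓp_gen (hls c)
  let R : lseq →L[ℝ] lseq := LinearMap.mkContinuous
    { toFun := fun c => ⟨rf c, hrm c⟩
      map_add' := by
        intro x y; ext n
        cases n with
        | zero => exact (add_zero (0 : ℝ)).symm
        | succ n => rfl
      map_smul' := by
        intro x y; ext n; cases n <;> simp [rf] } 1 (by
      intro c
      rw [one_mul]
      refine lp.norm_le_of_tsum_le hq (norm_nonneg _) ?_
      exact (hrs c).tsum_eq.le)
  let L : lseq →L[ℝ] lseq := LinearMap.mkContinuous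
    { toFun := fun c => ⟨lf c, hlm c⟩
      map_add' := by
        intro x y; ext n; rfl
      map_smul' := by
        intro x y; ext n; simp [lf] } 1 (by
      intro c
      rw [one_mul]
      refine lp.norm_le_of_tsum_le hq (norm_nonneg _) ?_
      rw [← (lp.hasSum_norm hq c).tsum_eq, (lp.hasSum_norm hq c).summable.tsum_eq_zero_add]
      exact le_add_of_nonneg_left (by positivity))
  let π : lseq →L[ℝ] ℝ := LinearMap.mkContinuous
    { toFun := fun c => c 0
      map_add' := by intro x y; simp
      map_smul' := by intro x y; simp } 1 (by
      intro c
      rw [one_mul]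
      exact lp.norm_apply_le_norm (zero_lt_one.trans_le Fact.out).ne' c 0)
  have hR : ∀ (c : lseq) n, (R c) (n + 1) = c n := fun _ _ => rfl
  have hR0 : ∀ (c : lseq), (R c) 0 = 0 := fun _ => rfl
  have hL : ∀ (c : lseq) n, (L c) n = c (n + 1) := fun _ _ => rfl
  have hπ : ∀ (c : lseq), π c = c 0 := fun _ => rfl
  refine ⟨R, L, fun c => ?_, lp.single p 0 1, π, fun c => ?_, ?_, fun c => ⟨?_, ?_⟩⟩
  · ext n; rw [hL, hR]
  · ext n
    cases n with
    | zero =>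
      rw [hR0, hπ]
      change (0 : ℝ) = c 0 - c 0 * (lp.single p 0 (1 : ℝ) : lseq) 0
      simp
    | succ n =>
      rw [hR, hL, hπ]
      change c (n + 1) = c (n + 1) - c 0 * (lp.single p 0 (1 : ℝ) : lseq) (n + 1)
      simp
  · rw [hπ]; simp
  · rw [hπ, hR0]
  · ext n; rw [hL]; simp

/-- A Banach space containing a complemented copy of `ℓ_p` is isomorphic to its product with `ℝ`. -/
lemma prod_equiv_of_factor {X : Type*} [NormedAddCommGroup X] [NormedSpace ℝ X]
    (hp' : p ≠ ∞) (A : lseq →L[ℝ] X) (B₀ : X →L[ℝ] lseq)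
    (h : ‖1 - B₀.comp A‖ < 1) : Nonempty ((X × ℝ) ≃L[ℝ] X) := by
  obtain ⟨R, L, hLR, e, π, hRL, hπe, hπ⟩ := exists_shifts hp'
  have hu : IsUnit (B₀.comp A) := by
    have := (Units.oneSub (1 - B₀.comp A) h).isUnit
    simpa using this
  obtain ⟨u, hu⟩ := hu
  let B : X →L[ℝ] lseq := (↑u⁻¹ : lseq →L[ℝ] lseq).comp B₀
  have hBA : ∀ c, B (A c) = c := by
    intro c
    have h1 : (↑u⁻¹ : lseq →L[ℝ] lseq) * (B₀.comp A) = 1 := by rw [← hu]; simp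
    exact congrArg (fun T : lseq →L[ℝ] lseq => T c) h1
  let S : X →L[ℝ] X := ContinuousLinearMap.id ℝ X - A.comp B + A.comp (R.comp B)
  let S' : X →L[ℝ] X := ContinuousLinearMap.id ℝ X - A.comp B + A.comp (L.comp B)
  have hS : ∀ x, S x = x - A (B x) + A (R (B x)) := fun _ => rfl
  have hS' : ∀ x, S' x = x - A (B x) + A (L (B x)) := fun _ => rfl
  refine ⟨ContinuousLinearEquiv.equivOfInverse
    (S.coprod ((1 : ℝ →L[ℝ] ℝ).smulRight (A e))) (S'.prod (π.comp B)) ?_ ?_⟩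
  · rintro ⟨x, t⟩
    have h1 : L e = 0 := (hπ 0).2
    have h2 : ∀ c, π (R c) = 0 := fun c => (hπ c).1
    simp [hS, hS', hBA, hLR, h1, h2, hπe]
  · intro x
    simp [hS, hS', hBA, hRL]

lemma prod_equiv_of_perturb {E : Type*} [NormedAddCommGroup E] [NormedSpace ℝ E] [CompleteSpace E]
    (X : Submodule ℝ E) (hX : IsClosed (X : Set E)) (hp' : p ≠ ∞)
    (φ : ℕ → E →L[ℝ] ℝ) (g f : ℕ → E)
    (h1 : ∀ x s, ∑ m ∈ s, ‖φ m x‖ ^ p.toReal ≤ ‖x‖ ^ p.toReal)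
    (h2 : ∀ (c : ℕ → ℝ) s, ‖∑ m ∈ s, c m • g m‖ ^ p.toReal ≤ ∑ m ∈ s, ‖c m‖ ^ p.toReal)
    (h3 : ∀ m k, φ m (g k) = if m = k then 1 else 0)
    (hfX : ∀ m, f m ∈ X) (h4 : ∀ m, ‖f m - g m‖ ≤ (1 / 2) ^ m / 4) :
    Nonempty ((X × ℝ) ≃L[ℝ] X) := by
  have hq := toReal_pos_of hp'
  haveI : CompleteSpace X := hX.completeSpace_coe
  let ι : (ℕ →₀ ℝ) →ₗ[ℝ] lseq := Finsupp.linearCombination ℝ (fun m => lp.single p m (1 : ℝ))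
  have hι : ∀ a : ℕ →₀ ℝ, ι a = ∑ m ∈ a.support, lp.single p m (a m) := by
    intro a
    simp only [ι, Finsupp.linearCombination_apply, Finsupp.sum]
    refine Finset.sum_congr rfl fun m _ => ?_
    rw [← lp.single_smul]; simp
  have hιn : ∀ a : ℕ →₀ ℝ, ‖ι a‖ ^ p.toReal = ∑ m ∈ a.support, ‖a m‖ ^ p.toReal := by
    intro a
    rw [hι]
    exact lp.norm_sum_single hq (fun m => a m) a.support
  have hdense : DenseRange ι := by
    intro c
    have hs := lp.hasSum_single hp' c
    refine mem_closure_of_tendsto hs (Filter.Eventually.of_forall fun s => ?_)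
    refine ⟨∑ m ∈ s, Finsupp.single m (c m), ?_⟩
    rw [map_sum]
    refine Finset.sum_congr rfl fun m _ => ?_
    simp only [ι, Finsupp.linearCombination_single]
    rw [← lp.single_smul]; simp
  have hcoord : ∀ a : ℕ →₀ ℝ, ∀ m, ‖a m‖ ≤ ‖ι a‖ := by
    intro a m
    by_cases hm : m ∈ a.support
    · rw [← Real.rpow_le_rpow_iff (norm_nonneg _) (norm_nonneg _) hq, hιn]
      exact Finset.single_le_sum (f := fun m => ‖a m‖ ^ p.toReal) (fun i _ => by positivity) hm
    · simp at hm; rw [hm]; simp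
  have hgeo : ∀ s : Finset ℕ, ∑ m ∈ s, ((1 / 2 : ℝ)) ^ m / 4 ≤ 1 / 2 := by
    intro s
    rw [← Finset.sum_div]
    have := (summable_geometric_two).sum_le_tsum s (fun m _ => by positivity)
    rw [tsum_geometric_two] at this
    linarith
  have hgn : ∀ a : ℕ →₀ ℝ, ‖Finsupp.linearCombination ℝ g a‖ ≤ ‖ι a‖ := by
    intro a
    rw [← Real.rpow_le_rpow_iff (norm_nonneg _) (norm_nonneg _) hq, hιn]
    exact h2 a a.support
  have hfg : ∀ a : ℕ →₀ ℝ, ‖Finsupp.linearCombination ℝ f a - Finsupp.linearCombination ℝ g a‖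
      ≤ 1 / 2 * ‖ι a‖ := by
    intro a
    simp only [Finsupp.linearCombination_apply, Finsupp.sum]
    rw [← Finset.sum_sub_distrib]
    refine (norm_sum_le _ _).trans ?_
    calc ∑ m ∈ a.support, ‖a m • f m - a m • g m‖
        ≤ ∑ m ∈ a.support, ((1 / 2 : ℝ)) ^ m / 4 * ‖ι a‖ := by
          refine Finset.sum_le_sum fun m _ => ?_
          rw [← smul_sub, norm_smul, mul_comm]
          exact mul_le_mul (h4 m) (hcoord a m) (norm_nonneg _) (by positivity)
      _ = (∑ m ∈ a.support, ((1 / 2 : ℝ)) ^ m / 4) * ‖ι a‖ := by rw [Finset.sum_mul]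
      _ ≤ _ := by gcongr; exact hgeo _
  let fX : ℕ → X := fun m => ⟨f m, hfX m⟩
  let A₁ : (ℕ →₀ ℝ) →ₗ[ℝ] X := Finsupp.linearCombination ℝ fX
  have hA₁ : ∀ a, ((A₁ a : X) : E) = Finsupp.linearCombination ℝ f a := by
    intro a
    simp [A₁, fX, Finsupp.linearCombination_apply, Finsupp.sum]
  have hA₁n : ∃ C : ℝ, ∀ a, ‖A₁ a‖ ≤ C * ‖ι a‖ := by
    refine ⟨3 / 2, fun a => ?_⟩
    have e1 : ‖A₁ a‖ = ‖Finsupp.linearCombination ℝ f a‖ := by rw [← hA₁]; rfl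
    have e2 := norm_sub_norm_le (Finsupp.linearCombination ℝ f a) (Finsupp.linearCombination ℝ g a)
    have := hfg a
    have := hgn a
    rw [e1]; linarith
  let A : lseq →L[ℝ] X := A₁.extendOfNorm ι
  have hA : ∀ a, A (ι a) = A₁ a := fun a => LinearMap.extendOfNorm_eq hdense hA₁n a
  let BE : E →L[ℝ] lseq := LinearMap.mkContinuous
    { toFun := fun x => ⟨fun m => φ m x, memℓp_gen' (h1 x)⟩
      map_add' := by intro x y; ext m; exact map_add (φ m) x y
      map_smul' := by intro x y; ext m; simp } 1 (by
      intro x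
      rw [one_mul]
      exact lp.norm_le_of_forall_sum_le hq (norm_nonneg _) (h1 x))
  have hBE : ∀ x m, (BE x) m = φ m x := fun _ _ => rfl
  have hBEn : ∀ x, ‖BE x‖ ≤ ‖x‖ := fun x =>
    lp.norm_le_of_forall_sum_le hq (norm_nonneg _) (h1 x)
  have hBg : ∀ a : ℕ →₀ ℝ, BE (Finsupp.linearCombination ℝ g a) = ι a := by
    intro a
    have : BE.toLinearMap ∘ₗ Finsupp.linearCombination ℝ g = ι := by
      ext k m
      simp [ι, hBE, h3, lp.single_apply, Pi.single_apply]
    exact congrArg (fun T : (ℕ →₀ ℝ) →ₗ[ℝ] lseq => T a) this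
  let B₀ : X →L[ℝ] lseq := BE.comp X.subtypeL
  refine prod_equiv_of_factor hp' A B₀ ?_
  refine lt_of_le_of_lt (ContinuousLinearMap.opNorm_le_bound _ (show (0:ℝ) ≤ 1 / 2 by norm_num) ?_)
    (by norm_num : (1 / 2 : ℝ) < 1)
  intro c
  refine hdense.induction (P := fun c => ‖(1 - B₀.comp A) c‖ ≤ 1 / 2 * ‖c‖) ?_ ?_ c
  · rintro _ ⟨a, rfl⟩
    have : (1 - B₀.comp A) (ι a) = BE (Finsupp.linearCombination ℝ g a
        - Finsupp.linearCombination ℝ f a) := by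
      rw [map_sub, hBg, ← hA₁]
      simp [B₀, hA]
    rw [this]
    refine (hBEn _).trans ?_
    rw [norm_sub_rev]
    exact hfg a
  · exact isClosed_le (by fun_prop) (by fun_prop)

/-- Adding one vector to a closed subspace isomorphic to its product with the line. -/
lemma sup_span_equiv {E : Type*} [NormedAddCommGroup E] [NormedSpace ℝ E] [CompleteSpace E]
    (X : Submodule ℝ E) (hX : IsClosed (X : Set E)) (v : E) (h : Nonempty ((X × ℝ) ≃L[ℝ] X)) :
    Nonempty (X ≃L[ℝ] ↥(X ⊔ ℝ ∙ v)) := by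
  by_cases hv : v ∈ X
  · have : X ⊔ ℝ ∙ v = X := by
      rw [sup_eq_left, Submodule.span_singleton_le_iff_mem]; exact hv
    rw [this]
    exact ⟨ContinuousLinearEquiv.refl ℝ X⟩
  · haveI : CompleteSpace X := hX.completeSpace_coe
    have hcl : IsClosed ((X ⊔ ℝ ∙ v : Submodule ℝ E) : Set E) :=
      Submodule.isClosed_sup_finiteDimensional _ _ hX
    haveI : CompleteSpace ↥(X ⊔ ℝ ∙ v) := hcl.completeSpace_coe
    let T₀ : (X × ℝ) →L[ℝ] E := X.subtypeL.coprod ((1 : ℝ →L[ℝ] ℝ).smulRight v)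
    have hT₀ : ∀ x t, T₀ (x, t) = x + t • v := by intro x t; simp [T₀]
    have hmem : ∀ y, T₀ y ∈ X ⊔ ℝ ∙ v := by
      rintro ⟨x, t⟩
      rw [hT₀]
      exact Submodule.add_mem_sup x.2 (Submodule.smul_mem _ _ (Submodule.mem_span_singleton_self v))
    let T : (X × ℝ) →L[ℝ] ↥(X ⊔ ℝ ∙ v) := T₀.codRestrict _ hmem
    have hker : LinearMap.ker T.toLinearMap = ⊥ := by
      rw [LinearMap.ker_eq_bot']
      rintro ⟨x, t⟩ hxt
      have h0 : (x : E) + t • v = 0 := by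
        rw [← hT₀]; exact congrArg Subtype.val hxt
      have ht : t = 0 := by
        by_contra ht
        apply hv
        have : v = t⁻¹ • (-(x : E)) := by
          rw [eq_inv_smul_iff₀ ht, eq_neg_iff_add_eq_zero, add_comm]; exact h0
        rw [this]
        exact X.smul_mem _ (X.neg_mem x.2)
      subst ht
      simp at h0
      simp [h0]
    have hran : LinearMap.range T.toLinearMap = ⊤ := by
      rw [LinearMap.range_eq_top]
      rintro ⟨y, hy⟩
      obtain ⟨x, hx, z, hz, rfl⟩ := Submodule.mem_sup.1 hy
      obtain ⟨t, rfl⟩ := Submodule.mem_span_singleton.1 hz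
      exact ⟨(⟨x, hx⟩, t), Subtype.ext (hT₀ _ _)⟩
    obtain ⟨Φ⟩ := h
    exact ⟨Φ.symm.trans (ContinuousLinearEquiv.ofBijective T hker hran)⟩

end Muntz

/-! ### Part E: gliding hump -/

namespace Muntz

variable {p : ℝ≥0∞} [Fact (1 ≤ p)]

lemma ofReal_norm_pow {ν : Measure ℝ} (hp' : p ≠ ∞) (f : Lp ℝ p ν) :
    ENNReal.ofReal (‖f‖ ^ p.toReal) = ∫⁻ t, ‖f t‖ₑ ^ p.toReal ∂ν := by
  have hq := toReal_pos_of hp'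
  have hp0 : p ≠ 0 := (zero_lt_one.trans_le Fact.out).ne'
  rw [← ENNReal.ofReal_rpow_of_nonneg (norm_nonneg _) hq.le, Lp.norm_def,
    ENNReal.ofReal_toReal (Lp.eLpNorm_ne_top f),
    eLpNorm_eq_lintegral_rpow_enorm_toReal hp0 hp', ← ENNReal.rpow_mul]
  rw [one_div, inv_mul_cancel₀ hq.ne', ENNReal.rpow_one]

lemma prod_equiv_of_hump {μ : Measure ℝ} (hp' : p ≠ ∞) (X : Submodule ℝ (Lp ℝ p μ))
    (hX : IsClosed (X : Set (Lp ℝ p μ)))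
    (I : ℕ → Set ℝ) (hI : ∀ m, MeasurableSet (I m)) (hd : Pairwise (Function.onFun Disjoint I))
    (u : ℕ → ℝ → ℝ) (hu : ∀ m, MemLp (u m) p μ) (huX : ∀ m, (hu m).toLp ∈ X)
    (hpos : ∀ m, 0 < ‖((hu m).indicator (hI m)).toLp‖)
    (hle : ∀ m, ‖(hu m).toLp - ((hu m).indicator (hI m)).toLp‖ ≤
      (1 / 2) ^ m / 4 * ‖((hu m).indicator (hI m)).toLp‖) :
    Nonempty ((X × ℝ) ≃L[ℝ] X) := by
  have hq := toReal_pos_of hp'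
  have hp0 : p ≠ 0 := (zero_lt_one.trans_le Fact.out).ne'
  set w : ℕ → Lp ℝ p μ := fun m => ((hu m).indicator (hI m)).toLp with hw
  set g : ℕ → Lp ℝ p μ := fun m => ‖w m‖⁻¹ • w m with hg
  have hpos' : ∀ m, 0 < ‖w m‖ := hpos
  have hgn : ∀ m, ‖g m‖ = 1 := fun m => by
    simp only [hg]
    rw [norm_smul, norm_inv, norm_norm, inv_mul_cancel₀ (hpos' m).ne']
  have hgz : ∀ m, ∀ᵐ t ∂μ, t ∉ I m → g m t = 0 := by
    intro m
    filter_upwards [Lp.coeFn_smul (‖w m‖⁻¹) (w m), ((hu m).indicator (hI m)).coeFn_toLp]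
      with t h1 h2 ht
    simp only [hg]
    rw [h1, Pi.smul_apply]
    have : w m t = 0 := by
      simp only [hw]; rw [h2, Set.indicator_of_notMem ht]
    rw [this, smul_zero]
  let R : ∀ m, Lp ℝ p μ →L[ℝ] Lp ℝ p (μ.restrict (I m)) := fun m =>
    LpToLpRestrictCLM ℝ ℝ ℝ μ p (I m)
  have hR : ∀ m x, R m x =ᵐ[μ.restrict (I m)] x := fun m x => LpToLpRestrictCLM_coeFn ℝ (I m) x
  have hRn : ∀ m x, ENNReal.ofReal (‖R m x‖ ^ p.toReal) = ∫⁻ t in I m, ‖x t‖ₑ ^ p.toReal ∂μ := by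
    intro m x
    rw [ofReal_norm_pow hp']
    refine lintegral_congr_ae ?_
    filter_upwards [hR m x] with t ht
    rw [ht]
  have hRg : ∀ m, ‖R m (g m)‖ = 1 := by
    intro m
    rw [← hgn m, ← Real.rpow_left_inj (norm_nonneg _) (norm_nonneg _) hq.ne',
      ← ENNReal.ofReal_eq_ofReal_iff (by positivity) (by positivity), hRn, ofReal_norm_pow hp',
      ← lintegral_indicator (hI m)]
    refine lintegral_congr_ae ?_
    filter_upwards [hgz m] with t ht
    by_cases h : t ∈ I m
    · rw [Set.indicator_of_mem h]
    · rw [Set.indicator_of_notMem h, ht h]; simp [hq]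
  have hRg0 : ∀ m k, m ≠ k → R m (g k) = 0 := by
    intro m k hmk
    rw [Lp.eq_zero_iff_ae_eq_zero]
    filter_upwards [hR m (g k), ae_restrict_of_ae (hgz k), ae_restrict_mem (hI m)] with t h1 h2 h3
    rw [h1, h2 (fun h4 => (Set.disjoint_left.1 (hd hmk)) h3 h4)]; rfl
  have hψ : ∀ m, ∃ ψ : StrongDual ℝ (Lp ℝ p (μ.restrict (I m))), ‖ψ‖ = 1 ∧ ψ (R m (g m)) = 1 := by
    intro m
    have hne : ‖R m (g m)‖ ≠ 0 := by
      rw [hRg]; norm_num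
    obtain ⟨ψ, h1, h2⟩ := exists_dual_vector ℝ (R m (g m)) hne
    refine ⟨ψ, h1, ?_⟩
    rw [h2, hRg]; simp
  choose ψ hψ1 hψ2 using hψ
  refine prod_equiv_of_perturb X hX hp' (fun m => (ψ m).comp (R m)) g
    (fun m => ‖w m‖⁻¹ • (hu m).toLp) ?_ ?_ ?_ (fun m => X.smul_mem _ (huX m)) ?_
  · intro x s
    calc ∑ m ∈ s, ‖((ψ m).comp (R m)) x‖ ^ p.toReal ≤ ∑ m ∈ s, ‖R m x‖ ^ p.toReal := by
          refine Finset.sum_le_sum fun m _ => ?_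
          refine Real.rpow_le_rpow (norm_nonneg _) ?_ hq.le
          have := (ψ m).le_opNorm (R m x)
          rwa [hψ1, one_mul] at this
      _ ≤ _ := by
          rw [← ENNReal.ofReal_le_ofReal_iff (by positivity), ofReal_norm_pow hp',
            ENNReal.ofReal_sum_of_nonneg (fun i _ => by positivity)]
          simp only [hRn]
          rw [← lintegral_biUnion_finset (fun i _ j _ hij => hd hij) (fun i _ => hI i)]
          exact setLIntegral_le_lintegral _ _
  · intro c s
    rw [← ENNReal.ofReal_le_ofReal_iff (by positivity), ofReal_norm_pow hp']
    have hae : ∀ᵐ t ∂μ, ‖(∑ m ∈ s, c m • g m : Lp ℝ p μ) t‖ₑ ^ p.toReal =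
        ∑ m ∈ s, ‖(c m • g m : Lp ℝ p μ) t‖ₑ ^ p.toReal := by
      have hall : ∀ᵐ t ∂μ, ∀ m, t ∉ I m → (c m • g m : Lp ℝ p μ) t = 0 := by
        rw [ae_all_iff]
        intro m
        filter_upwards [hgz m, Lp.coeFn_smul (c m) (g m)] with t h1 h2 h3
        rw [h2, Pi.smul_apply, h1 h3, smul_zero]
      filter_upwards [hall, Lp.coeFn_finsetSum s (fun m => c m • g m)] with t h1 h2
      rw [h2, Finset.sum_apply]
      by_cases hex : ∃ m ∈ s, t ∈ I m
      · obtain ⟨m, hm, htm⟩ := hex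
        have hz : ∀ k ∈ s, k ≠ m → (c k • g k : Lp ℝ p μ) t = 0 := fun k _ hk =>
          h1 k (fun h4 => (Set.disjoint_left.1 (hd hk)) h4 htm)
        rw [Finset.sum_eq_single_of_mem m hm hz, Finset.sum_eq_single_of_mem m hm]
        intro k hk hkm
        rw [hz k hk hkm]; simp [hq]
      · push Not at hex
        rw [Finset.sum_eq_zero (fun k hk => h1 k (hex k hk)), Finset.sum_eq_zero]
        · simp [hq]
        · intro k hk
          rw [h1 k (hex k hk)]; simp [hq]
    rw [lintegral_congr_ae hae, lintegral_finsetSum' _ (fun m _ => by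
      exact ((Lp.aestronglyMeasurable (c m • g m)).enorm).pow_const _),
      ENNReal.ofReal_sum_of_nonneg (fun i _ => by positivity)]
    refine Finset.sum_le_sum fun m _ => ?_
    rw [← ofReal_norm_pow hp', norm_smul, hgn, mul_one]
  · intro m k
    by_cases h : m = k
    · subst h; simp [hψ2]
    · simp [h, hRg0 m k h]
  · intro m
    simp only [hg]
    rw [← smul_sub, norm_smul, norm_inv, norm_norm, inv_mul_le_iff₀ (hpos' m), mul_comm]
    exact hle m

end Muntz

namespace Muntz

variable {p : ℝ≥0∞} [Fact (1 ≤ p)]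

/-- One step of the gliding hump construction. -/
lemma hump_step (hp' : p ≠ ∞) (lam : ℕ → ℝ) (hpos : ∀ k, 0 < lam k)
    (hlam : Tendsto lam atTop atTop) (s ε : ℝ) (hs0 : 0 < s) (hs1 : s < 1) (hε : 0 < ε) :
    ∃ s' k, s < s' ∧ s' < 1 ∧
      0 < (eLpNorm ((Set.Ico s s').indicator fun t : ℝ => t ^ lam k) p unitMeas).toReal ∧
      (eLpNorm ((Set.Ico s s')ᶜ.indicator fun t : ℝ => t ^ lam k) p unitMeas).toReal ≤
        ε * (eLpNorm ((Set.Ico s s').indicator fun t : ℝ => t ^ lam k) p unitMeas).toReal := by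
  have hp0 : p ≠ 0 := (zero_lt_one.trans_le Fact.out).ne'
  have hp1 : 1 ≤ p := Fact.out
  have hq : 0 < p.toReal := ENNReal.toReal_pos hp0 hp'
  set q := p.toReal with hqdef
  obtain ⟨d, hsd, hd1⟩ := exists_between hs1
  obtain ⟨d', hdd', hd'1⟩ := exists_between hd1
  have hd0 : 0 < d := hs0.trans hsd
  set W : ℝ := (d' - d) ^ (1 / q) with hW
  have hW0 : 0 < W := Real.rpow_pos_of_pos (by linarith) _
  -- choose k
  have hlim : Tendsto (fun k => (s / d) ^ lam k) atTop (𝓝 0) :=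
    (tendsto_rpow_atTop_of_base_lt_one (s / d) (by have : 0 < s / d := by positivity
                                                   linarith)
      ((div_lt_one hd0).2 hsd)).comp hlam
  obtain ⟨k, hk⟩ := (hlim.eventually_lt_const (show 0 < ε / 2 * W by positivity)).exists
  set l := lam k with hl
  have hl0 : 0 < l := hpos k
  have hsl : s ^ l ≤ ε / 2 * (d ^ l * W) := by
    have h1 : (s / d) ^ l = s ^ l / d ^ l := Real.div_rpow hs0.le hd0.le _
    rw [h1, div_lt_iff₀ (Real.rpow_pos_of_pos hd0 _)] at hk
    linarith
  set Lb : ℝ := d ^ l * W with hLb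
  have hLb0 : 0 < Lb := mul_pos (Real.rpow_pos_of_pos hd0 _) hW0
  set δ : ℝ := min (1 - d') ((ε / 2 * Lb) ^ q) with hδ
  have hδ0 : 0 < δ := lt_min (by linarith) (Real.rpow_pos_of_pos (by positivity) _)
  have hδ1 : d' ≤ 1 - δ := by
    have : δ ≤ 1 - d' := min_le_left _ _
    linarith
  have hδ2 : δ ^ (1 / q) ≤ ε / 2 * Lb := by
    calc δ ^ (1 / q) ≤ ((ε / 2 * Lb) ^ q) ^ (1 / q) :=
          Real.rpow_le_rpow hδ0.le (min_le_right _ _) (by positivity)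
      _ = ε / 2 * Lb := by
          rw [← Real.rpow_mul (by positivity), mul_one_div_cancel hq.ne', Real.rpow_one]
  have hmem := memLp_rpow p l hl0.le
  have hmeas : ∀ a b : ℝ, 0 ≤ a → a ≤ b → b ≤ 1 →
      unitMeas (Set.Ico a b) = ENNReal.ofReal (b - a) := by
    intro a b ha hab hb
    rw [Measure.restrict_apply measurableSet_Ico, Set.inter_eq_left.2, Real.volume_Ico]
    exact fun t ht => ⟨ha.trans ht.1, ht.2.le.trans hb⟩
  have hlow : ENNReal.ofReal Lb ≤
      eLpNorm ((Set.Ico s (1 - δ)).indicator fun t : ℝ => t ^ l) p unitMeas := by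
    have h1 : eLpNorm ((Set.Ico d d').indicator fun _ : ℝ => d ^ l) p unitMeas =
        ENNReal.ofReal Lb := by
      rw [eLpNorm_indicator_const measurableSet_Ico hp0 hp', hmeas d d' hd0.le hdd'.le hd'1.le,
        Real.enorm_of_nonneg (by positivity), ENNReal.ofReal_rpow_of_nonneg (by linarith)
          (by positivity), ← ENNReal.ofReal_mul (by positivity)]
    rw [← h1]
    refine eLpNorm_mono fun t => ?_
    by_cases ht : t ∈ Set.Ico d d'
    · have ht' : t ∈ Set.Ico s (1 - δ) := ⟨hsd.le.trans ht.1, ht.2.trans_le hδ1⟩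
      rw [Set.indicator_of_mem ht, Set.indicator_of_mem ht', Real.norm_of_nonneg (by positivity),
        Real.norm_of_nonneg (Real.rpow_nonneg (hd0.le.trans ht.1) _)]
      exact Real.rpow_le_rpow hd0.le ht.1 hl0.le
    · rw [Set.indicator_of_notMem ht]; simp
  have hup : eLpNorm ((Set.Ico s (1 - δ))ᶜ.indicator fun t : ℝ => t ^ l) p unitMeas ≤
      ENNReal.ofReal (ε * Lb) := by
    have hcompl : unitMeas (Set.Ici (1 - δ)) = ENNReal.ofReal δ := by
      rw [Measure.restrict_apply measurableSet_Ici]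
      have : Set.Ici (1 - δ) ∩ Set.Icc 0 1 = Set.Icc (1 - δ) 1 := by
        ext t
        simp only [Set.mem_inter_iff, Set.mem_Ici, Set.mem_Icc]
        constructor
        · rintro ⟨h1, h2, h3⟩; exact ⟨h1, h3⟩
        · rintro ⟨h1, h2⟩; exact ⟨h1, by linarith, h2⟩
      rw [this, Real.volume_Icc]; congr 1; ring
    calc eLpNorm ((Set.Ico s (1 - δ))ᶜ.indicator fun t : ℝ => t ^ l) p unitMeas
        ≤ eLpNorm ((fun _ : ℝ => s ^ l) + (Set.Ici (1 - δ)).indicator fun _ : ℝ => (1 : ℝ))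
          p unitMeas := by
          refine eLpNorm_mono_ae ?_
          filter_upwards [ae_restrict_mem measurableSet_Icc] with t ht
          have hn : (0:ℝ) ≤ s ^ l := by positivity
          have hi : (0:ℝ) ≤ (Set.Ici (1 - δ)).indicator (fun _ : ℝ => (1 : ℝ)) t :=
            Set.indicator_nonneg (fun _ _ => zero_le_one) _
          rw [Pi.add_apply, Real.norm_of_nonneg (add_nonneg hn hi)]
          by_cases h : t ∈ Set.Ico s (1 - δ)
          · rw [Set.indicator_of_notMem (Set.notMem_compl_iff.2 h), norm_zero]; positivity
          · rw [Set.indicator_of_mem h, Real.norm_of_nonneg (Real.rpow_nonneg ht.1 _)]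
            by_cases h2 : t < s
            · exact (Real.rpow_le_rpow ht.1 h2.le hl0.le).trans (le_add_of_nonneg_right hi)
            · have h3 : t ∈ Set.Ici (1 - δ) := by
                by_contra h4
                exact h ⟨not_lt.1 h2, not_le.1 h4⟩
              rw [Set.indicator_of_mem h3]
              exact (Real.rpow_le_one ht.1 ht.2 hl0.le).trans (le_add_of_nonneg_left hn)
      _ ≤ eLpNorm (fun _ : ℝ => s ^ l) p unitMeas +
          eLpNorm ((Set.Ici (1 - δ)).indicator fun _ : ℝ => (1 : ℝ)) p unitMeas :=
          eLpNorm_add_le (by fun_prop)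
            ((measurable_const.indicator measurableSet_Ici).aestronglyMeasurable) hp1
      _ = ENNReal.ofReal (s ^ l) + ENNReal.ofReal (δ ^ (1 / q)) := by
          rw [eLpNorm_const' _ hp0 hp', eLpNorm_indicator_const measurableSet_Ici hp0 hp', hcompl,
            Real.enorm_of_nonneg (by positivity), ENNReal.ofReal_rpow_of_nonneg hδ0.le
              (by positivity)]
          simp [hqdef]
      _ ≤ ENNReal.ofReal (ε * Lb) := by
          rw [← ENNReal.ofReal_add (by positivity) (by positivity)]
          exact ENNReal.ofReal_le_ofReal (by linarith)
  have hlow' : Lb ≤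
      (eLpNorm ((Set.Ico s (1 - δ)).indicator fun t : ℝ => t ^ l) p unitMeas).toReal :=
    (ENNReal.ofReal_le_iff_le_toReal (hmem.indicator measurableSet_Ico).2.ne).1 hlow
  have hup' := ENNReal.toReal_le_of_le_ofReal (by positivity) hup
  refine ⟨1 - δ, k, by linarith, by linarith, hLb0.trans_le hlow', hup'.trans ?_⟩
  exact mul_le_mul_of_nonneg_left hlow' hε.le

lemma prod_equiv_of_exponents (hp' : p ≠ ∞) (X : Submodule ℝ (Lp ℝ p unitMeas))
    (hX : IsClosed (X : Set (Lp ℝ p unitMeas))) (lam : ℕ → ℝ) (hpos : ∀ k, 0 < lam k)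
    (hlam : Tendsto lam atTop atTop)
    (hmem : ∀ k, (memLp_rpow p (lam k) (hpos k).le).toLp ∈ X) :
    Nonempty ((X × ℝ) ≃L[ℝ] X) := by
  have hstep := fun (s : {s : ℝ // 0 < s ∧ s < 1}) (m : ℕ) =>
    hump_step hp' lam hpos hlam s.1 ((1 / 2) ^ m / 4) s.2.1 s.2.2 (by positivity)
  choose nx kk h1 h2 h3 h4 using hstep
  let σ : ℕ → {s : ℝ // 0 < s ∧ s < 1} := fun m =>
    Nat.rec ⟨1 / 2, by norm_num⟩ (fun m s => ⟨nx s m, s.2.1.trans (h1 s m), h2 s m⟩) m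
  have hσ : ∀ m, (σ (m + 1)).1 = nx (σ m) m := fun m => rfl
  have hmono : Monotone fun m => (σ m).1 :=
    monotone_nat_of_le_succ fun m => by rw [hσ]; exact (h1 (σ m) m).le
  have hsub : ∀ m, (memLp_rpow p (lam (kk (σ m) m)) (hpos _).le).toLp -
      ((memLp_rpow p (lam (kk (σ m) m)) (hpos _).le).indicator
        (measurableSet_Ico (a := (σ m).1) (b := (σ (m + 1)).1))).toLp =
      ((memLp_rpow p (lam (kk (σ m) m)) (hpos _).le).indicator
        (measurableSet_Ico (a := (σ m).1) (b := (σ (m + 1)).1)).compl).toLp := by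
    intro m
    rw [← MemLp.toLp_sub]
    refine MemLp.toLp_congr _ _ (Filter.Eventually.of_forall fun t => ?_)
    rw [Set.indicator_compl]
  refine prod_equiv_of_hump hp' X hX (fun m => Set.Ico (σ m).1 (σ (m + 1)).1)
    (fun m => measurableSet_Ico) hmono.pairwise_disjoint_on_Ico_succ
    (fun m t => t ^ lam (kk (σ m) m)) (fun m => memLp_rpow p _ (hpos _).le) (fun m => hmem _) ?_ ?_
  · intro m
    rw [Lp.norm_toLp]
    exact h3 (σ m) m
  · intro m
    rw [hsub, Lp.norm_toLp, Lp.norm_toLp]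
    exact h4 (σ m) m

end Muntz

/-! ### Part F: Müntz spaces -/

namespace Muntz

lemma tendsto_of_gap (lam : ℕ → ℝ) (c : ℝ) (hc : 0 < c) (hgap : ∀ k, c ≤ lam (k + 1) - lam k) :
    Tendsto lam atTop atTop := by
  have h : ∀ k : ℕ, c * k + lam 0 ≤ lam k := by
    intro k
    induction k with
    | zero => simp
    | succ k ih => have := hgap k; push_cast; linarith
  exact tendsto_atTop_mono h (tendsto_atTop_add_const_right _ _
    (tendsto_natCast_atTop_atTop.const_mul_atTop hc))

variable {p : ℝ≥0∞} [Fact (1 ≤ p)]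

lemma mono_mem (S : Set ℝ) (l : ℝ) (hl : 0 ≤ l) (hS : l ∈ S) :
    (memLp_rpow p l hl).toLp ∈ muntzSpace S p 0 1 :=
  Submodule.le_topologicalClosure _ (Submodule.subset_span ⟨l, hS, MemLp.coeFn_toLp _⟩)

lemma muntzSpace_range (lam : ℕ → ℝ) (hpos : ∀ k, 0 < lam k) :
    muntzSpace (Set.range lam) p 0 1 = (Submodule.span ℝ (Set.range fun k =>
      (memLp_rpow p (lam k) (hpos k).le).toLp)).topologicalClosure := by
  unfold muntzSpace
  congr 2
  ext g
  constructor
  · rintro ⟨_, ⟨k, rfl⟩, hg⟩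
    refine ⟨k, Lp.ext ?_⟩
    exact (MemLp.coeFn_toLp _).trans hg.symm
  · rintro ⟨k, rfl⟩
    exact ⟨_, ⟨k, rfl⟩, MemLp.coeFn_toLp _⟩

lemma muntzSpace_insert (S : Set ℝ) (x : ℝ) (hx : 0 < x) :
    muntzSpace (insert x S) p 0 1 =
      muntzSpace S p 0 1 ⊔ Submodule.span ℝ {(memLp_rpow p x hx.le).toLp} := by
  apply le_antisymm
  · refine Submodule.topologicalClosure_minimal _ ?_
      (Submodule.isClosed_sup_finiteDimensional _ _ (Submodule.isClosed_topologicalClosure _))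
    rw [Submodule.span_le]
    rintro g ⟨l, hl | hl, hg⟩
    · subst hl
      refine Submodule.mem_sup_right ?_
      have : g = (memLp_rpow p l hx.le).toLp := Lp.ext (hg.trans (MemLp.coeFn_toLp _).symm)
      rw [this]
      exact Submodule.mem_span_singleton_self _
    · exact Submodule.mem_sup_left
        (Submodule.le_topologicalClosure _ (Submodule.subset_span ⟨l, hl, hg⟩))
  · refine sup_le ?_ ?_
    · refine Submodule.topologicalClosure_mono (Submodule.span_mono ?_)
      rintro g ⟨l, hl, hg⟩
      exact ⟨l, Or.inr hl, hg⟩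
    · rw [Submodule.span_singleton_le_iff_mem]
      exact mono_mem _ _ hx.le (Or.inl rfl)

lemma norm_comb (lam : ℕ → ℝ) (hpos : ∀ k, 0 < lam k) (a : ℕ →₀ ℝ) :
    ‖Finsupp.linearCombination ℝ (fun k => (memLp_rpow p (lam k) (hpos k).le).toLp) a‖ =
      (eLpNorm (fun t : ℝ => ∑ i ∈ a.support, a i * t ^ lam i) p unitMeas).toReal := by
  rw [Lp.norm_def]
  congr 1
  refine eLpNorm_congr_ae ?_
  rw [Finsupp.linearCombination_apply, Finsupp.sum]
  have hall : ∀ᵐ t ∂unitMeas, ∀ i, (a i • (memLp_rpow p (lam i) (hpos i).le).toLp :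
      Lp ℝ p unitMeas) t = a i * t ^ lam i := by
    rw [ae_all_iff]
    intro i
    filter_upwards [Lp.coeFn_smul (a i) (memLp_rpow p (lam i) (hpos i).le).toLp,
      (memLp_rpow p (lam i) (hpos i).le).coeFn_toLp] with t h1 h2
    rw [h1, Pi.smul_apply, h2, smul_eq_mul]
  filter_upwards [hall, Lp.coeFn_finsetSum a.support (fun i => a i •
    (memLp_rpow p (lam i) (hpos i).le).toLp)] with t h1 h2
  rw [h2, Finset.sum_apply]
  exact Finset.sum_congr rfl fun i _ => h1 i

lemma norm_comb_le (lam lam' : ℕ → ℝ) (hpos : ∀ k, 0 < lam k) (hpos' : ∀ k, 0 < lam' k) (C : ℝ≥0)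
    (hC : ∀ (s : Finset ℕ) (a : ℕ → ℝ),
      eLpNorm (fun t : ℝ => ∑ i ∈ s, a i * t ^ lam i) p unitMeas ≤
        C * eLpNorm (fun t : ℝ => ∑ i ∈ s, a i * t ^ lam' i) p unitMeas) (a : ℕ →₀ ℝ) :
    ‖Finsupp.linearCombination ℝ (fun k => (memLp_rpow p (lam k) (hpos k).le).toLp) a‖ ≤
    C * ‖Finsupp.linearCombination ℝ (fun k => (memLp_rpow p (lam' k) (hpos' k).le).toLp) a‖ := by
  rw [norm_comb lam hpos, norm_comb lam' hpos']
  have h := hC a.support a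
  have hfin : (C : ℝ≥0∞) * eLpNorm (fun t : ℝ => ∑ i ∈ a.support, a i * t ^ lam' i) p unitMeas ≠ ∞ :=
    ENNReal.mul_ne_top ENNReal.coe_ne_top (memLp_sum p lam' hpos' a.support a).2.ne
  have := ENNReal.toReal_mono hfin h
  rwa [ENNReal.toReal_mul, ENNReal.coe_toReal] at this

end Muntz



/-- For `Λ` strictly increasing positive with gap and Müntz conditions, `1 ≤ p < ∞`,
`β ≥ 0`, `α > 0` and a finite subset `Ξ` of `(0,∞)`, the Müntz spaces `M_{Λ,p}([0,1])`
and `M_{Ξ ∪ (αΛ+β),p}([0,1])` are linearly topologically isomorphic. -/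
theorem muntzSpace_isomorphic_union_affine
    (Λ : ℕ → ℝ) (hpos : ∀ k, 0 < Λ k) (hmono : StrictMono Λ)
    (hgap : ∃ c > 0, ∀ k, c ≤ Λ (k + 1) - Λ k)
    (hMuntz : Summable fun k => 1 / Λ k)
    (p : ℝ≥0∞) [Fact (1 ≤ p)] (hp' : p ≠ ∞)
    (α β : ℝ) (hα : 0 < α) (hβ : 0 ≤ β)
    (Ξ : Finset ℝ) (hΞ : ∀ x ∈ Ξ, 0 < x) :
    Nonempty (↥(muntzSpace (Set.range Λ) p 0 1) ≃L[ℝ]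
      ↥(muntzSpace (↑Ξ ∪ (fun l => α * l + β) '' Set.range Λ) p 0 1)) := by
  have hp1 : (1 : ℝ≥0∞) ≤ p := Fact.out
  obtain ⟨c, hc, hgap⟩ := hgap
  have hpos' : ∀ k, 0 < α * Λ k + β := fun k => by have := hpos k; positivity
  have hlam : Tendsto Λ atTop atTop := Muntz.tendsto_of_gap Λ c hc hgap
  have hlam' : Tendsto (fun k => α * Λ k + β) atTop atTop :=
    tendsto_atTop_add_const_right _ _ (hlam.const_mul_atTop hα)
  have hsum' : Summable fun k => 1 / (α * Λ k + β) := by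
    refine (hMuntz.mul_left α⁻¹).of_nonneg_of_le (fun k => ?_) (fun k => ?_)
    · have := hpos' k; positivity
    · have := hpos k
      have h1 : α⁻¹ * (1 / Λ k) = 1 / (α * Λ k) := by field_simp
      rw [h1]
      exact one_div_le_one_div_of_le (by positivity) (by linarith)
  have himg : (fun l => α * l + β) '' Set.range Λ = Set.range fun k => α * Λ k + β := by
    rw [← Set.range_comp]; rfl
  rw [himg]
  -- first step: the affine change of exponents
  have hinv : ∀ k, α⁻¹ * (α * Λ k + β) + -(α⁻¹ * β) = Λ k := fun k => by
    field_simp; ring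
  obtain ⟨C₁, hC₁⟩ := Muntz.norm_compare Λ hpos α β hα hpos' c hc hgap hMuntz hsum' p hp1 hp'
  obtain ⟨C₂, hC₂⟩ := Muntz.norm_compare (fun k => α * Λ k + β) hpos' α⁻¹ (-(α⁻¹ * β))
    (inv_pos.2 hα) (fun k => by rw [hinv]; exact hpos k) (α * c) (by positivity)
    (fun k => by have := mul_le_mul_of_nonneg_left (hgap k) hα.le; linarith) hsum'
    (by simp only [hinv]; exact hMuntz) p hp1 hp'
  simp only [hinv] at hC₂
  have e1 : Nonempty (↥(muntzSpace (Set.range Λ) p 0 1) ≃L[ℝ]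
      ↥(muntzSpace (Set.range fun k => α * Λ k + β) p 0 1)) := by
    rw [Muntz.muntzSpace_range Λ hpos, Muntz.muntzSpace_range _ hpos']
    exact Muntz.closedSpan_equiv _ _
      ⟨C₁, fun a => Muntz.norm_comb_le Λ _ hpos hpos' C₁ hC₁ a⟩
      ⟨C₂, fun a => Muntz.norm_comb_le _ Λ hpos' hpos C₂ hC₂ a⟩
  -- second step: adding finitely many exponents
  have e2 : ∀ Ξ : Finset ℝ, (∀ x ∈ Ξ, 0 < x) →
      Nonempty (↥(muntzSpace (Set.range fun k => α * Λ k + β) p 0 1) ≃L[ℝ]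
      ↥(muntzSpace (↑Ξ ∪ Set.range fun k => α * Λ k + β) p 0 1)) := by
    intro Ξ
    induction Ξ using Finset.induction_on with
    | empty =>
      intro _
      rw [Finset.coe_empty, Set.empty_union]
      exact ⟨ContinuousLinearEquiv.refl ℝ _⟩
    | insert x Ξ hx ih =>
      intro hpx
      obtain ⟨Φ⟩ := ih fun y hy => hpx y (Finset.mem_insert_of_mem hy)
      rw [Finset.coe_insert, Set.insert_union,
        Muntz.muntzSpace_insert _ x (hpx x (Finset.mem_insert_self _ _))]
      have hprod := Muntz.prod_equiv_of_exponents hp'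
        (muntzSpace (↑Ξ ∪ Set.range fun k => α * Λ k + β) p 0 1)
        (Submodule.isClosed_topologicalClosure _) _ hpos' hlam'
        (fun k => Muntz.mono_mem _ _ (hpos' k).le (Or.inr ⟨k, rfl⟩))
      obtain ⟨Ψ⟩ := Muntz.sup_span_equiv _ (Submodule.isClosed_topologicalClosure _)
        (Muntz.memLp_rpow p x (hpx x (Finset.mem_insert_self _ _)).le).toLp hprod
      exact ⟨Φ.trans Ψ⟩
  obtain ⟨Φ⟩ := e1
  obtain ⟨Ψ⟩ := e2 Ξ hΞ
  exact ⟨Φ.trans Ψ⟩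
end

section
/- Let Λ = (λ_k)_{k∈ℕ} be a strictly increasing sequence of positive real numbers satisfying the gap condition and the Müntz condition, let 1 < α < ∞, 1 < p < ∞, and let 0 < δ < 1 with δ > α^{1/(1−α)}. Let T : L_p(δ^α,1) → L_p(δ^α,1) be the operator T f = f − E(Q_α f), where (Q_α f)(t) = f(t^α) for t ∈ (δ,1) and E denotes the extension by zero from (δ,1) to (δ^α,1). Then T restricted to M_{Λ,p}([δ^α,1]) is a linear topological isomorphism onto its image Z_{Λ,p,α,δ} := (I − Q_α)[M_{Λ,p}([δ^α,1])]; in particular Z_{Λ,p,α,δ} is isomorphic to M_{Λ,p}([δ^α,1]). -/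
open MeasureTheory Filter
open scoped ENNReal NNReal Topology

/-- The substitution operator is a strict contraction in the sense of `p`-th powers. -/
theorem substitution_lintegral_le (α : ℝ) (hα : 1 < α) (δ : ℝ) (hδ0 : 0 < δ)
    (u : ℝ → ℝ≥0∞) :
    ENNReal.ofReal (α * δ ^ (α - 1)) * ∫⁻ x in Set.Ioo δ 1, u (x ^ α)
      ≤ ∫⁻ x in Set.Icc (δ ^ α) 1, u x := by
  have hinj : Set.InjOn (fun x : ℝ => x ^ α) (Set.Ioo δ 1) := by
    intro x hx y hy hxy
    exact (Real.rpow_left_inj (hδ0.trans hx.1).le (hδ0.trans hy.1).le (by linarith)).1 hxy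
  have hder : ∀ x ∈ Set.Ioo δ 1,
      HasDerivWithinAt (fun x : ℝ => x ^ α) (α * x ^ (α - 1)) (Set.Ioo δ 1) x := by
    intro x hx
    exact (Real.hasDerivAt_rpow_const (Or.inl (hδ0.trans hx.1).ne')).hasDerivWithinAt
  have hcv := lintegral_image_eq_lintegral_abs_deriv_mul measurableSet_Ioo hder hinj u
  have hsub : (fun x : ℝ => x ^ α) '' Set.Ioo δ 1 ⊆ Set.Icc (δ ^ α) 1 := by
    rintro _ ⟨x, hx, rfl⟩
    exact ⟨Real.rpow_le_rpow hδ0.le hx.1.le (by linarith),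
      Real.rpow_le_one (hδ0.trans hx.1).le hx.2.le (by linarith)⟩
  calc ENNReal.ofReal (α * δ ^ (α - 1)) * ∫⁻ x in Set.Ioo δ 1, u (x ^ α)
      = ∫⁻ x in Set.Ioo δ 1, ENNReal.ofReal (α * δ ^ (α - 1)) * u (x ^ α) :=
        (lintegral_const_mul' _ _ ENNReal.ofReal_ne_top).symm
    _ ≤ ∫⁻ x in Set.Ioo δ 1, ENNReal.ofReal |α * x ^ (α - 1)| * u (x ^ α) := by
        refine setLIntegral_mono' measurableSet_Ioo fun x hx => ?_
        gcongr
        refine le_trans ?_ (le_abs_self _)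
        have := Real.rpow_le_rpow hδ0.le hx.1.le (by linarith : 0 ≤ α - 1)
        gcongr
    _ = ∫⁻ x in (fun x : ℝ => x ^ α) '' Set.Ioo δ 1, u x := hcv.symm
    _ ≤ ∫⁻ x in Set.Icc (δ ^ α) 1, u x := lintegral_mono_set hsub

/-- The contraction estimate for `E Q_α`, in terms of `eLpNorm`. -/
theorem substitution_eLpNorm_le (p : ℝ≥0∞) (hp : 1 < p) (hp' : p ≠ ∞)
    (α : ℝ) (hα : 1 < α) (δ : ℝ) (hδ0 : 0 < δ) (f : ℝ → ℝ) :
    ENNReal.ofReal (α * δ ^ (α - 1)) ^ (1 / p.toReal) *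
      eLpNorm (Set.indicator (Set.Ioo δ 1) (fun s => f (s ^ α))) p
        (volume.restrict (Set.Icc (δ ^ α) 1))
      ≤ eLpNorm f p (volume.restrict (Set.Icc (δ ^ α) 1)) := by
  have hp0 : p ≠ 0 := (zero_lt_one.trans hp).ne'
  have hpr : 0 < p.toReal := ENNReal.toReal_pos hp0 hp'
  rw [eLpNorm_eq_lintegral_rpow_enorm_toReal hp0 hp',
    eLpNorm_eq_lintegral_rpow_enorm_toReal hp0 hp',
    ← ENNReal.mul_rpow_of_nonneg _ _ (by positivity)]
  refine ENNReal.rpow_le_rpow ?_ (by positivity)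
  refine le_trans ?_ (substitution_lintegral_le α hα δ hδ0 (fun x => ‖f x‖ₑ ^ p.toReal))
  refine mul_le_mul_right ?_ _
  have : (fun x => ‖(Set.Ioo δ 1).indicator (fun s => f (s ^ α)) x‖ₑ ^ p.toReal)
      = (Set.Ioo δ 1).indicator (fun x => ‖f (x ^ α)‖ₑ ^ p.toReal) := by
    funext x
    by_cases hx : x ∈ Set.Ioo δ 1
    · simp [Set.indicator_of_mem hx]
    · simp [Set.indicator_of_notMem hx, hpr]
  rw [this, lintegral_indicator measurableSet_Ioo]
  exact lintegral_mono' (Measure.restrict_mono le_rfl Measure.restrict_le_self) le_rfl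

/-- Let `Λ` be strictly increasing positive with gap and Müntz conditions, `1 < α`,
`1 < p < ∞`, `α^{1/(1-α)} < δ < 1`. If `T : L_p(δ^α,1) → L_p(δ^α,1)` is the operator
`T f = f - E(Q_α f)` (where `(Q_α f)(t) = f(t^α)` on `(δ,1)` and `E` extends by zero),
then `T` restricted to `M_{Λ,p}([δ^α,1])` is a linear topological isomorphism onto its
image `Z_{Λ,p,α,δ} = (I - Q_α)[M_{Λ,p}([δ^α,1])]`. -/
theorem muntzSpace_isomorphic_sub_substitution
    (Λ : ℕ → ℝ) (hpos : ∀ k, 0 < Λ k) (hmono : StrictMono Λ)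
    (hgap : ∃ c > 0, ∀ k, c ≤ Λ (k + 1) - Λ k)
    (hMuntz : Summable fun k => 1 / Λ k)
    (p : ℝ≥0∞) [Fact (1 ≤ p)] (hp : 1 < p) (hp' : p ≠ ∞)
    (α : ℝ) (hα : 1 < α)
    (δ : ℝ) (hδ : α ^ (1 / (1 - α)) < δ) (hδ1 : δ < 1)
    (T : Lp ℝ p (volume.restrict (Set.Icc (δ ^ α) 1)) →L[ℝ]
        Lp ℝ p (volume.restrict (Set.Icc (δ ^ α) 1)))
    (hT : ∀ f : Lp ℝ p (volume.restrict (Set.Icc (δ ^ α) 1)),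
      (T f : ℝ → ℝ) =ᵐ[volume.restrict (Set.Icc (δ ^ α) 1)]
        fun t => f t - Set.indicator (Set.Ioo δ 1) (fun s => f (s ^ α)) t) :
    ∃ e : ↥(muntzSpace (Set.range Λ) p (δ ^ α) 1) ≃L[ℝ]
        ↥(Submodule.map (T : Lp ℝ p (volume.restrict (Set.Icc (δ ^ α) 1)) →ₗ[ℝ]
            Lp ℝ p (volume.restrict (Set.Icc (δ ^ α) 1)))
          (muntzSpace (Set.range Λ) p (δ ^ α) 1)),
      ∀ x : ↥(muntzSpace (Set.range Λ) p (δ ^ α) 1),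
        (e x : Lp ℝ p (volume.restrict (Set.Icc (δ ^ α) 1))) = T x := by
  have hα0 : 0 < α := by linarith
  have hδ0 : 0 < δ := (Real.rpow_pos_of_pos hα0 _).trans hδ
  have hK : 1 < α * δ ^ (α - 1) := by
    have h1 := Real.rpow_lt_rpow (Real.rpow_pos_of_pos hα0 _).le hδ (by linarith : 0 < α - 1)
    rw [← Real.rpow_mul hα0.le] at h1
    have h2 : 1 / (1 - α) * (α - 1) = -1 := by
      have : 1 - α ≠ 0 := by linarith
      field_simp
      ring
    rw [h2, Real.rpow_neg_one] at h1
    calc (1 : ℝ) = α * α⁻¹ := (mul_inv_cancel₀ hα0.ne').symm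
      _ < _ := mul_lt_mul_of_pos_left h1 hα0
  have hp0 : p ≠ 0 := (zero_lt_one.trans hp).ne'
  have hpr : 0 < p.toReal := ENNReal.toReal_pos hp0 hp'
  set K : ℝ := (α * δ ^ (α - 1)) ^ (1 / p.toReal) with hKdef
  have hK1 : 1 < K := Real.one_lt_rpow hK (by positivity)
  have hK0 : 0 < K := by linarith
  have hcontr : ∀ f : Lp ℝ p (volume.restrict (Set.Icc (δ ^ α) 1)),
      K * ‖f - T f‖ ≤ ‖f‖ := by
    intro f
    have hae : ((f - T f : Lp ℝ p (volume.restrict (Set.Icc (δ ^ α) 1))) : ℝ → ℝ)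
        =ᵐ[volume.restrict (Set.Icc (δ ^ α) 1)]
        Set.indicator (Set.Ioo δ 1) (fun s => f (s ^ α)) := by
      filter_upwards [Lp.coeFn_sub f (T f), hT f] with t h1 h2
      rw [h1, Pi.sub_apply, h2]
      ring
    have h := substitution_eLpNorm_le p hp hp' α hα δ hδ0 f
    rw [← eLpNorm_congr_ae hae] at h
    have h' := ENNReal.toReal_mono (Lp.eLpNorm_ne_top f) h
    rw [ENNReal.toReal_mul, ← ENNReal.toReal_rpow,
      ENNReal.toReal_ofReal (by linarith)] at h'
    rw [Lp.norm_def, Lp.norm_def]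
    exact h'
  have hC : 0 < 1 - K⁻¹ := sub_pos.2 (inv_lt_one_of_one_lt₀ hK1)
  have hbelow : ∀ f : Lp ℝ p (volume.restrict (Set.Icc (δ ^ α) 1)),
      ‖f‖ ≤ (1 - K⁻¹)⁻¹ * ‖T f‖ := by
    intro f
    have h1 : ‖f - T f‖ ≤ K⁻¹ * ‖f‖ := by
      rw [inv_mul_eq_div, le_div_iff₀ hK0, mul_comm]
      exact hcontr f
    have h2 : ‖f‖ ≤ ‖f - T f‖ + ‖T f‖ := by
      simpa using norm_add_le (f - T f) (T f)
    rw [inv_mul_eq_div, le_div_iff₀ hC]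
    linarith
  have hinj : Function.Injective (T : Lp ℝ p (volume.restrict (Set.Icc (δ ^ α) 1)) →ₗ[ℝ]
      Lp ℝ p (volume.restrict (Set.Icc (δ ^ α) 1))) := by
    refine (injective_iff_map_eq_zero _).2 fun f hf => ?_
    have hf' : T f = 0 := hf
    have := hbelow f
    rw [hf', norm_zero, mul_zero] at this
    exact norm_le_zero_iff.1 this
  let e0 := Submodule.equivMapOfInjective _ hinj (muntzSpace (Set.range Λ) p (δ ^ α) 1)
  have he0 : ∀ x, ((e0 x : _) : Lp ℝ p (volume.restrict (Set.Icc (δ ^ α) 1))) = T x :=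
    fun x => rfl
  refine ⟨e0.toContinuousLinearEquivOfBounds ‖T‖ (1 - K⁻¹)⁻¹ (fun x => ?_) (fun y => ?_),
    fun x => rfl⟩
  · exact T.le_opNorm x
  · have h := hbelow (e0.symm y : _)
    rw [← he0 (e0.symm y), LinearEquiv.apply_symm_apply] at h
    exact h
end
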